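/- arXiv:1809.03984 — 6 statements merged into one kernel-verified Lean document; each statement's English description precedes it below -/
import Mathlib

section
/- Let A be a separable C*-algebra of stable rank one such that there is no surjective *-homomorphism from A onto the C*-algebra of compact operators on a nonzero complex Hilbert space (i.e., A has no nonzero elementary quotients). Then for every k ∈ ℕ with k ≥ 1 there exists a *-homomorphism φ : M_k(C_0((0,1])) → A whose range generates A as a closed two-sided ideal (i.e., φ has full range). -/
open ZeroAtInfty

universe u

/-!
Stable rank one enters through one fact: a closed inner ideal of `A` (a closed subspace `V` with
`V A V ⊆ V`) contains an element `w` that generates all of `V` as a closed ideal. By Baire's theorem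
it suffices that, for each `c ∈ V` and `ε > 0`, the elements of `V` whose ideal comes within `ε` of
`c` are dense; the required perturbation is made with an invertible element of the unitization.

For two square-zero elements `x` and `y`, suitable inner ideals of annihilator type then give a
square-zero `w` whose ideal contains both, up to `ε`. Hence in a full hereditary subalgebra `D`
there are square-zero elements whose ideals come arbitrarily close to any given element, provided
the square-zero elements of `D` generate `A`. If they do not, they lie in a prime ideal `P` not
containing `D`; the image of `D` in `A / P` has no zero divisors, so it is one-dimensional and
spanned by a full minimal projection. Then `A / P` is the algebra of compact operators on a Hilbert
space, which is excluded.

If `w ∈ D` is square-zero, then a cut-down of `star w * w` has a full orthogonal complement in `D`,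
so the construction can be repeated in that complement. A bookkeeping over a dense sequence turns
the resulting orthogonal sequence into infinitely many pairwise orthogonal full elements. Another
application of stable rank one to the inner ideals between them provides full elements `x i` with
`star (x i) * x j = 0` for `i ≠ j` and `star (x i) * x i = star h * h` independent of `i`. The
partial isometries in the polar decompositions of the `x i` act as matrix units over the hereditary
subalgebra generated by `star h * h`, and functional calculus fills in the cone.
-/

namespace GlimmHalving

open Filter Topology

attribute [local instance] CStarAlgebra.spectralOrder CStarAlgebra.spectralOrderedRing

/-! ### Cut-off functions and functional calculus -/

section Cutoff

/-- A bounded continuous substitute for `s ↦ 1 / s`, exact on `[τ, ∞)` and vanishing at `0`. -/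
noncomputable def approxInv (τ s : ℝ) : ℝ := s / max s τ ^ 2

/-- A continuous function vanishing at `0` and equal to `1` on `[τ, ∞)`. -/
noncomputable def approxOne (τ s : ℝ) : ℝ := s * approxInv τ s

/-- The function `s ↦ (s - τ)₊`. -/
noncomputable def cutDown (τ s : ℝ) : ℝ := max (s - τ) 0

variable {τ s : ℝ}

theorem continuous_approxInv (hτ : 0 < τ) : Continuous (approxInv τ) :=
  continuous_id.div (by fun_prop) fun s => pow_ne_zero 2 (lt_max_of_lt_right hτ).ne'

theorem continuous_approxOne (hτ : 0 < τ) : Continuous (approxOne τ) :=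
  continuous_id.mul (continuous_approxInv hτ)

@[fun_prop]
theorem continuous_cutDown : Continuous (cutDown τ) := by unfold cutDown; fun_prop

@[simp]
theorem approxInv_zero : approxInv τ 0 = 0 := by simp [approxInv]

@[simp]
theorem approxOne_zero : approxOne τ 0 = 0 := by simp [approxOne]

theorem cutDown_of_le (hs : s ≤ τ) : cutDown τ s = 0 := by simp [cutDown, hs]

theorem cutDown_of_ge (hs : τ ≤ s) : cutDown τ s = s - τ := by simp [cutDown, hs]

theorem cutDown_nonneg : 0 ≤ cutDown τ s := le_max_right _ _

theorem approxOne_of_ge (hτ : 0 < τ) (hs : τ ≤ s) : approxOne τ s = 1 := by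
  have : 0 < s := hτ.trans_le hs
  simp only [approxOne, approxInv, max_eq_left hs]
  field_simp

theorem approxOne_of_le (hs : s ≤ τ) : approxOne τ s = s ^ 2 / τ ^ 2 := by
  simp only [approxOne, approxInv, max_eq_right hs]
  ring

theorem approxOne_mem_Icc (hτ : 0 < τ) (hs : 0 ≤ s) : approxOne τ s ∈ Set.Icc 0 1 := by
  rcases le_total τ s with h | h
  · simp [approxOne_of_ge hτ h]
  · rw [approxOne_of_le h]
    exact ⟨by positivity, div_le_one_of_le₀ (by gcongr) (by positivity)⟩

theorem abs_approxInv_le (hτ : 0 < τ) (hs : 0 ≤ s) : |approxInv τ s| ≤ 1 / τ := by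
  have hmax : 0 < max s τ := lt_max_of_lt_right hτ
  rw [approxInv, abs_of_nonneg (by positivity), div_le_div_iff₀ (by positivity) hτ]
  nlinarith [le_max_left s τ, le_max_right s τ]

theorem mul_sq_one_sub_approxOne_le (hτ : 0 < τ) (hs : 0 ≤ s) :
    s * (1 - approxOne τ s) ^ 2 ≤ τ := by
  rcases le_total τ s with h | h
  · simp [approxOne_of_ge hτ h, hτ.le]
  · obtain ⟨h₀, h₁⟩ := approxOne_mem_Icc hτ hs
    have : (1 - approxOne τ s) ^ 2 ≤ 1 := by nlinarith
    nlinarith [sq_nonneg (1 - approxOne τ s)]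

theorem cutDown_mul_approxOne (hτ : 0 < τ) : cutDown τ s * approxOne τ s = cutDown τ s := by
  rcases le_total τ s with h | h
  · rw [approxOne_of_ge hτ h, mul_one]
  · rw [cutDown_of_le h, zero_mul]

theorem abs_sub_cutDown_le (hτ : 0 < τ) (hs : 0 ≤ s) : |s - cutDown τ s| ≤ τ := by
  rcases le_total τ s with h | h
  · simp [cutDown_of_ge h, abs_of_pos hτ]
  · rwa [cutDown_of_le h, sub_zero, abs_of_nonneg hs]

end Cutoff

section FunctionalCalculus

variable {A : Type u} [NonUnitalCStarAlgebra A] {τ : ℝ}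

theorem norm_cfcₙ_star_mul_self_le (x : A) {f : ℝ → ℝ} {c : ℝ}
    (hf : ∀ s, 0 ≤ s → |f s| ≤ c) : ‖cfcₙ f (star x * x)‖ ≤ c :=
  norm_cfcₙ_le fun s hs => hf s <|
    quasispectrum_nonneg_of_nonneg (star x * x) (star_mul_self_nonneg x) s hs

theorem norm_sub_mul_cfcₙ_sq_le (x : A) {f : ℝ → ℝ} (hf : Continuous f) (h0 : f 0 = 0) {c : ℝ}
    (h : ∀ s, 0 ≤ s → s * (1 - f s) ^ 2 ≤ c) :
    ‖x - x * cfcₙ f (star x * x)‖ ^ 2 ≤ c := by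
  set a := star x * x with ha
  have hsa : IsSelfAdjoint a := .star_mul_self x
  have hstar : star (cfcₙ f a) = cfcₙ f a := (cfcₙ_predicate f a : IsSelfAdjoint _).star_eq
  have hcfc : star (x - x * cfcₙ f a) * (x - x * cfcₙ f a) =
      cfcₙ (fun s => s * (1 - f s) ^ 2) a := by
    have hexpand : (fun s => s * (1 - f s) ^ 2) =
        fun s => (id s - id s * f s) - f s * (id s - id s * f s) := by
      ext s; simp only [id]; ring
    rw [hexpand, cfcₙ_sub _ _ a, cfcₙ_mul _ _ a, cfcₙ_sub _ _ a, cfcₙ_mul _ _ a, cfcₙ_id ℝ a,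
      star_sub, star_mul, hstar, ha]
    noncomm_ring
  rw [sq, ← CStarRing.norm_star_mul_self, hcfc]
  refine norm_cfcₙ_star_mul_self_le x fun s hs => ?_
  rw [abs_of_nonneg (by positivity)]
  exact h s hs

theorem norm_sub_mul_approxOne_sq_le (x : A) (hτ : 0 < τ) :
    ‖x - x * cfcₙ (approxOne τ) (star x * x)‖ ^ 2 ≤ τ :=
  norm_sub_mul_cfcₙ_sq_le x (continuous_approxOne hτ) approxOne_zero fun _ hs =>
    mul_sq_one_sub_approxOne_le hτ hs

theorem norm_sub_cutDown_le (x : A) (hτ : 0 < τ) :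
    ‖star x * x - cfcₙ (cutDown τ) (star x * x)‖ ≤ τ := by
  have hsub : star x * x - cfcₙ (cutDown τ) (star x * x) =
      cfcₙ (fun s => id s - cutDown τ s) (star x * x) := by
    rw [cfcₙ_sub _ _ _ (hg := continuous_cutDown.continuousOn) (hg0 := cutDown_of_le hτ.le),
      cfcₙ_id ℝ (star x * x)]
  rw [hsub]
  exact norm_cfcₙ_star_mul_self_le x fun s hs => abs_sub_cutDown_le hτ hs

theorem cfcₙ_approxOne_eq_mul {a : A} (ha : IsSelfAdjoint a) (hτ : 0 < τ) :
    cfcₙ (approxOne τ) a = a * cfcₙ (approxInv τ) a := by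
  have : approxOne τ = fun s => id s * approxInv τ s := rfl
  rw [this, cfcₙ_mul _ _ a (hg := (continuous_approxInv hτ).continuousOn), cfcₙ_id ℝ a]

theorem cfcₙ_approxOne_eq_mul' {a : A} (ha : IsSelfAdjoint a) (hτ : 0 < τ) :
    cfcₙ (approxOne τ) a = cfcₙ (approxInv τ) a * a := by
  have : approxOne τ = fun s => approxInv τ s * id s := funext fun s => mul_comm _ _
  rw [this, cfcₙ_mul _ _ a (hf := (continuous_approxInv hτ).continuousOn), cfcₙ_id ℝ a]

theorem cfcₙ_cutDown_mul_approxOne (a : A) (hτ : 0 < τ) :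
    cfcₙ (cutDown τ) a * cfcₙ (approxOne τ) a = cfcₙ (cutDown τ) a := by
  rw [← cfcₙ_mul (cutDown τ) (approxOne τ) a continuous_cutDown.continuousOn
    (cutDown_of_le hτ.le) (continuous_approxOne hτ).continuousOn]
  simp only [cutDown_mul_approxOne hτ]

theorem cfcₙ_approxOne_mul_cutDown (a : A) (hτ : 0 < τ) :
    cfcₙ (approxOne τ) a * cfcₙ (cutDown τ) a = cfcₙ (cutDown τ) a :=
  (cfcₙ_commute_cfcₙ _ _ a).eq.trans (cfcₙ_cutDown_mul_approxOne a hτ)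

theorem norm_cfcₙ_approxOne_le (x : A) (hτ : 0 < τ) :
    ‖cfcₙ (approxOne τ) (star x * x)‖ ≤ 1 :=
  norm_cfcₙ_star_mul_self_le x fun s hs => by
    obtain ⟨h₀, h₁⟩ := approxOne_mem_Icc hτ hs
    rwa [abs_of_nonneg h₀]

theorem cfcₙ_approxOne_nonneg (x : A) (hτ : 0 < τ) :
    0 ≤ cfcₙ (approxOne τ) (star x * x) :=
  cfcₙ_nonneg fun s hs => (approxOne_mem_Icc hτ
    (quasispectrum_nonneg_of_nonneg _ (star_mul_self_nonneg x) s hs)).1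

theorem norm_le_norm_add_of_nonneg {a b : A} (ha : 0 ≤ a) (hb : 0 ≤ b) : ‖a‖ ≤ ‖a + b‖ :=
  CStarAlgebra.norm_le_norm_of_nonneg_of_le ha (le_add_of_nonneg_right hb)

theorem exists_approx_unit (a : A) {ε : ℝ} (hε : 0 < ε) :
    ∃ e : A, IsSelfAdjoint e ∧ ‖e‖ ≤ 1 ∧ ‖e * a - a‖ < ε ∧ ‖a * e - a‖ < ε := by
  have hu := CStarAlgebra.increasingApproximateUnit A
  have := hu.neBot
  obtain ⟨e, hl, hr, hstar, hnorm⟩ :=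
    ((Metric.tendsto_nhds.1 (hu.tendsto_mul_right a) ε hε).and <|
      (Metric.tendsto_nhds.1 (hu.tendsto_mul_left a) ε hε).and <|
      hu.eventually_star_eq.and hu.eventually_norm).exists
  rw [dist_eq_norm] at hl hr
  exact ⟨e, hstar, hnorm, hl, hr⟩

theorem norm_one_sub_inr_le {u : A} (h0 : 0 ≤ u) (h1 : ‖u‖ ≤ 1) :
    ‖(1 : Unitization ℂ A) - (u : Unitization ℂ A)‖ ≤ 1 := by
  have hu0 : (0 : Unitization ℂ A) ≤ (u : Unitization ℂ A) := Unitization.inr_nonneg_iff.2 h0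
  have hu1 : (u : Unitization ℂ A) ≤ 1 := by
    rwa [← CStarAlgebra.norm_le_one_iff_of_nonneg _ hu0, Unitization.norm_inr]
  rw [CStarAlgebra.norm_le_one_iff_of_nonneg _ (sub_nonneg.2 hu1)]
  exact sub_le_self _ hu0

end FunctionalCalculus

/-! ### Closed two-sided ideals and quotients -/

/-- A closed two-sided ideal of a C⋆-algebra. Being closed under the adjoint is automatic,
see `ClosedIdeal.star_mem`. -/
structure ClosedIdeal (A : Type u) [NonUnitalCStarAlgebra A] extends Submodule ℂ A where
  ofSubmodule ::
  isClosed' : IsClosed (carrier : Set A)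
  mul_mem_left' : ∀ a x : A, x ∈ carrier → a * x ∈ carrier
  mul_mem_right' : ∀ a x : A, x ∈ carrier → x * a ∈ carrier

namespace ClosedIdeal

variable {A : Type u} [NonUnitalCStarAlgebra A]

instance : SetLike (ClosedIdeal A) A where
  coe J := J.carrier
  coe_injective := by
    rintro ⟨J, _, _, _⟩ ⟨K, _, _, _⟩ h
    obtain rfl : J = K := SetLike.coe_injective h
    rfl

instance : AddSubgroupClass (ClosedIdeal A) A where
  add_mem {J} := J.toSubmodule.add_mem
  zero_mem J := J.toSubmodule.zero_mem
  neg_mem {J} := J.toSubmodule.neg_mem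

instance : SMulMemClass (ClosedIdeal A) ℂ A where
  smul_mem {J} c _ h := J.toSubmodule.smul_mem c h

instance : PartialOrder (ClosedIdeal A) := .ofSetLike (ClosedIdeal A) A

variable (J : ClosedIdeal A)

theorem isClosed : IsClosed (J : Set A) := J.isClosed'

instance : IsClosed (J.toSubmodule : Set A) := J.isClosed'

theorem mul_mem_left (a : A) {x : A} (hx : x ∈ J) : a * x ∈ J := J.mul_mem_left' a x hx

theorem mul_mem_right (a : A) {x : A} (hx : x ∈ J) : x * a ∈ J := J.mul_mem_right' a x hx

theorem mem_of_forall_norm_sub_lt {x : A} (h : ∀ ε > 0, ∃ y ∈ J, ‖x - y‖ < ε) : x ∈ J := by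
  rw [← SetLike.mem_coe, ← J.isClosed.closure_eq, Metric.mem_closure_iff]
  simpa only [dist_eq_norm, SetLike.mem_coe] using h

theorem cfcₙ_approxOne_mem {τ : ℝ} (hτ : 0 < τ) {a : A} (hsa : IsSelfAdjoint a) (ha : a ∈ J) :
    cfcₙ (approxOne τ) a ∈ J := by
  rw [cfcₙ_approxOne_eq_mul hsa hτ]
  exact J.mul_mem_right _ ha

theorem star_mem {x : A} (hx : x ∈ J) : star x ∈ J := by
  refine J.mem_of_forall_norm_sub_lt fun ε hε => ?_
  have hτ : 0 < (ε / 2) ^ 2 := by positivity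
  have hunit : cfcₙ (approxOne ((ε / 2) ^ 2)) (star (star x) * star x) ∈ J :=
    J.cfcₙ_approxOne_mem hτ (.star_mul_self _) (by simpa using J.mul_mem_right _ hx)
  refine ⟨_, J.mul_mem_left (star x) hunit, ?_⟩
  have := le_of_sq_le_sq (norm_sub_mul_approxOne_sq_le (star x) hτ) (by positivity)
  linarith

/-! #### The quotient C⋆-algebra -/

/-- The quotient C⋆-algebra `A / J`. -/
def Quotient : Type u := A ⧸ J.toSubmodule

noncomputable instance : NormedAddCommGroup J.Quotient :=
  inferInstanceAs (NormedAddCommGroup (A ⧸ J.toSubmodule))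

noncomputable instance : NormedSpace ℂ J.Quotient :=
  inferInstanceAs (NormedSpace ℂ (A ⧸ J.toSubmodule))

instance : CompleteSpace J.Quotient :=
  inferInstanceAs (CompleteSpace (A ⧸ J.toSubmodule))

/-- The linear quotient map, used to transport the algebraic structure; the
star homomorphism is `ClosedIdeal.mk`. -/
def mkₗ : A →ₗ[ℂ] J.Quotient := J.toSubmodule.mkQ

theorem mkₗ_surjective : Function.Surjective J.mkₗ := J.toSubmodule.mkQ_surjective

theorem mkₗ_eq_mkₗ_iff {a b : A} : J.mkₗ a = J.mkₗ b ↔ a - b ∈ J :=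
  Submodule.Quotient.eq J.toSubmodule

theorem norm_mkₗ_le (a : A) : ‖J.mkₗ a‖ ≤ ‖a‖ := Submodule.Quotient.norm_mk_le J.toSubmodule a

theorem exists_mkₗ_eq_norm_lt (x : J.Quotient) {r : ℝ} (hr : ‖x‖ < r) :
    ∃ a, J.mkₗ a = x ∧ ‖a‖ < r := by
  obtain ⟨a, ha, hlt⟩ := Submodule.Quotient.norm_mk_lt (S := J.toSubmodule) x (sub_pos.2 hr)
  exact ⟨a, ha, hlt.trans_eq (add_sub_cancel _ _)⟩

noncomputable instance : Mul J.Quotient where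
  mul := Quotient.map₂ (· * ·) fun a b hab c d hcd => by
    have hab' : a - b ∈ J := (Submodule.quotientRel_def _).1 hab
    have hcd' : c - d ∈ J := (Submodule.quotientRel_def _).1 hcd
    refine (Submodule.quotientRel_def _).2 (?_ : a * c - b * d ∈ J)
    rw [show a * c - b * d = (a - b) * c + b * (c - d) by noncomm_ring]
    exact add_mem (J.mul_mem_right _ hab') (J.mul_mem_left _ hcd')

noncomputable instance : Star J.Quotient where
  star := Quotient.map star fun a b hab => by
    have hab' : a - b ∈ J := (Submodule.quotientRel_def _).1 hab
    refine (Submodule.quotientRel_def _).2 (?_ : star a - star b ∈ J)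
    rw [← star_sub]
    exact J.star_mem hab'

noncomputable instance : NonUnitalRing J.Quotient :=
  J.mkₗ_surjective.nonUnitalRing J.mkₗ rfl (fun _ _ => rfl) (fun _ _ => rfl) (fun _ => rfl)
    (fun _ _ => rfl) (fun _ _ => rfl) (fun _ _ => rfl)

theorem norm_mul_le_of_quotient (x y : J.Quotient) : ‖x * y‖ ≤ ‖x‖ * ‖y‖ := by
  have hbound : ∀ t > 0, ‖x * y‖ ≤ (‖x‖ + t) * (‖y‖ + t) := fun t ht => by
    obtain ⟨a, rfl, ha⟩ := J.exists_mkₗ_eq_norm_lt x (lt_add_of_pos_right _ ht)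
    obtain ⟨b, rfl, hb⟩ := J.exists_mkₗ_eq_norm_lt y (lt_add_of_pos_right _ ht)
    calc ‖J.mkₗ a * J.mkₗ b‖ ≤ ‖a * b‖ := J.norm_mkₗ_le _
      _ ≤ ‖a‖ * ‖b‖ := norm_mul_le _ _
      _ ≤ _ := by gcongr
  have hlim : Tendsto (fun t : ℝ => (‖x‖ + t) * (‖y‖ + t)) (𝓝[>] 0) (𝓝 (‖x‖ * ‖y‖)) := by
    have : ContinuousAt (fun t : ℝ => (‖x‖ + t) * (‖y‖ + t)) 0 := by fun_prop
    simpa using this.tendsto.mono_left nhdsWithin_le_nhds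
  exact ge_of_tendsto hlim (eventually_nhdsWithin_of_forall hbound)

noncomputable instance : NonUnitalNormedRing J.Quotient where
  __ := (inferInstance : NormedAddCommGroup J.Quotient)
  __ := (inferInstance : NonUnitalRing J.Quotient)
  norm_mul_le := J.norm_mul_le_of_quotient

noncomputable instance : StarRing J.Quotient where
  star_involutive := J.mkₗ_surjective.forall.2 fun a => congrArg J.mkₗ (star_star a)
  star_mul := J.mkₗ_surjective.forall₂.2 fun a b => congrArg J.mkₗ (star_mul a b)
  star_add := J.mkₗ_surjective.forall₂.2 fun a b => congrArg J.mkₗ (star_add a b)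

instance : IsScalarTower ℂ J.Quotient J.Quotient where
  smul_assoc c := J.mkₗ_surjective.forall₂.2 fun a b => congrArg J.mkₗ (smul_mul_assoc c a b)

instance : SMulCommClass ℂ J.Quotient J.Quotient where
  smul_comm c := J.mkₗ_surjective.forall₂.2 fun a b => congrArg J.mkₗ (mul_smul_comm c a b).symm

instance : StarModule ℂ J.Quotient where
  star_smul c := J.mkₗ_surjective.forall.2 fun a => congrArg J.mkₗ (star_smul c a)

theorem norm_sub_mul_self_sq_le {a b u : A} (hu0 : 0 ≤ u) (hu1 : ‖u‖ ≤ 1) :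
    ‖a - a * u‖ * ‖a - a * u‖ ≤ ‖b‖ + ‖(b - star a * a) - (b - star a * a) * u‖ := by
  set j := b - star a * a with hj
  set v : Unitization ℂ A := 1 - (u : Unitization ℂ A)
  have hv : ‖v‖ ≤ 1 := norm_one_sub_inr_le hu0 hu1
  have hexpand : ((star (a - a * u) * (a - a * u) : A) : Unitization ℂ A) =
      v * (b : Unitization ℂ A) * v - v * ((j - j * u : A) : Unitization ℂ A) := by
    rw [eq_add_of_sub_eq hj.symm, star_sub, star_mul, (IsSelfAdjoint.of_nonneg hu0).star_eq]
    simp only [v, Unitization.inr_mul, Unitization.inr_sub, Unitization.inr_add]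
    noncomm_ring
  rw [← CStarRing.norm_star_mul_self, ← Unitization.norm_inr (𝕜 := ℂ), hexpand]
  calc ‖v * (b : Unitization ℂ A) * v - v * ((j - j * u : A) : Unitization ℂ A)‖
      ≤ ‖v‖ * ‖(b : Unitization ℂ A)‖ * ‖v‖ + ‖v‖ * ‖((j - j * u : A) : Unitization ℂ A)‖ :=
        (norm_sub_le _ _).trans (add_le_add (norm_mul₃_le) (norm_mul_le _ _))
    _ ≤ 1 * ‖(b : Unitization ℂ A)‖ * 1 + 1 * ‖((j - j * u : A) : Unitization ℂ A)‖ := by gcongr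
    _ = ‖b‖ + ‖j - j * u‖ := by rw [Unitization.norm_inr, Unitization.norm_inr]; ring

instance : CStarRing J.Quotient where
  norm_mul_self_le := J.mkₗ_surjective.forall.2 fun a => by
    refine le_of_forall_pos_le_add fun ε hε => ?_
    obtain ⟨b, hb, hbnorm⟩ := J.exists_mkₗ_eq_norm_lt (star (J.mkₗ a) * J.mkₗ a)
      (lt_add_of_pos_right _ (half_pos hε))
    set j := b - star a * a
    have hj : j ∈ J := J.mkₗ_eq_mkₗ_iff.1 hb
    have hτ : 0 < (ε / 2) ^ 2 := by positivity
    set u := cfcₙ (approxOne ((ε / 2) ^ 2)) (star j * j)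
    have hu : u ∈ J := J.cfcₙ_approxOne_mem hτ (.star_mul_self j) (J.mul_mem_left _ hj)
    have hju : ‖j - j * u‖ ≤ ε / 2 :=
      le_of_sq_le_sq (norm_sub_mul_approxOne_sq_le j hτ) (by positivity)
    have hau : J.mkₗ a = J.mkₗ (a - a * u) :=
      J.mkₗ_eq_mkₗ_iff.2 (by simpa using J.mul_mem_left a hu)
    calc ‖J.mkₗ a‖ * ‖J.mkₗ a‖ ≤ ‖a - a * u‖ * ‖a - a * u‖ := by
          rw [hau]; gcongr <;> exact J.norm_mkₗ_le _
      _ ≤ ‖b‖ + ‖j - j * u‖ :=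
          norm_sub_mul_self_sq_le (cfcₙ_approxOne_nonneg j hτ) (norm_cfcₙ_approxOne_le j hτ)
      _ ≤ ‖star (J.mkₗ a) * J.mkₗ a‖ + ε := by linarith

noncomputable instance : NonUnitalCStarAlgebra J.Quotient where

/-- The quotient homomorphism `A → A / J`. The norm `‖J.mk a‖` is the distance from `a`
to `J`. -/
noncomputable def mk : A →⋆ₙₐ[ℂ] J.Quotient where
  toFun := J.mkₗ
  map_smul' _ _ := rfl
  map_zero' := rfl
  map_add' _ _ := rfl
  map_mul' _ _ := rfl
  map_star' _ := rfl

theorem mk_surjective : Function.Surjective J.mk := J.mkₗ_surjective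

theorem mk_eq_zero_iff {a : A} : J.mk a = 0 ↔ a ∈ J := by
  rw [← map_zero J.mk]
  exact J.mkₗ_eq_mkₗ_iff.trans (by rw [sub_zero])

theorem norm_mk_le (a : A) : ‖J.mk a‖ ≤ ‖a‖ := J.norm_mkₗ_le a

@[fun_prop]
theorem continuous_mk : Continuous J.mk :=
  AddMonoidHomClass.continuous_of_bound J.mk 1 fun a => by simpa using J.norm_mk_le a

theorem exists_mem_norm_sub_lt {a : A} {r : ℝ} (h : ‖J.mk a‖ < r) : ∃ j ∈ J, ‖a - j‖ < r := by
  obtain ⟨b, hb, hlt⟩ := J.exists_mkₗ_eq_norm_lt _ h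
  exact ⟨a - b, J.mkₗ_eq_mkₗ_iff.1 hb.symm, by simpa using hlt⟩

theorem norm_mk_le_norm_sub {a j : A} (hj : j ∈ J) : ‖J.mk a‖ ≤ ‖a - j‖ := by
  simpa [J.mk_eq_zero_iff.2 hj] using J.norm_mk_le (a - j)

theorem norm_mk_le_add (a b : A) : ‖J.mk a‖ ≤ ‖a - b‖ + ‖J.mk b‖ := by
  calc ‖J.mk a‖ = ‖J.mk (a - b) + J.mk b‖ := by rw [← map_add, sub_add_cancel]
    _ ≤ ‖J.mk (a - b)‖ + ‖J.mk b‖ := norm_add_le _ _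
    _ ≤ ‖a - b‖ + ‖J.mk b‖ := by gcongr; exact J.norm_mk_le _

theorem norm_mk_anti {J K : ClosedIdeal A} (hJK : J ≤ K) (a : A) : ‖K.mk a‖ ≤ ‖J.mk a‖ :=
  le_of_forall_gt_imp_ge_of_dense fun _ hr =>
    let ⟨_, hj, hlt⟩ := J.exists_mem_norm_sub_lt hr
    (K.norm_mk_le_norm_sub (hJK hj)).trans hlt.le

theorem mk_cfcₙ {f : ℝ → ℝ} (hf : Continuous f) (h0 : f 0 = 0) {a : A} (ha : IsSelfAdjoint a) :
    J.mk (cfcₙ f a) = cfcₙ f (J.mk a) :=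
  NonUnitalStarAlgHomClass.map_cfcₙ J.mk f a hf.continuousOn h0 J.continuous_mk ha (ha.map J.mk)

theorem star_mul_self_mem_iff {x : A} : star x * x ∈ J ↔ x ∈ J := by
  rw [← J.mk_eq_zero_iff, ← J.mk_eq_zero_iff, map_mul, map_star,
    CStarRing.star_mul_self_eq_zero_iff]

theorem mul_star_self_mem_iff {x : A} : x * star x ∈ J ↔ x ∈ J := by
  rw [← J.mk_eq_zero_iff, ← J.mk_eq_zero_iff, map_mul, map_star,
    CStarRing.mul_star_self_eq_zero_iff]

theorem mem_of_mul_star_mul_mem {x : A} (h : x * star x * x ∈ J) : x ∈ J := by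
  rw [← J.star_mul_self_mem_iff, ← J.star_mul_self_mem_iff]
  simpa [mul_assoc] using J.mul_mem_left (star x) h

theorem cfcₙ_cutDown_mem (x : A) {r : ℝ} (hr : 0 < r) (h : ‖J.mk (star x * x)‖ ≤ r) :
    cfcₙ (cutDown r) (star x * x) ∈ J := by
  have hsa : IsSelfAdjoint (J.mk (star x * x)) := (IsSelfAdjoint.star_mul_self x).map J.mk
  rw [← J.mk_eq_zero_iff,
    J.mk_cfcₙ continuous_cutDown (cutDown_of_le hr.le) (.star_mul_self x), ← cfcₙ_zero ℝ]
  refine cfcₙ_congr fun s hs => cutDown_of_le ?_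
  calc s ≤ ‖s‖ := Real.le_norm_self s
    _ ≤ ‖cfcₙ (id : ℝ → ℝ) (J.mk (star x * x))‖ := norm_apply_le_norm_cfcₙ id _ hs
    _ ≤ r := by rwa [cfcₙ_id ℝ _ hsa]

/-! #### Constructions of closed ideals -/

/-- The ideal of elements whose distance to `F i` tends to `0` along `l`. -/
def limit {ι : Type*} (l : Filter ι) (F : ι → ClosedIdeal A) : ClosedIdeal A where
  carrier := {a | Tendsto (fun i => ‖(F i).mk a‖) l (𝓝 0)}
  zero_mem' := by simp [tendsto_const_nhds]
  add_mem' {a b} ha hb :=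
    squeeze_zero (g := fun i => ‖(F i).mk a‖ + ‖(F i).mk b‖) (fun _ => norm_nonneg _)
      (fun i => by rw [map_add]; exact norm_add_le _ _) (by simpa using Tendsto.add ha hb)
  smul_mem' c a ha := by
    simpa only [Set.mem_ofPred_eq, map_smul, norm_smul, mul_zero] using Tendsto.const_mul ‖c‖ ha
  isClosed' := by
    refine isSeqClosed_iff_isClosed.1 fun u a hu hua => Metric.tendsto_nhds.2 fun ε hε => ?_
    obtain ⟨n, hn⟩ := (Metric.tendsto_nhds.1 hua (ε / 2) (half_pos hε)).exists
    filter_upwards [Metric.tendsto_nhds.1 (hu n) (ε / 2) (half_pos hε)] with i hi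
    rw [dist_zero_right, norm_norm] at hi ⊢
    rw [dist_eq_norm, norm_sub_rev] at hn
    linarith [(F i).norm_mk_le_add a (u n)]
  mul_mem_left' a x hx :=
    squeeze_zero (g := fun i => ‖a‖ * ‖(F i).mk x‖) (fun _ => norm_nonneg _)
      (fun i => by
        rw [map_mul]
        exact (norm_mul_le _ _).trans (by gcongr; exact (F i).norm_mk_le a))
      (by simpa using Tendsto.const_mul ‖a‖ hx)
  mul_mem_right' a x hx :=
    squeeze_zero (g := fun i => ‖(F i).mk x‖ * ‖a‖) (fun _ => norm_nonneg _)
      (fun i => by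
        rw [map_mul]
        exact (norm_mul_le _ _).trans (by gcongr; exact (F i).norm_mk_le a))
      (by simpa using Tendsto.mul_const ‖a‖ hx)

theorem mem_limit {ι : Type*} {l : Filter ι} {F : ι → ClosedIdeal A} {a : A} :
    a ∈ limit l F ↔ Tendsto (fun i => ‖(F i).mk a‖) l (𝓝 0) := Iff.rfl

/-- The closed two-sided ideal generated by a set. -/
def span (S : Set A) : ClosedIdeal A where
  carrier := {a | ∀ K : ClosedIdeal A, S ⊆ K → a ∈ K}
  zero_mem' K _ := zero_mem K
  add_mem' ha hb K h := add_mem (ha K h) (hb K h)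
  smul_mem' c a ha K h := SMulMemClass.smul_mem c (ha K h)
  isClosed' := by
    simp only [Set.ofPred_forall]
    exact isClosed_iInter fun K => isClosed_iInter fun _ => K.isClosed
  mul_mem_left' a x hx K h := K.mul_mem_left a (hx K h)
  mul_mem_right' a x hx K h := K.mul_mem_right a (hx K h)

theorem subset_span (S : Set A) : S ⊆ span S := fun _ hs _ hK => hK hs

theorem span_le {S : Set A} {K : ClosedIdeal A} (h : S ⊆ K) : span S ≤ K := fun _ ha => ha K h

theorem mem_span_singleton_self (w : A) : w ∈ span {w} := subset_span _ rfl

theorem span_singleton_le {w : A} {K : ClosedIdeal A} (h : w ∈ K) : span {w} ≤ K :=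
  span_le (Set.singleton_subset_iff.2 h)

/-- The ideal of all `u` with `u A t ⊆ K` for every `t ∈ T`. -/
def leftColon (K : ClosedIdeal A) (T : Set A) : ClosedIdeal A where
  carrier := {u | ∀ a, ∀ t ∈ T, u * a * t ∈ K}
  zero_mem' a t _ := by simp [zero_mem]
  add_mem' ha hb a t ht := by simpa only [add_mul] using add_mem (ha a t ht) (hb a t ht)
  smul_mem' c a ha b t ht := by
    simpa only [smul_mul_assoc] using SMulMemClass.smul_mem c (ha b t ht)
  isClosed' := by
    simp only [Set.ofPred_forall]
    exact isClosed_iInter fun a => isClosed_iInter fun t => isClosed_iInter fun _ =>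
      K.isClosed.preimage (f := fun u => u * a * t) (by fun_prop)
  mul_mem_left' a x hx b t ht := by
    simpa only [mul_assoc] using K.mul_mem_left a (hx b t ht)
  mul_mem_right' a x hx b t ht := by simpa only [mul_assoc] using hx (a * b) t ht

/-- The ideal of all `u` with `t A u ⊆ K` for every `t ∈ T`. -/
def rightColon (K : ClosedIdeal A) (T : Set A) : ClosedIdeal A where
  carrier := {u | ∀ a, ∀ t ∈ T, t * a * u ∈ K}
  zero_mem' a t _ := by simp [zero_mem]
  add_mem' ha hb a t ht := by simpa only [mul_add] using add_mem (ha a t ht) (hb a t ht)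
  smul_mem' c a ha b t ht := by
    simpa only [mul_smul_comm] using SMulMemClass.smul_mem c (ha b t ht)
  isClosed' := by
    simp only [Set.ofPred_forall]
    exact isClosed_iInter fun a => isClosed_iInter fun t => isClosed_iInter fun _ =>
      K.isClosed.preimage (f := fun u => t * a * u) (by fun_prop)
  mul_mem_left' a x hx b t ht := by simpa only [mul_assoc] using hx (b * a) t ht
  mul_mem_right' a x hx b t ht := by
    simpa only [mul_assoc] using K.mul_mem_right a (hx b t ht)

theorem mul_mul_mem_of_mem_span {S T : Set A} {K : ClosedIdeal A}
    (h : ∀ s ∈ S, ∀ t ∈ T, ∀ a, s * a * t ∈ K) {u v : A} (hu : u ∈ span S) (hv : v ∈ span T)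
    (a : A) : u * a * v ∈ K := by
  have hS : S ⊆ leftColon K (span T) := fun s hs a t ht => by
    have hT : T ⊆ rightColon K {s} := by rintro t ht b _ rfl; exact h _ hs t ht b
    exact span_le hT ht a s rfl
  exact span_le hS hu a v hv

/-- The preimage of a closed ideal under a star homomorphism. -/
def comap {B : Type u} [NonUnitalCStarAlgebra B] (φ : B →⋆ₙₐ[ℂ] A) (K : ClosedIdeal A) :
    ClosedIdeal B where
  carrier := φ ⁻¹' K
  zero_mem' := by simp [zero_mem]
  add_mem' ha hb := by simpa using add_mem ha hb
  smul_mem' c a ha := by simpa using SMulMemClass.smul_mem c ha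
  isClosed' := K.isClosed.preimage (map_continuous φ)
  mul_mem_left' a x hx := by simpa using K.mul_mem_left (φ a) hx
  mul_mem_right' a x hx := by simpa using K.mul_mem_right (φ a) hx

/-! #### Nearby ideals -/

theorem exists_forall_norm_mk_lt_of_mem_span {w j : A} (hj : j ∈ span {w}) {ε : ℝ} (hε : 0 < ε) :
    ∃ δ > 0, ∀ J : ClosedIdeal A, ‖J.mk w‖ < δ → ‖J.mk j‖ < ε := by
  -- `w`, hence `j`, lies in the limit of all closed ideals `J` along `‖J.mk w‖ → 0`.
  have hlim : j ∈ limit (Filter.comap (fun J : ClosedIdeal A => ‖J.mk w‖) (𝓝 0)) id :=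
    span_singleton_le (mem_limit.2 tendsto_comap) hj
  have hev := Metric.tendsto_nhds.1 hlim ε hε
  rw [eventually_comap] at hev
  obtain ⟨δ, hδ, hball⟩ := Metric.eventually_nhds_iff.1 hev
  exact ⟨δ, hδ, fun J hJ => by simpa using hball (y := ‖J.mk w‖) (by simpa using hJ) J rfl⟩

theorem exists_forall_norm_mk_lt {w c : A} {ε : ℝ} (h : ‖(span {w}).mk c‖ < ε) :
    ∃ δ > 0, ∀ J : ClosedIdeal A, ‖J.mk w‖ < δ → ‖J.mk c‖ < ε := by
  obtain ⟨r, hcr, hrε⟩ := exists_between h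
  obtain ⟨j, hj, hcj⟩ := (span {w}).exists_mem_norm_sub_lt hcr
  obtain ⟨δ, hδ, hJ⟩ := exists_forall_norm_mk_lt_of_mem_span hj (sub_pos.2 hrε)
  exact ⟨δ, hδ, fun J hw => by linarith [J.norm_mk_le_add c j, hJ J hw]⟩

end ClosedIdeal

/-! ### Generic elements of inner ideals -/

theorem isUnit_smul_one_add_mul_comm {U : Type*} [Ring U] [Algebra ℂ U] {a b : U} {l : ℂ}
    (hl : l ≠ 0) : IsUnit (l • (1 : U) + a * b) ↔ IsUnit (l • (1 : U) + b * a) := by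
  have hspec := spectrum.unit_mem_mul_comm (a := a) (b := -b) (r := Units.mk0 l hl)
  rw [spectrum.mem_iff, spectrum.mem_iff, not_iff_not] at hspec
  simpa [Algebra.algebraMap_eq_smul_one] using hspec

theorem exists_isUnit_smul_one_add_mul {U : Type*} [NormedRing U] [NormedAlgebra ℂ U]
    [CompleteSpace U] (hU : Dense {a : U | IsUnit a}) (y : U) {l : ℂ} (hl : l ≠ 0) {κ : ℝ}
    (hκ : 0 < κ) : ∃ C : U, ‖C - 1‖ < κ ∧ IsUnit (l • (1 : U) + C * y) := by
  have hdense : Dense {v : U | IsUnit (l • v + y)} :=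
    hU.preimage ((Homeomorph.smulOfNeZero l hl).trans (Homeomorph.addRight y)).isOpenMap
  have hnear : ∀ᶠ v in 𝓝 (1 : U), IsUnit v ∧ ‖Ring.inverse v - 1‖ < κ := by
    refine (Units.isOpen.eventually_mem isUnit_one).and ?_
    have hcont : ContinuousAt Ring.inverse (1 : U) := NormedRing.inverse_continuousAt 1
    simpa [dist_eq_norm] using Metric.tendsto_nhds.1 hcont.tendsto κ hκ
  obtain ⟨v, hunit, hv, hvκ⟩ := hdense.inter_nhds_nonempty hnear
  refine ⟨Ring.inverse v, hvκ, ?_⟩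
  have hfactor : l • (1 : U) + Ring.inverse v * y = Ring.inverse v * (l • v + y) := by
    rw [mul_add, mul_smul_comm, Ring.inverse_mul_cancel v hv]
  rw [hfactor]
  exact hv.ringInverse.mul hunit

section

variable {A : Type u} [NonUnitalCStarAlgebra A]

variable (A) in
/-- `A` has stable rank one: the invertible elements of its unitization are dense. -/
def HasStableRankOne : Prop := Dense {a : Unitization ℂ A | IsUnit a}

/-- Left multiplication by an element of the unitization, as a map of the ideal `A`. -/
noncomputable def leftMul (z : Unitization ℂ A) (a : A) : A := z.fst • a + z.snd * a

/-- Right multiplication by an element of the unitization, as a map of the ideal `A`. -/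
noncomputable def rightMul (a : A) (z : Unitization ℂ A) : A := z.fst • a + a * z.snd

theorem inr_leftMul (z : Unitization ℂ A) (a : A) :
    ((leftMul z a : A) : Unitization ℂ A) = z * a := by
  ext <;> simp [leftMul]

theorem inr_rightMul (a : A) (z : Unitization ℂ A) :
    ((rightMul a z : A) : Unitization ℂ A) = a * z := by
  ext <;> simp [rightMul]

theorem norm_leftMul_le (z : Unitization ℂ A) (a : A) : ‖leftMul z a‖ ≤ ‖z‖ * ‖a‖ := by
  rw [← Unitization.norm_inr (𝕜 := ℂ), inr_leftMul, ← Unitization.norm_inr (𝕜 := ℂ) (a := a)]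
  exact norm_mul_le _ _

theorem ClosedIdeal.leftMul_mem (J : ClosedIdeal A) (z : Unitization ℂ A) {a : A} (ha : a ∈ J) :
    leftMul z a ∈ J :=
  add_mem (SMulMemClass.smul_mem _ ha) (J.mul_mem_left _ ha)

theorem ClosedIdeal.rightMul_mem (J : ClosedIdeal A) {a : A} (ha : a ∈ J) (z : Unitization ℂ A) :
    rightMul a z ∈ J :=
  add_mem (SMulMemClass.smul_mem _ ha) (J.mul_mem_right _ ha)

/-- `x (1 - τ / (star x * x))₊`: the part of `x` living on the spectrum of `star x * x`
above `τ`. -/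
noncomputable def truncate (τ : ℝ) (x : A) : A :=
  x * cfcₙ (fun s => approxInv τ s * cutDown τ s) (star x * x)

section truncate

variable {τ : ℝ} (x : A)

theorem star_mul_truncate_mul_nonneg : 0 ≤ star x * truncate τ x * (star x * x) := by
  have hsa : IsSelfAdjoint (star x * x) := .star_mul_self x
  have hcut : 0 ≤ cfcₙ (fun s => approxInv τ s * cutDown τ s) (star x * x) :=
    cfcₙ_nonneg fun s hs => mul_nonneg
      (div_nonneg (quasispectrum_nonneg_of_nonneg _ (star_mul_self_nonneg x) s hs) (sq_nonneg _))
      cutDown_nonneg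
  have hconj := star_left_conjugate_nonneg hcut (star x * x)
  rwa [hsa.star_eq, mul_assoc (star x) x, ← truncate] at hconj

variable (hτ : 0 < τ)
include hτ

theorem norm_sub_truncate_sq_le : ‖x - truncate τ x‖ ^ 2 ≤ τ := by
  refine norm_sub_mul_cfcₙ_sq_le x ((continuous_approxInv hτ).mul continuous_cutDown) (by simp)
    fun s _ => ?_
  rw [Pi.mul_apply]
  rcases le_total s τ with hsτ | hsτ
  · simpa [cutDown_of_le hsτ] using hsτ
  · have hpos : 0 < s := hτ.trans_le hsτ
    have herr : s * (1 - approxInv τ s * cutDown τ s) ^ 2 = τ * (τ / s) := by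
      rw [cutDown_of_ge hsτ, approxInv, max_eq_left hsτ]
      field_simp
      ring
    rw [herr]
    exact mul_le_of_le_one_right hτ.le ((div_le_one hpos).2 hsτ)

theorem cfcₙ_approxInv_mul_cutDown (a : A) :
    cfcₙ (fun s => approxInv τ s * cutDown τ s) a = cfcₙ (approxInv τ) a * cfcₙ (cutDown τ) a :=
  cfcₙ_mul _ _ a (continuous_approxInv hτ).continuousOn (by simp)
    continuous_cutDown.continuousOn (cutDown_of_le hτ.le)

theorem truncate_mul_approxOne :
    truncate τ x * cfcₙ (approxOne τ) (star x * x) = truncate τ x := by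
  rw [truncate, cfcₙ_approxInv_mul_cutDown hτ, mul_assoc, mul_assoc,
    cfcₙ_cutDown_mul_approxOne _ hτ]

theorem exists_truncate_eq_mul_mul : ∃ b, truncate τ x = x * b * x := by
  refine ⟨cfcₙ (approxInv τ) (star x * x) * cfcₙ (cutDown τ) (star x * x) *
    (cfcₙ (approxInv τ) (star x * x) * star x), ?_⟩
  rw [← truncate_mul_approxOne x hτ, cfcₙ_approxOne_eq_mul' (.star_mul_self x) hτ, truncate,
    cfcₙ_approxInv_mul_cutDown hτ]
  simp only [mul_assoc]

end truncate

theorem norm_le_of_add_smul_star_mul_self_eq {g y f : A} {η : ℝ} (hη : 0 < η) (hg : 0 ≤ g)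
    (h : g + (η : ℂ) • (star y * y) = -((η : ℂ) • (f * y))) : ‖y‖ ≤ ‖f‖ := by
  have hηy : 0 ≤ (η : ℂ) • (star y * y) := by
    rw [Complex.coe_smul]
    exact smul_nonneg hη.le (star_mul_self_nonneg y)
  have hsq : ‖y‖ * ‖y‖ ≤ ‖f‖ * ‖y‖ := by
    have hle := norm_le_norm_add_of_nonneg hηy hg
    rw [add_comm, h, norm_neg, norm_smul, norm_smul, CStarRing.norm_star_mul_self,
      Complex.norm_real, Real.norm_of_nonneg hη.le] at hle
    exact (le_of_mul_le_mul_left hle hη).trans (norm_mul_le f y)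
  rcases (norm_nonneg y).eq_or_lt with hy | hy
  · rw [← hy]; positivity
  · exact le_of_mul_le_mul_right hsq hy

/-- A subspace `E` with `E A E ⊆ E`, such as a hereditary subalgebra or a corner `b A e`. -/
def IsInnerIdeal (E : Submodule ℂ A) : Prop := ∀ x ∈ E, ∀ a, ∀ y ∈ E, x * a * y ∈ E

namespace ClosedIdeal

variable (I : ClosedIdeal A) {τ η κ : ℝ} {x c e : A}

theorem norm_mk_mul_star_mul_self_le (hη : 0 < η)
    (hw : truncate τ x + (η : ℂ) • ((κ : ℂ) • c + x * e * c) ∈ I) :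
    ‖I.mk (c * (star x * x))‖ ≤ |κ| * ‖x‖ + ‖star x * x‖ * ‖e - star c‖ := by
  set a := star x * x with ha
  set f := (κ : ℂ) • star x + a * (e - star c) with hf
  have hsa : star a = a := (IsSelfAdjoint.star_mul_self x).star_eq
  have hexpand : star x * (truncate τ x + (η : ℂ) • ((κ : ℂ) • c + x * e * c)) * a =
      star x * truncate τ x * a + (η : ℂ) • (star (c * a) * (c * a)) +
        (η : ℂ) • (f * (c * a)) := by
    rw [mul_add, add_mul, add_assoc, ← smul_add, mul_smul_comm, smul_mul_assoc, star_mul, hsa, hf]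
    congr 2
    simp only [ha, mul_add, add_mul, mul_sub, sub_mul, smul_mul_assoc, mul_smul_comm, mul_assoc]
    abel
  have hzero := I.mk_eq_zero_iff.2 (I.mul_mem_right a (I.mul_mem_left (star x) hw))
  rw [hexpand, map_add, add_eq_zero_iff_eq_neg, map_add, map_smul, map_smul,
    map_mul _ (star _), map_star, map_mul _ f] at hzero
  calc ‖I.mk (c * a)‖ ≤ ‖I.mk f‖ := norm_le_of_add_smul_star_mul_self_eq hη
        (map_nonneg I.mk (star_mul_truncate_mul_nonneg x)) hzero
    _ ≤ ‖f‖ := I.norm_mk_le f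
    _ ≤ |κ| * ‖x‖ + ‖a‖ * ‖e - star c‖ := by
      refine (norm_add_le _ _).trans (add_le_add ?_ (norm_mul_le _ _))
      rw [norm_smul, Complex.norm_real, Real.norm_eq_abs, norm_star]

theorem sub_mul_approxOne_mem (hτ : 0 < τ) (hη : 0 < η)
    (hunit : IsUnit ((κ : ℂ) • (1 : Unitization ℂ A) + x * e))
    (hw : truncate τ x + (η : ℂ) • ((κ : ℂ) • c + x * e * c) ∈ I) :
    c - c * cfcₙ (approxOne τ) (star x * x) ∈ I := by
  obtain ⟨R, hR⟩ := hunit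
  set m := cfcₙ (approxOne τ) (star x * x)
  set w := truncate τ x + (η : ℂ) • ((κ : ℂ) • c + x * e * c) with hwdef
  have hη0 : (η : ℂ) ≠ 0 := by exact_mod_cast hη.ne'
  have hRc : leftMul R c = (κ : ℂ) • c + x * e * c := by
    apply Unitization.inr_injective (R := ℂ)
    rw [inr_leftMul, hR, add_mul]
    simp
  have hdiff : w - w * m = (η : ℂ) • leftMul R (c - c * m) := by
    have hsub : leftMul R (c - c * m) = leftMul R c - leftMul R c * m := by
      simp only [leftMul, smul_sub, mul_sub, add_mul, smul_mul_assoc, mul_assoc]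
      abel
    rw [hsub, hRc, hwdef, add_mul, truncate_mul_approxOne x hτ, add_sub_add_left_eq_sub,
      smul_mul_assoc, ← smul_sub]
  have hc : c - c * m = leftMul (↑R⁻¹) ((η : ℂ)⁻¹ • (w - w * m)) := by
    rw [hdiff, smul_smul, inv_mul_cancel₀ hη0, one_smul]
    apply Unitization.inr_injective (R := ℂ)
    rw [inr_leftMul, inr_leftMul, Units.inv_mul_cancel_left]
  rw [hc]
  exact I.leftMul_mem _ (SMulMemClass.smul_mem _ (sub_mem hw (I.mul_mem_right m hw)))

theorem norm_mk_le_div (hτ : 0 < τ) (hη : 0 < η)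
    (hunit : IsUnit ((κ : ℂ) • (1 : Unitization ℂ A) + x * e))
    (hw : truncate τ x + (η : ℂ) • ((κ : ℂ) • c + x * e * c) ∈ I) :
    ‖I.mk c‖ ≤ (|κ| * ‖x‖ + ‖star x * x‖ * ‖e - star c‖) / τ := by
  have hmod : I.mk c = I.mk (c * (star x * x)) * I.mk (cfcₙ (approxInv τ) (star x * x)) := by
    rw [← map_mul, mul_assoc, ← cfcₙ_approxOne_eq_mul (.star_mul_self x) hτ, ← sub_eq_zero,
      ← map_sub, I.mk_eq_zero_iff]
    exact I.sub_mul_approxOne_mem hτ hη hunit hw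
  rw [hmod, div_eq_mul_one_div]
  refine (norm_mul_le _ _).trans ?_
  gcongr
  · exact I.norm_mk_mul_star_mul_self_le hη hw
  · exact (I.norm_mk_le _).trans (norm_cfcₙ_star_mul_self_le x fun s hs => abs_approxInv_le hτ hs)

end ClosedIdeal

open ClosedIdeal in
/-- Stable rank one makes `R = κ + x e` invertible for some `e` near `star c`. For small `η` the
element `w = truncate τ x + η R c` then works: cutting `w` down to the complement of the
support of `truncate τ x` recovers `c` there, while `star x * w * (star x * x)` recovers `c` on
the support. -/
theorem IsInnerIdeal.exists_near_norm_mk_lt (hA : HasStableRankOne A) {E : Submodule ℂ A}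
    (hE : IsInnerIdeal E) {x c : A} (hx : x ∈ E) (hc : c ∈ E) {δ ε : ℝ} (hδ : 0 < δ)
    (hε : 0 < ε) : ∃ w ∈ E, ‖w - x‖ < δ ∧ ‖(span {w}).mk c‖ < ε := by
  set τ := (δ / 2) ^ 2
  have hτ : 0 < τ := by positivity
  obtain ⟨κ, hκ, hκε⟩ := exists_pos_mul_lt (mul_pos hε hτ) (‖x‖ + ‖star x * x‖ * ‖c‖)
  have hκ0 : (κ : ℂ) ≠ 0 := by exact_mod_cast hκ.ne'
  obtain ⟨C, hC, hunit⟩ :=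
    exists_isUnit_smul_one_add_mul hA ((star c * x : A) : Unitization ℂ A) hκ0 hκ
  set e := leftMul C (star c)
  have he : ‖e - star c‖ ≤ κ * ‖c‖ := by
    have hdiff : e - star c = leftMul (C - 1) (star c) := by
      apply Unitization.inr_injective (R := ℂ)
      rw [Unitization.inr_sub, inr_leftMul, inr_leftMul, sub_mul, one_mul]
    rw [hdiff, ← norm_star c]
    exact (norm_leftMul_le _ _).trans (by gcongr)
  have hR : IsUnit ((κ : ℂ) • (1 : Unitization ℂ A) + x * e) := by
    rwa [inr_leftMul, isUnit_smul_one_add_mul_comm hκ0, mul_assoc, ← Unitization.inr_mul]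
  obtain ⟨η, hη, hηδ⟩ := exists_pos_mul_lt (half_pos hδ) ‖(κ : ℂ) • c + x * e * c‖
  refine ⟨truncate τ x + (η : ℂ) • ((κ : ℂ) • c + x * e * c), ?_, ?_, ?_⟩
  · obtain ⟨b, hb⟩ := exists_truncate_eq_mul_mul x hτ
    rw [hb]
    exact add_mem (hE _ hx _ _ hx)
      (E.smul_mem _ (add_mem (E.smul_mem _ hc) (hE _ hx _ _ hc)))
  · have htrunc : ‖truncate τ x - x‖ ≤ δ / 2 := by
      rw [norm_sub_rev]
      exact le_of_sq_le_sq (norm_sub_truncate_sq_le x hτ) (by positivity)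
    rw [add_sub_right_comm]
    refine (norm_add_le _ _).trans_lt ?_
    rw [norm_smul, Complex.norm_real, Real.norm_of_nonneg hη.le]
    linarith
  · refine (norm_mk_le_div _ hτ hη hR (mem_span_singleton_self _)).trans_lt ?_
    rw [div_lt_iff₀ hτ, abs_of_pos hκ]
    calc κ * ‖x‖ + ‖star x * x‖ * ‖e - star c‖
        ≤ κ * ‖x‖ + ‖star x * x‖ * (κ * ‖c‖) := by gcongr
      _ = (‖x‖ + ‖star x * x‖ * ‖c‖) * κ := by ring
      _ < ε * τ := hκε

open ClosedIdeal in
theorem isOpen_setOf_norm_mk_span_singleton_lt (c : A) (ε : ℝ) :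
    IsOpen {w : A | ‖(span {w}).mk c‖ < ε} := by
  refine Metric.isOpen_iff.2 fun w hw => ?_
  obtain ⟨δ, hδ, hnear⟩ := exists_forall_norm_mk_lt hw
  refine ⟨δ, hδ, fun v hv => hnear _ ?_⟩
  rw [Metric.mem_ball, dist_comm, dist_eq_norm] at hv
  exact (norm_mk_le_norm_sub _ (mem_span_singleton_self v)).trans_lt hv

open ClosedIdeal TopologicalSpace in
theorem IsInnerIdeal.exists_subset_span_singleton [SeparableSpace A] (hA : HasStableRankOne A)
    {E : Submodule ℂ A} (hE : IsInnerIdeal E) (hclosed : IsClosed (E : Set A)) :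
    ∃ w ∈ E, (E : Set A) ⊆ span {w} := by
  have : CompleteSpace E := hclosed.completeSpace_coe
  have : SecondCountableTopology A := UniformSpace.secondCountable_of_separable A
  let G : ℕ × ℕ → Set E := fun p =>
    {w | ‖(span {(w : A)}).mk (denseSeq E p.1 : A)‖ < 1 / ((p.2 : ℝ) + 1)}
  have hopen (p) : IsOpen (G p) :=
    (isOpen_setOf_norm_mk_span_singleton_lt _ _).preimage continuous_subtype_val
  have hdense (p) : Dense (G p) := by
    refine Metric.dense_iff.2 fun x r hr => ?_
    obtain ⟨w, hw, hwx, hlt⟩ := hE.exists_near_norm_mk_lt hA x.2 (denseSeq E p.1).2 hr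
      (show 0 < 1 / ((p.2 : ℝ) + 1) by positivity)
    exact ⟨⟨w, hw⟩, by rwa [Metric.mem_ball, dist_eq_norm], hlt⟩
  obtain ⟨w, hw⟩ := (dense_iInter_of_isOpen hopen hdense).nonempty
  rw [Set.mem_iInter] at hw
  have hseq (n : ℕ) : (denseSeq E n : A) ∈ span {(w : A)} := by
    rw [← mk_eq_zero_iff, ← norm_le_zero_iff]
    refine le_of_forall_pos_le_add fun ε hε => ?_
    obtain ⟨m, hm⟩ := exists_nat_one_div_lt hε
    rw [zero_add]
    exact (hw (n, m)).le.trans hm.le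
  have hpre : IsClosed ((↑) ⁻¹' (span {(w : A)} : Set A) : Set E) :=
    (span {(w : A)}).isClosed.preimage continuous_subtype_val
  have hsub := hpre.closure_subset_iff.2 (Set.range_subset_iff.2 hseq)
  exact ⟨w, w.2, fun c hc => hsub (denseRange_denseSeq E ⟨c, hc⟩)⟩

end

/-! ### Hereditary subalgebras -/

/-- A hereditary C⋆-subalgebra, encoded as a closed star subalgebra `D` with `D A D ⊆ D`. -/
structure HereditarySubalgebra (A : Type u) [NonUnitalCStarAlgebra A] extends
    NonUnitalStarSubalgebra ℂ A where
  isClosed' : IsClosed (carrier : Set A)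
  mul_mul_mem' : ∀ x ∈ carrier, ∀ a, ∀ y ∈ carrier, x * a * y ∈ carrier

namespace HereditarySubalgebra

variable {A : Type u} [NonUnitalCStarAlgebra A]

instance : SetLike (HereditarySubalgebra A) A where
  coe D := D.carrier
  coe_injective := by
    rintro ⟨D, _, _⟩ ⟨E, _, _⟩ h
    obtain rfl : D = E := SetLike.coe_injective h
    rfl

instance : NonUnitalSubringClass (HereditarySubalgebra A) A where
  add_mem {D} := D.toNonUnitalStarSubalgebra.add_mem
  zero_mem D := D.toNonUnitalStarSubalgebra.zero_mem
  neg_mem {D} := D.toNonUnitalStarSubalgebra.neg_mem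
  mul_mem {D} := D.toNonUnitalStarSubalgebra.mul_mem

instance : SMulMemClass (HereditarySubalgebra A) ℂ A where
  smul_mem {D} c _ h := D.toNonUnitalStarSubalgebra.smul_mem c h

instance : StarMemClass (HereditarySubalgebra A) A where
  star_mem {D} _ h := D.star_mem' h

variable (D : HereditarySubalgebra A)

instance isClosed : IsClosed (D : Set A) := D.isClosed'

theorem mul_mul_mem {x y : A} (hx : x ∈ D) (a : A) (hy : y ∈ D) : x * a * y ∈ D :=
  D.mul_mul_mem' x hx a y hy

instance [TopologicalSpace.SeparableSpace A] : TopologicalSpace.SeparableSpace D :=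
  have : SecondCountableTopology A := UniformSpace.secondCountable_of_separable A
  inferInstance

theorem isQuasiregular_of_coe {d : D} (hd : IsQuasiregular (d : A)) : IsQuasiregular d := by
  obtain ⟨y, hleft, hright⟩ := isQuasiregular_iff.1 hd
  have hy : y = -d + d * d + d * y * d := by
    have hyd : y = -d - d * y := by
      rw [sub_eq_add_neg, ← neg_add, eq_neg_iff_add_eq_zero, ← add_assoc, hleft]
    have hdy : y = -d - y * d := by
      rw [sub_eq_add_neg, ← neg_add, eq_neg_iff_add_eq_zero, ← add_assoc, add_comm y, hright]
    calc y = -d - d * y := hyd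
      _ = -d - d * (-d - y * d) := by rw [← hdy]
      _ = -d + d * d + d * y * d := by noncomm_ring
  have hyD : y ∈ D := by
    rw [hy]
    exact add_mem (add_mem (neg_mem d.2) (mul_mem d.2 d.2)) (D.mul_mul_mem d.2 y d.2)
  exact isQuasiregular_iff.2 ⟨⟨y, hyD⟩, Subtype.ext hleft, Subtype.ext hright⟩

theorem isUnit_smul_one_add_inr_of_coe {l : ℂ} (hl : l ≠ 0) {d : D}
    (hd : IsUnit (l • (1 : Unitization ℂ A) + ((d : A) : Unitization ℂ A))) :
    IsUnit (l • (1 : Unitization ℂ D) + d) := by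
  have hscale (B : Type u) [NonUnitalCStarAlgebra B] (b : B) :
      IsUnit (l • (1 : Unitization ℂ B) + b) ↔ IsQuasiregular (l⁻¹ • b) := by
    rw [isQuasiregular_iff_isUnit' ℂ,
      ← isUnit_smul_iff (Units.mk0 l hl) (1 + _), Unitization.inr_smul]
    simp [Units.smul_def, smul_smul, hl]
  rw [hscale] at hd ⊢
  exact D.isQuasiregular_of_coe hd

theorem exists_near_isUnit_smul_one_add (hA : HasStableRankOne A) {l : ℂ} (hl : l ≠ 0) (d : D)
    {ε : ℝ} (hε : 0 < ε) :
    ∃ d' : D, ‖d' - d‖ < ε ∧ IsUnit (l • (1 : Unitization ℂ D) + d') := by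
  obtain ⟨e, -, he, hed, hde⟩ := exists_approx_unit d (show 0 < ε / 3 by positivity)
  obtain ⟨κ, hκ, hκε⟩ := exists_pos_mul_lt (show 0 < ε / 3 by positivity) ‖d‖
  obtain ⟨C, hC, hunit⟩ :=
    exists_isUnit_smul_one_add_mul hA (((d * e * e : D) : A) : Unitization ℂ A) hl hκ
  let d' : D := ⟨e * leftMul C (d : A) * e, D.mul_mul_mem e.2 _ e.2⟩
  refine ⟨d', ?_, D.isUnit_smul_one_add_inr_of_coe hl ?_⟩
  · have hCd : ‖leftMul C (d : A) - d‖ ≤ ε / 3 := by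
      have hdiff : leftMul C (d : A) - d = leftMul (C - 1) (d : A) := by
        apply Unitization.inr_injective (R := ℂ)
        rw [Unitization.inr_sub, inr_leftMul, inr_leftMul, sub_mul, one_mul]
      rw [hdiff]
      refine (norm_leftMul_le _ _).trans (le_trans ?_ hκε.le)
      rw [mul_comm]
      gcongr
      exact le_rfl
    have hsplit : ((d' - d : D) : A) =
        e * (leftMul C (d : A) - d) * e + ((e * d - d : D) : A) * e + ((d * e - d : D) : A) := by
      simp only [d', AddSubgroupClass.coe_sub, MulMemClass.coe_mul]
      noncomm_ring
    calc ‖d' - d‖ ≤ ‖(e : A)‖ * ‖leftMul C (d : A) - d‖ * ‖(e : A)‖ + ‖e * d - d‖ * ‖(e : A)‖ +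
          ‖d * e - d‖ := by
          change ‖((d' - d : D) : A)‖ ≤ _
          rw [hsplit]
          exact norm_add₃_le.trans
            (add_le_add (add_le_add norm_mul₃_le (norm_mul_le _ _)) le_rfl)
      _ ≤ 1 * (ε / 3) * 1 + ‖e * d - d‖ * 1 + ‖d * e - d‖ := by gcongr <;> exact he
      _ < ε := by linarith
  · have hcomm : ((d' : A) : Unitization ℂ A) =
        (e : A) * (C * (((d * e : D) : A) : Unitization ℂ A)) := by
      simp [d', inr_leftMul, mul_assoc]
    rw [hcomm, isUnit_smul_one_add_mul_comm hl]
    simpa [mul_assoc] using hunit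

theorem hasStableRankOne (hA : HasStableRankOne A) : HasStableRankOne D := by
  refine Metric.dense_iff.2 fun z ε hε => ?_
  obtain ⟨l, hlz, hl⟩ := Metric.dense_iff.1 (dense_compl_singleton (0 : ℂ)) z.fst (ε / 2)
    (half_pos hε)
  obtain ⟨d', hd', hunit⟩ := D.exists_near_isUnit_smul_one_add hA hl z.snd (half_pos hε)
  refine ⟨_, ?_, hunit⟩
  have hdiff : l • (1 : Unitization ℂ D) + d' - z =
      (l - z.fst) • (1 : Unitization ℂ D) + ((d' - z.snd : D) : Unitization ℂ D) := by
    ext <;> simp [sub_eq_add_neg]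
  rw [Metric.mem_ball, dist_eq_norm] at hlz ⊢
  calc ‖l • (1 : Unitization ℂ D) + d' - z‖
      ≤ ‖l - z.fst‖ * ‖(1 : Unitization ℂ D)‖ + ‖((d' - z.snd : D) : Unitization ℂ D)‖ := by
        rw [hdiff, ← norm_smul]
        exact norm_add_le _ _
    _ < ε := by
      rw [norm_one, Unitization.norm_inr]
      linarith

end HereditarySubalgebra

/-! ### Combining two square-zero elements -/

theorem exists_unitary_mul_abs_eq {U : Type*} [CStarAlgebra U] {T : U} (hT : IsUnit T) :
    ∃ u ∈ unitary U, u * CFC.abs T = T := by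
  obtain ⟨t, rfl⟩ := hT
  obtain ⟨s, hs⟩ : IsUnit (CFC.abs (t : U)) :=
    (CFC.isUnit_sqrt_iff _ (star_mul_self_nonneg _)).2 (t.isUnit.star.mul t.isUnit)
  refine ⟨t * ↑s⁻¹, (t.mul_inv_mem_unitary s).2 ?_, by rw [← hs, Units.inv_mul_cancel_right]⟩
  refine Units.ext ?_
  rw [Units.val_mul, Units.val_mul, Units.coe_star, Units.coe_star, hs,
    (CFC.abs_nonneg (t : U)).isSelfAdjoint.star_eq, CFC.abs_mul_abs]

theorem exists_unitary_norm_star_mul_self_mul_conj_lt {U : Type*} [CStarAlgebra U]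
    (hU : Dense {a : U | IsUnit a}) {w b : U} (hwb : star w * b = 0) {ε : ℝ} (hε : 0 < ε) :
    ∃ u ∈ unitary U, ‖star w * w * (star u * b * u)‖ < ε := by
  have hcont : Continuous fun T : U => ‖star w * w - star T * T‖ * ‖b‖ + ‖T‖ * ‖star T * b‖ := by
    fun_prop
  obtain ⟨T, hTε, hT⟩ := hU.inter_open_nonempty _ (hcont.isOpen_preimage _ isOpen_Iio)
    ⟨w, by simpa [hwb] using hε⟩
  obtain ⟨u, hu, hpolar⟩ := exists_unitary_mul_abs_eq hT
  refine ⟨u, hu, lt_of_le_of_lt ?_ hTε⟩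
  have habs : star T * T * star u = CFC.abs T * star T := by
    conv_rhs => rw [← hpolar]
    rw [star_mul, (CFC.abs_nonneg T).isSelfAdjoint.star_eq, ← mul_assoc, hpolar, CFC.abs_mul_abs]
  have hsplit : star w * w * (star u * b * u) =
      (star w * w - star T * T) * (star u * b * u) + CFC.abs T * (star T * b) * u := by
    rw [← mul_assoc (CFC.abs T), ← habs]
    noncomm_ring
  calc ‖star w * w * (star u * b * u)‖
      ≤ ‖star w * w - star T * T‖ * ‖star u * b * u‖ + ‖CFC.abs T * (star T * b) * u‖ := by
        rw [hsplit]; exact (norm_add_le _ _).trans (add_le_add_left (norm_mul_le _ _) _)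
    _ ≤ ‖star w * w - star T * T‖ * ‖b‖ + ‖T‖ * ‖star T * b‖ := by
        rw [CStarRing.norm_mul_mem_unitary _ hu, CStarRing.norm_mul_mem_unitary _ hu,
          CStarRing.norm_mem_unitary_mul _ (Unitary.star_mem hu), ← CFC.norm_abs (a := T)]
        gcongr
        exact norm_mul_le _ _

section

variable {A : Type u} [NonUnitalCStarAlgebra A]

namespace ClosedIdeal

theorem norm_mk_sq_le (J : ClosedIdeal A) (x : A) {τ : ℝ} (hτ : 0 < τ) :
    ‖J.mk x‖ ^ 2 ≤ τ + ‖J.mk (cfcₙ (cutDown τ) (star x * x))‖ := by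
  rw [sq, ← CStarRing.norm_star_mul_self, ← map_star, ← map_mul]
  exact (J.norm_mk_le_add _ _).trans (add_le_add_left (norm_sub_cutDown_le x hτ) _)

theorem norm_mk_star (J : ClosedIdeal A) (x : A) : ‖J.mk (star x)‖ = ‖J.mk x‖ := by
  rw [map_star, norm_star]

theorem norm_mk_lt_of_mul_mul_mem {J K L : ClosedIdeal A}
    (h : ∀ k ∈ K, ∀ l ∈ L, ∀ a, k * a * l ∈ J) {x : A} {ε : ℝ} (hK : ‖K.mk x‖ < ε)
    (hL : ‖L.mk x‖ < ε) : ‖J.mk x‖ < ε := by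
  obtain ⟨r, hr, hrε⟩ := exists_between (max_lt hK hL)
  have hr0 : 0 < r := (norm_nonneg _).trans_lt ((le_max_left _ _).trans_lt hr)
  have hcut : ∀ I : ClosedIdeal A, ‖I.mk x‖ ≤ r → cfcₙ (cutDown (r ^ 2)) (star x * x) ∈ I := by
    refine fun I hI => I.cfcₙ_cutDown_mem x (by positivity) ?_
    rw [map_mul, map_star, CStarRing.norm_star_mul_self, ← sq]
    gcongr
  have hmem : cfcₙ (cutDown (r ^ 2)) (star x * x) ∈ J := J.mem_of_mul_star_mul_mem <|
    h _ (hcut K ((le_max_left _ _).trans hr.le)) _ (hcut L ((le_max_right _ _).trans hr.le)) _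
  have hsq := J.norm_mk_sq_le x (pow_pos hr0 2)
  rw [J.mk_eq_zero_iff.2 hmem, norm_zero, add_zero] at hsq
  exact (le_of_sq_le_sq hsq hr0.le).trans_lt hrε

theorem norm_mk_rightMul_le (J : ClosedIdeal A) (a : A) (z : Unitization ℂ A) :
    ‖J.mk (rightMul a z)‖ ≤ ‖J.mk a‖ * ‖z‖ := by
  refine ge_of_tendsto (x := 𝓝[>] ‖J.mk a‖) (f := fun r : ℝ => r * ‖z‖)
    ((Continuous.tendsto (by fun_prop) _).mono_left nhdsWithin_le_nhds) ?_
  filter_upwards [self_mem_nhdsWithin] with r hr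
  obtain ⟨j, hj, hlt⟩ := J.exists_mem_norm_sub_lt hr
  calc ‖J.mk (rightMul a z)‖ ≤ ‖rightMul a z - rightMul j z‖ :=
        J.norm_mk_le_norm_sub (J.rightMul_mem hj z)
    _ = ‖((a - j : A) : Unitization ℂ A) * z‖ := by
        rw [← inr_rightMul, Unitization.norm_inr]
        simp only [rightMul, smul_sub, sub_mul, add_sub_add_comm]
    _ ≤ r * ‖z‖ := (norm_mul_le _ _).trans (by rw [Unitization.norm_inr]; gcongr)

end ClosedIdeal

open ClosedIdeal

/-- The inner ideal of all `e` with `p e = 0 = e q`. -/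
def twoSidedAnnihilator (p q : A) : Submodule ℂ A where
  carrier := {e | p * e = 0 ∧ e * q = 0}
  zero_mem' := by simp
  add_mem' ha hb := ⟨by rw [mul_add, ha.1, hb.1, add_zero], by rw [add_mul, ha.2, hb.2, add_zero]⟩
  smul_mem' c _ ha :=
    ⟨by rw [mul_smul_comm, ha.1, smul_zero], by rw [smul_mul_assoc, ha.2, smul_zero]⟩

theorem isClosed_twoSidedAnnihilator (p q : A) : IsClosed (twoSidedAnnihilator p q : Set A) :=
  (isClosed_eq (continuous_const_mul p) continuous_const).inter
    (isClosed_eq (continuous_mul_const q) continuous_const)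

theorem isInnerIdeal_twoSidedAnnihilator (p q : A) : IsInnerIdeal (twoSidedAnnihilator p q) :=
  fun e he a f hf => ⟨by rw [mul_assoc, ← mul_assoc, he.1, zero_mul],
    by rw [mul_assoc, hf.2, mul_zero]⟩

section

variable {b a q : A} {τ : ℝ} {J : ClosedIdeal A} (hb : IsSelfAdjoint b) (hτ : 0 < τ)
include hb hτ

theorem mem_of_twoSidedAnnihilator_cutDown_left_subset
    (hJ : (twoSidedAnnihilator (cfcₙ (cutDown τ) b) q : Set A) ⊆ J) (haq : a * q = 0)
    (hba : b * a ∈ J) : a ∈ J := by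
  have hrest : a - cfcₙ (approxOne τ) b * a ∈ J := hJ
    ⟨by rw [mul_sub, ← mul_assoc, cfcₙ_cutDown_mul_approxOne b hτ, sub_self],
      by rw [sub_mul, mul_assoc, haq, mul_zero, sub_zero]⟩
  have hmain : cfcₙ (approxOne τ) b * a ∈ J := by
    rw [cfcₙ_approxOne_eq_mul' hb hτ, mul_assoc]
    exact J.mul_mem_left _ hba
  simpa using add_mem hrest hmain

theorem mem_of_twoSidedAnnihilator_cutDown_right_subset
    (hJ : (twoSidedAnnihilator q (cfcₙ (cutDown τ) b) : Set A) ⊆ J) (hqa : q * a = 0)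
    (hab : a * b ∈ J) : a ∈ J := by
  have hrest : a - a * cfcₙ (approxOne τ) b ∈ J := hJ
    ⟨by rw [mul_sub, ← mul_assoc, hqa, zero_mul, sub_zero],
      by rw [sub_mul, mul_assoc, cfcₙ_approxOne_mul_cutDown b hτ, sub_self]⟩
  have hmain : a * cfcₙ (approxOne τ) b ∈ J := by
    rw [cfcₙ_approxOne_eq_mul hb hτ, ← mul_assoc]
    exact J.mul_mem_right _ hab
  simpa using add_mem hrest hmain

theorem cfcₙ_cutDown_mul_eq_zero (h : b * a = 0) : cfcₙ (cutDown τ) b * a = 0 := by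
  rw [← cfcₙ_cutDown_mul_approxOne b hτ, cfcₙ_approxOne_eq_mul' hb hτ, mul_assoc, mul_assoc, h,
    mul_zero, mul_zero]

theorem mul_cfcₙ_cutDown_eq_zero (h : a * b = 0) : a * cfcₙ (cutDown τ) b = 0 := by
  rw [← cfcₙ_approxOne_mul_cutDown b hτ, cfcₙ_approxOne_eq_mul hb hτ, ← mul_assoc, ← mul_assoc, h,
    zero_mul, zero_mul]

end

theorem exists_mem_twoSidedAnnihilator_cutDown [TopologicalSpace.SeparableSpace A]
    (hA : HasStableRankOne A) {x y : A} (hx : x * x = 0) (hy : y * y = 0) {τ : ℝ} (hτ : 0 < τ) :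
    ∃ w ∈ twoSidedAnnihilator (cfcₙ (cutDown τ) (y * star y)) (cfcₙ (cutDown τ) (x * star x)),
      x ∈ span {w} ∧ y ∈ span {w} := by
  have hsay : IsSelfAdjoint (y * star y) := .mul_star_self y
  have hsax : IsSelfAdjoint (x * star x) := .mul_star_self x
  obtain ⟨w, hw, hsub⟩ := (isInnerIdeal_twoSidedAnnihilator (cfcₙ (cutDown τ) (y * star y))
    (cfcₙ (cutDown τ) (x * star x))).exists_subset_span_singleton hA
    (isClosed_twoSidedAnnihilator _ _)
  set J := span {w}
  have hcuty : cfcₙ (cutDown τ) (y * star y) * (star y * y) = 0 :=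
    cfcₙ_cutDown_mul_eq_zero hsay hτ <| by
      rw [mul_assoc, ← mul_assoc (star y), ← star_mul, hy, star_zero, zero_mul, mul_zero]
  have hcutx : star x * x * cfcₙ (cutDown τ) (x * star x) = 0 :=
    mul_cfcₙ_cutDown_eq_zero hsax hτ <| by
      rw [mul_assoc, ← mul_assoc x, hx, zero_mul, mul_zero]
  have hsandwich : ∀ z, star y * y * z * (star x * x) ∈ J := fun z => hsub
    ⟨by rw [mul_assoc, ← mul_assoc, hcuty, zero_mul], by rw [mul_assoc, hcutx, mul_zero]⟩
  refine ⟨w, hw, J.star_mul_self_mem_iff.1 ?_, J.star_mul_self_mem_iff.1 ?_⟩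
  · refine mem_of_twoSidedAnnihilator_cutDown_left_subset hsay hτ hsub hcutx ?_
    rw [← J.star_mul_self_mem_iff]
    simpa only [star_mul, star_star, mul_assoc] using
      J.mul_mem_left (star (star x * x) * star (star y)) (hsandwich (star y))
  · refine mem_of_twoSidedAnnihilator_cutDown_right_subset hsax hτ hsub hcuty ?_
    rw [← mul_assoc, ← J.mul_star_self_mem_iff]
    simpa only [star_mul, star_star, mul_assoc] using
      J.mul_mem_right (star x * star (star y * y)) (hsandwich x)

theorem exists_cutDown_mul_eq_zero_norm_sub_lt (w : A) {b : A} {σ ε : ℝ} (hσ : 0 < σ)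
    (hb : ‖star w * w * b‖ < σ * ε) :
    ∃ b', cfcₙ (cutDown σ) (star w * w) * b' = 0 ∧ ‖b - b'‖ < ε := by
  refine ⟨b - cfcₙ (approxOne σ) (star w * w) * b, ?_, ?_⟩
  · rw [mul_sub, ← mul_assoc, cfcₙ_cutDown_mul_approxOne _ hσ, sub_self]
  · rw [sub_sub_cancel, cfcₙ_approxOne_eq_mul' (.star_mul_self w) hσ, mul_assoc]
    calc _ ≤ 1 / σ * ‖star w * w * b‖ := (norm_mul_le _ _).trans <| by
          gcongr
          exact norm_cfcₙ_star_mul_self_le w fun s hs => abs_approxInv_le hσ hs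
      _ < 1 / σ * (σ * ε) := by gcongr
      _ = ε := by field_simp

/-- Conjugating `star v₂ * v₂` by an approximate polar unitary of `w` moves it from the left
annihilator of `w` to an approximate right annihilator, where it can be added to
`star v₁ * v₁`. -/
theorem exists_cutDown_mul_eq_zero_forall_norm_mk_le (hA : HasStableRankOne A) {w v₁ v₂ : A}
    (hw : w ∈ twoSidedAnnihilator (star v₂ * v₂) (star v₁ * v₁)) {σ ζ : ℝ} (hσ : 0 < σ)
    (hζ : 0 < ζ) : ∃ b, cfcₙ (cutDown σ) (star w * w) * b = 0 ∧ ∀ J : ClosedIdeal A, b ∈ J →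
      ‖J.mk (star v₁ * v₁)‖ ≤ ζ ∧ ‖J.mk (star v₂ * v₂)‖ ≤ ζ := by
  have hwv : star (w : Unitization ℂ A) * ↑(star v₂ * v₂) = 0 := by
    rw [← Unitization.inr_star, ← Unitization.inr_mul, ← (IsSelfAdjoint.star_mul_self v₂).star_eq,
      ← star_mul, hw.1, star_zero, Unitization.inr_zero]
  obtain ⟨u, hu, hlt⟩ :=
    exists_unitary_norm_star_mul_self_mul_conj_lt hA hwv (mul_pos hσ hζ)
  set r := rightMul v₂ u with hr
  have hv₂ : rightMul r (star u) = v₂ := Unitization.inr_injective (R := ℂ) <| by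
    rw [inr_rightMul, inr_rightMul, mul_assoc, Unitary.mul_star_self_of_mem hu, mul_one]
  have hpb : ‖star w * w * (star v₁ * v₁ + star r * r)‖ < σ * ζ := by
    rw [mul_add, mul_assoc (star w) w, hw.2, mul_zero, zero_add,
      ← Unitization.norm_inr (𝕜 := ℂ)]
    simpa only [hr, Unitization.inr_mul, Unitization.inr_star, inr_rightMul, star_mul, mul_assoc]
      using hlt
  obtain ⟨b, hb, hbζ⟩ := exists_cutDown_mul_eq_zero_norm_sub_lt w hσ hpb
  refine ⟨b, hb, fun J hJ => ?_⟩
  have hpos : ∀ v : A, 0 ≤ J.mk (star v * v) := fun v => by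
    rw [map_mul, map_star]; exact star_mul_self_nonneg _
  have hsum : ‖J.mk (star v₁ * v₁) + J.mk (star r * r)‖ ≤ ζ := by
    rw [← map_add]; exact (J.norm_mk_le_norm_sub hJ).trans hbζ.le
  refine ⟨(norm_le_norm_add_of_nonneg (hpos _) (hpos _)).trans hsum, ?_⟩
  have hrv : ‖J.mk v₂‖ ≤ ‖J.mk r‖ * ‖star u‖ := by
    conv_lhs => rw [← hv₂]
    exact J.norm_mk_rightMul_le r _
  have hnorm : ‖star u‖ = 1 := CStarRing.norm_of_mem_unitary (Unitary.star_mem hu)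
  rw [hnorm, mul_one] at hrv
  calc ‖J.mk (star v₂ * v₂)‖ ≤ ‖J.mk (star r * r)‖ := by
        simp only [map_mul, map_star, CStarRing.norm_star_mul_self]
        gcongr
    _ ≤ ζ := (norm_le_norm_add_of_nonneg (hpos r) (hpos v₁)).trans (by rwa [add_comm])

/-- The inner ideal of all `e` that are killed on the left by the left annihilator of `b` and on
the right by the right annihilator of `p`. -/
def twoSidedBiannihilator (b p : A) : Submodule ℂ A where
  carrier := {e | (∀ r, p * r = 0 → e * r = 0) ∧ ∀ l, l * b = 0 → l * e = 0}
  zero_mem' := by simp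
  add_mem' ha hb := ⟨fun r hr => by rw [add_mul, ha.1 r hr, hb.1 r hr, add_zero],
    fun l hl => by rw [mul_add, ha.2 l hl, hb.2 l hl, add_zero]⟩
  smul_mem' c _ ha := ⟨fun r hr => by rw [smul_mul_assoc, ha.1 r hr, smul_zero],
    fun l hl => by rw [mul_smul_comm, ha.2 l hl, smul_zero]⟩

theorem isClosed_twoSidedBiannihilator (b p : A) :
    IsClosed (twoSidedBiannihilator b p : Set A) := by
  refine IsClosed.inter (s₁ := {e | ∀ r, p * r = 0 → e * r = 0})
    (s₂ := {e | ∀ l, l * b = 0 → l * e = 0}) ?_ ?_ <;>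
  · simp only [Set.ofPred_forall]
    exact isClosed_iInter fun r => isClosed_iInter fun _ =>
      isClosed_eq (by fun_prop) continuous_const

theorem isInnerIdeal_twoSidedBiannihilator (b p : A) :
    IsInnerIdeal (twoSidedBiannihilator b p) :=
  fun e he a f hf => ⟨fun r hr => by rw [mul_assoc, hf.1 r hr, mul_zero],
    fun l hl => by rw [mul_assoc, ← mul_assoc, he.2 l hl, zero_mul]⟩

theorem exists_mul_self_eq_zero_forall_mul_mul_mem_span [TopologicalSpace.SeparableSpace A]
    (hA : HasStableRankOne A) {b p : A} (hpb : p * b = 0) :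
    ∃ w, w * w = 0 ∧ ∀ u ∈ span {b}, ∀ v ∈ span {p}, ∀ a, u * a * v ∈ span {w} := by
  obtain ⟨w, hw, hsub⟩ := (isInnerIdeal_twoSidedBiannihilator b p).exists_subset_span_singleton hA
    (isClosed_twoSidedBiannihilator b p)
  refine ⟨w, hw.2 _ (hw.1 _ hpb), fun u hu v hv => mul_mul_mem_of_mem_span ?_ hu hv⟩
  rintro _ rfl _ rfl a
  exact hsub ⟨fun r hr => by rw [mul_assoc, hr, mul_zero],
    fun l hl => by rw [mul_assoc, ← mul_assoc, hl, zero_mul]⟩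

theorem exists_mul_self_eq_zero_norm_mk_lt [TopologicalSpace.SeparableSpace A]
    (hA : HasStableRankOne A) {x y : A} (hx : x * x = 0) (hy : y * y = 0) {ε : ℝ} (hε : 0 < ε) :
    ∃ w, w * w = 0 ∧ ‖(span {w}).mk x‖ < ε ∧ ‖(span {w}).mk y‖ < ε := by
  have hτ : 0 < ε ^ 2 / 4 := by positivity
  have hcut : ∀ v : A, ∃ c, cfcₙ (cutDown (ε ^ 2 / 4)) (v * star v) = star c * c := fun v =>
    CStarAlgebra.nonneg_iff_eq_star_mul_self.1 (cfcₙ_nonneg fun _ _ => cutDown_nonneg)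
  obtain ⟨v₁, hv₁⟩ := hcut x
  obtain ⟨v₂, hv₂⟩ := hcut y
  obtain ⟨w, hw, hxw, hyw⟩ := exists_mem_twoSidedAnnihilator_cutDown hA hx hy hτ
  rw [hv₁, hv₂] at hw
  obtain ⟨δ₁, hδ₁, hnear₁⟩ := exists_forall_norm_mk_lt_of_mem_span hxw hε
  obtain ⟨δ₂, hδ₂, hnear₂⟩ := exists_forall_norm_mk_lt_of_mem_span hyw hε
  have hδ : 0 < min δ₁ δ₂ := lt_min hδ₁ hδ₂
  have hσ : 0 < min δ₁ δ₂ ^ 2 / 2 := by positivity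
  obtain ⟨b, hpb, hb⟩ := exists_cutDown_mul_eq_zero_forall_norm_mk_le hA hw hσ hτ
  set p := cfcₙ (cutDown (min δ₁ δ₂ ^ 2 / 2)) (star w * w)
  obtain ⟨hb₁, hb₂⟩ := hb _ (mem_span_singleton_self b)
  have hmodb : ∀ {v c : A}, cfcₙ (cutDown (ε ^ 2 / 4)) (v * star v) = star c * c →
      ‖(span {b}).mk (star c * c)‖ ≤ ε ^ 2 / 4 → ‖(span {b}).mk v‖ < ε := fun {v c} hvc hc => by
    have hsq := (span {b}).norm_mk_sq_le (star v) hτ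
    rw [star_star, hvc, norm_mk_star] at hsq
    exact lt_of_pow_lt_pow_left₀ 2 hε.le (by linarith [pow_pos hε 2])
  have hmodp : ‖(span {p}).mk w‖ < min δ₁ δ₂ := by
    have hsq := (span {p}).norm_mk_sq_le w hσ
    rw [(span {p}).mk_eq_zero_iff.2 (mem_span_singleton_self p), norm_zero, add_zero] at hsq
    exact lt_of_pow_lt_pow_left₀ 2 hδ.le (hsq.trans_lt (half_lt_self (by positivity)))
  obtain ⟨w', hw', hprod⟩ := exists_mul_self_eq_zero_forall_mul_mul_mem_span hA hpb
  exact ⟨w', hw',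
    norm_mk_lt_of_mul_mul_mem hprod (hmodb hv₁ hb₁) (hnear₁ _ (hmodp.trans_le (min_le_left _ _))),
    norm_mk_lt_of_mul_mul_mem hprod (hmodb hv₂ hb₂) (hnear₂ _ (hmodp.trans_le (min_le_right _ _)))⟩

end

/-! ### Full square-zero elements -/

/-- `S` is full if it generates `A` as a closed two-sided ideal. -/
def IsFull {A : Type u} [NonUnitalCStarAlgebra A] (S : Set A) : Prop :=
  ∀ a, a ∈ ClosedIdeal.span S

namespace ClosedIdeal

variable {A : Type u} [NonUnitalCStarAlgebra A]

theorem exists_mem_norm_mk_lt_of_mem_span {S : Set A} (hne : S.Nonempty)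
    (hS : ∀ x ∈ S, ∀ y ∈ S, ∀ ε > 0, ∃ w ∈ S, ‖(span {w}).mk x‖ < ε ∧ ‖(span {w}).mk y‖ < ε)
    {c : A} (hc : c ∈ span S) {ε : ℝ} (hε : 0 < ε) : ∃ w ∈ S, ‖(span {w}).mk c‖ < ε := by
  have hdir : Directed (· ⊇ ·)
      fun i : S × Set.Ioi (0 : ℝ) => {w ∈ S | ‖(span {w}).mk (i.1 : A)‖ < i.2} := by
    rintro ⟨⟨x, hx⟩, ⟨δ, hδ⟩⟩ ⟨⟨y, hy⟩, ⟨δ', hδ'⟩⟩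
    obtain ⟨v, hv, hvx, hvy⟩ := hS x hx y hy (min δ δ') (lt_min hδ hδ')
    obtain ⟨η, hη, hηx⟩ := exists_forall_norm_mk_lt (hvx.trans_le (min_le_left _ _))
    obtain ⟨η', hη', hηy⟩ := exists_forall_norm_mk_lt (hvy.trans_le (min_le_right _ _))
    exact ⟨⟨⟨v, hv⟩, ⟨min η η', lt_min hη hη'⟩⟩,
      fun w hw => ⟨hw.1, hηx _ (hw.2.trans_le (min_le_left _ _))⟩,
      fun w hw => ⟨hw.1, hηy _ (hw.2.trans_le (min_le_right _ _))⟩⟩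
  let l : Filter A := ⨅ i : S × Set.Ioi (0 : ℝ), 𝓟 {w ∈ S | ‖(span {w}).mk (i.1 : A)‖ < i.2}
  have hmem (x : S) {δ : ℝ} (hδ : 0 < δ) : {w ∈ S | ‖(span {w}).mk (x : A)‖ < δ} ∈ l :=
    mem_iInf_of_mem (x, ⟨δ, hδ⟩) (mem_principal_self _)
  have : Nonempty (S × Set.Ioi (0 : ℝ)) := ⟨⟨_, hne.some_mem⟩, 1, Set.mem_Ioi.2 one_pos⟩
  have hl : l.NeBot := by
    refine iInf_neBot_of_directed' (hdir.mono_comp _ (rb := (· ≥ ·)) fun _ _ => principal_mono.2)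
      fun i => principal_neBot_iff.2 ?_
    obtain ⟨w, hw, hlt, -⟩ := hS i.1 i.1.2 i.1 i.1.2 i.2 i.2.2
    exact ⟨w, hw, hlt⟩
  have hlim : S ⊆ limit l fun w => span {w} := fun x hx =>
    mem_limit.2 <| Metric.tendsto_nhds.2 fun δ hδ => by
      filter_upwards [hmem ⟨x, hx⟩ hδ] with w hw
      simpa using hw.2
  have hlt := Metric.tendsto_nhds.1 (mem_limit.1 (span_le hlim hc)) ε hε
  obtain ⟨w, hw, hwS, -⟩ := (hlt.and (hmem ⟨_, hne.some_mem⟩ one_pos)).exists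
  exact ⟨w, hwS, by simpa using hw⟩

end ClosedIdeal

namespace HereditarySubalgebra

open ClosedIdeal

variable {A : Type u} [NonUnitalCStarAlgebra A] (D : HereditarySubalgebra A)

theorem norm_mk_span_singleton_coe_le (w x : D) :
    ‖(span {(w : A)}).mk (x : A)‖ ≤ ‖(span {w}).mk x‖ := by
  refine le_of_forall_gt_imp_ge_of_dense fun r hr => ?_
  obtain ⟨j, hj, hlt⟩ := exists_mem_norm_sub_lt _ hr
  have hw : w ∈ (span {(w : A)}).comap (NonUnitalStarSubalgebraClass.subtype D) :=
    mem_span_singleton_self (w : A)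
  have hjA : (j : A) ∈ span {(w : A)} := span_singleton_le hw hj
  exact (norm_mk_le_norm_sub _ hjA).trans hlt.le

theorem exists_mul_self_eq_zero_norm_mk_lt_of_mem_span [TopologicalSpace.SeparableSpace A]
    (hA : HasStableRankOne A) {c : A} (hc : c ∈ span {w | w ∈ D ∧ w * w = 0}) {ε : ℝ}
    (hε : 0 < ε) : ∃ w ∈ D, w * w = 0 ∧ ‖(span {w}).mk c‖ < ε := by
  have hdir : ∀ x ∈ {w | w ∈ D ∧ w * w = 0}, ∀ y ∈ {w | w ∈ D ∧ w * w = 0}, ∀ ε > 0,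
      ∃ w ∈ {w | w ∈ D ∧ w * w = 0}, ‖(span {w}).mk x‖ < ε ∧ ‖(span {w}).mk y‖ < ε := by
    rintro x ⟨hxD, hx⟩ y ⟨hyD, hy⟩ ε hε
    lift x to D using hxD
    lift y to D using hyD
    obtain ⟨w, hw, hwx, hwy⟩ := exists_mul_self_eq_zero_norm_mk_lt (D.hasStableRankOne hA)
      (x := x) (y := y) (Subtype.ext hx) (Subtype.ext hy) hε
    exact ⟨w, ⟨w.2, congrArg Subtype.val hw⟩, (D.norm_mk_span_singleton_coe_le w x).trans_lt hwx,
      (D.norm_mk_span_singleton_coe_le w y).trans_lt hwy⟩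
  obtain ⟨w, ⟨hwD, hw⟩, hlt⟩ :=
    exists_mem_norm_mk_lt_of_mem_span (S := {w | w ∈ D ∧ w * w = 0})
      ⟨0, zero_mem D, mul_zero 0⟩ hdir hc hε
  exact ⟨w, hwD, hw, hlt⟩

end HereditarySubalgebra

/-! ### Prime ideals -/

namespace ClosedIdeal

variable {A : Type u} [NonUnitalCStarAlgebra A]

/-- Primeness of a closed ideal in terms of elements. The improper ideal is not excluded. -/
def IsPrime (P : ClosedIdeal A) : Prop := ∀ ⦃a b : A⦄, (∀ z, a * z * b ∈ P) → a ∈ P ∨ b ∈ P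

theorem le_norm_mk_limit {ι : Type*} {l : Filter ι} [l.NeBot] {F : ι → ClosedIdeal A} {a : A}
    {r : ℝ} (h : ∀ i, r ≤ ‖(F i).mk a‖) : r ≤ ‖(limit l F).mk a‖ := by
  refine le_of_forall_gt_imp_ge_of_dense fun s hs => ?_
  obtain ⟨j, hj, hlt⟩ := (limit l F).exists_mem_norm_sub_lt hs
  have htend : Tendsto (fun i => ‖a - j‖ + ‖(F i).mk j‖) l (𝓝 (‖a - j‖ + 0)) :=
    (mem_limit.1 hj).const_add _
  rw [add_zero] at htend
  exact (ge_of_tendsto' htend fun i => (h i).trans ((F i).norm_mk_le_add a j)).trans hlt.le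

theorem exists_le_maximal_le_norm_mk (I : ClosedIdeal A) (a : A) :
    ∃ P, I ≤ P ∧ Maximal (fun K : ClosedIdeal A => ‖I.mk a‖ ≤ ‖K.mk a‖) P := by
  refine zorn_le_nonempty₀ {K : ClosedIdeal A | ‖I.mk a‖ ≤ ‖K.mk a‖}
    (fun c hc hchain J hJ => ?_) I (le_refl ‖I.mk a‖)
  have : Nonempty c := ⟨⟨J, hJ⟩⟩
  have : IsDirectedOrder c := ⟨hchain.directed⟩
  refine ⟨limit atTop (Subtype.val : c → ClosedIdeal A), le_norm_mk_limit fun i => hc i.2, ?_⟩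
  refine fun K hK x hx => mem_limit.2 (tendsto_const_nhds.congr' ?_)
  filter_upwards [eventually_ge_atTop (⟨K, hK⟩ : c)] with i hi
  rw [(mk_eq_zero_iff _).2 (hi hx), norm_zero]

theorem exists_le_isPrime_notMem {I : ClosedIdeal A} {a : A} (ha : a ∉ I) :
    ∃ P : ClosedIdeal A, I ≤ P ∧ P.IsPrime ∧ a ∉ P := by
  obtain ⟨P, hIP, hP⟩ := I.exists_le_maximal_le_norm_mk a
  have hpos : 0 < ‖I.mk a‖ := norm_pos_iff.2 (mt I.mk_eq_zero_iff.1 ha)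
  refine ⟨P, hIP, fun x y hxy => ?_, fun haP => ?_⟩
  · have hlt (z : A) (hz : z ∉ P) : ‖(span ((P : Set A) ∪ {z})).mk a‖ < ‖I.mk a‖ := by
      by_contra! hle
      refine hz (hP.le_of_ge hle (fun p hp => subset_span _ (.inl hp)) (subset_span _ (.inr rfl)))
    by_contra! hnot
    refine (norm_mk_lt_of_mul_mul_mem (fun k hk l hl z => ?_) (hlt x hnot.1)
      (hlt y hnot.2)).not_ge hP.prop
    refine mul_mul_mem_of_mem_span ?_ hk hl z
    rintro s (hs | rfl) t (ht | rfl) z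
    · exact P.mul_mem_left _ ht
    · exact P.mul_mem_right _ (P.mul_mem_right _ hs)
    · exact P.mul_mem_left _ ht
    · exact hxy z
  · exact hpos.not_ge (by simpa [P.mk_eq_zero_iff.2 haP] using hP.prop)

end ClosedIdeal

/-! ### Minimal projections -/

/-- A minimal projection, in the sense that `p` is a nonzero projection with `p Q p = ℂ p`. -/
structure IsMinimalProjection {Q : Type u} [NonUnitalCStarAlgebra Q] (p : Q) : Prop extends
    IsStarProjection p where
  ne_zero : p ≠ 0
  exists_mul_mul_eq_smul : ∀ x, ∃ c : ℂ, p * x * p = c • p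

section Scalars

variable {B Q : Type u} [NonUnitalCStarAlgebra B] [NonUnitalCStarAlgebra Q]

theorem mul_norm_le_norm_of_smul_le {d h : Q} (hh : 0 ≤ h) {t : ℝ} (ht : 0 ≤ t) (hle : t • h ≤ d) :
    t * ‖h‖ ≤ ‖d‖ := by
  have := CStarAlgebra.norm_le_norm_of_nonneg_of_le (smul_nonneg ht hh) hle
  rwa [norm_smul, Real.norm_of_nonneg ht] at this

theorem exists_eq_smul_of_forall_smul_le_or_le {d h : Q} (hh : 0 ≤ h) (hne : h ≠ 0)
    (hcomp : ∀ t : ℝ, t • h ≤ d ∨ d ≤ t • h) : ∃ t : ℝ, d = t • h := by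
  have hpos : 0 < ‖h‖ := norm_pos_iff.2 hne
  have hcont : Continuous fun t : ℝ => t • h := by fun_prop
  obtain ⟨N, hN, hlarge⟩ : ∃ N : ℝ, 0 ≤ N ∧ ‖d‖ < N * ‖h‖ :=
    ⟨(‖d‖ + 1) / ‖h‖, by positivity, by rw [div_mul_cancel₀ _ hpos.ne']; exact lt_add_one _⟩
  have hupper : d ≤ N • h :=
    (hcomp N).resolve_left fun hle => (mul_norm_le_norm_of_smul_le hh hN hle).not_gt hlarge
  have hlower : (-N) • h ≤ d := by
    refine (hcomp (-N)).resolve_right fun hle => ?_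
    have hle' : N • h ≤ -d := by rwa [le_neg, ← neg_smul]
    exact (mul_norm_le_norm_of_smul_le hh hN hle').not_gt (by rwa [norm_neg])
  obtain ⟨t, -, hle, hge⟩ := isPreconnected_closed_iff.1 (isPreconnected_univ (α := ℝ)) _ _
    (isClosed_le hcont continuous_const) (isClosed_le continuous_const hcont)
    (fun t _ => hcomp t) ⟨-N, trivial, hlower⟩ ⟨N, trivial, hupper⟩
  exact ⟨t, le_antisymm hge hle⟩

variable {ψ : B →⋆ₙₐ[ℂ] Q} (hψ : ∀ x y : B, x * y = 0 → ψ x = 0 ∨ ψ y = 0)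
include hψ

theorem map_nonneg_or_nonpos {s : B} (hs : IsSelfAdjoint s) : 0 ≤ ψ s ∨ ψ s ≤ 0 := by
  rw [← CFC.posPart_sub_negPart s hs, map_sub, sub_nonneg, sub_nonpos]
  rcases hψ _ _ (CFC.posPart_mul_negPart s) with hpos | hneg
  · rw [hpos]
    exact .inr (map_nonneg ψ (CFC.negPart_nonneg s))
  · rw [hneg]
    exact .inl (map_nonneg ψ (CFC.posPart_nonneg s))

theorem exists_map_eq_smul {x : B} (hx : ψ x ≠ 0) (b : B) :
    ∃ c : ℂ, ψ b = c • ψ (star x * x) := by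
  have hne : ψ (star x * x) ≠ 0 := by
    rwa [map_mul, map_star, Ne, CStarRing.star_mul_self_eq_zero_iff]
  have hreal (s : B) (hs : IsSelfAdjoint s) : ∃ c : ℂ, ψ s = c • ψ (star x * x) := by
    obtain ⟨t, ht⟩ := exists_eq_smul_of_forall_smul_le_or_le (d := ψ s)
      (map_nonneg ψ (star_mul_self_nonneg x)) hne fun t => by
        have hsa : IsSelfAdjoint (s - t • (star x * x)) :=
          hs.sub (.smul (.all t) (.star_mul_self x))
        have := map_nonneg_or_nonpos hψ hsa
        rwa [map_sub, ← Complex.coe_smul, map_smul, Complex.coe_smul, sub_nonneg,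
          sub_nonpos] at this
    exact ⟨t, by rw [ht, Complex.coe_smul]⟩
  obtain ⟨c, hc⟩ := hreal (realPart b) (realPart b).2
  obtain ⟨d, hd⟩ := hreal (imaginaryPart b) (imaginaryPart b).2
  refine ⟨c + Complex.I * d, ?_⟩
  conv_lhs => rw [← realPart_add_I_smul_imaginaryPart b]
  rw [map_add, map_smul, hc, hd, smul_smul, ← add_smul]

end Scalars

theorem exists_isMinimalProjection_smul {Q : Type u} [NonUnitalCStarAlgebra Q] {h : Q}
    (hh : IsSelfAdjoint h) (hne : h ≠ 0) (hsq : ∃ c : ℂ, h * h = c • h)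
    (hscalar : ∀ x, ∃ c : ℂ, h * x * h = c • h) :
    ∃ c : ℂ, c ≠ 0 ∧ IsMinimalProjection (c • h) := by
  obtain ⟨c, hc⟩ := hsq
  have hhh : h * h ≠ 0 := by
    rw [Ne, ← CStarRing.star_mul_self_eq_zero_iff, hh.star_eq] at hne
    exact hne
  have hc0 : c ≠ 0 := by rintro rfl; exact hhh (by rw [hc, zero_smul])
  have hcreal : star c = c := by
    have := congrArg star hc
    rw [star_mul, star_smul, hh.star_eq, hc] at this
    exact (smul_left_injective ℂ hne this).symm
  refine ⟨c⁻¹, inv_ne_zero hc0, ⟨?_, ?_⟩, smul_ne_zero (inv_ne_zero hc0) hne, fun x => ?_⟩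
  · rw [IsIdempotentElem, smul_mul_smul_comm, hc, smul_smul, inv_mul_cancel_right₀ hc0]
  · exact .smul (show star c⁻¹ = c⁻¹ by rw [star_inv₀, hcreal]) hh
  · obtain ⟨d, hd⟩ := hscalar x
    refine ⟨c⁻¹ * d, ?_⟩
    rw [smul_mul_assoc, smul_mul_smul_comm, hd, smul_smul, smul_smul]
    ring_nf

namespace HereditarySubalgebra

open ClosedIdeal

variable {A : Type u} [NonUnitalCStarAlgebra A] (D : HereditarySubalgebra A)

theorem mem_or_mem_of_mul_eq_zero {P : ClosedIdeal A} (hP : P.IsPrime)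
    (hsq : ∀ w ∈ D, w * w = 0 → w ∈ P) {x y : A} (hx : x ∈ D) (hy : y ∈ D) (hxy : x * y = 0) :
    x ∈ P ∨ y ∈ P := by
  refine (hP fun z => hsq _ (D.mul_mul_mem hy z hx) ?_).symm
  calc y * z * x * (y * z * x) = y * z * (x * y) * z * x := by simp only [mul_assoc]
    _ = 0 := by rw [hxy]; simp

theorem exists_isMinimalProjection_isFull (hD : IsFull (D : Set A)) {I : ClosedIdeal A}
    (hsq : ∀ w ∈ D, w * w = 0 → w ∈ I) {a : A} (ha : a ∉ I) :
    ∃ (P : ClosedIdeal A) (p : P.Quotient), IsMinimalProjection p ∧ IsFull {p} := by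
  obtain ⟨y, hyD, hyI⟩ : ∃ y ∈ D, y ∉ I := Set.not_subset.1 fun h => ha (span_le h (hD a))
  obtain ⟨P, hIP, hP, hyP⟩ := exists_le_isPrime_notMem hyI
  let ψ : D →⋆ₙₐ[ℂ] P.Quotient := P.mk.comp (NonUnitalStarSubalgebraClass.subtype D)
  have hψ (u v : D) (huv : u * v = 0) : ψ u = 0 ∨ ψ v = 0 := by
    have := D.mem_or_mem_of_mul_eq_zero hP (fun w hw hw0 => hIP (hsq w hw hw0)) u.2 v.2
      (congrArg Subtype.val huv)
    rwa [← P.mk_eq_zero_iff, ← P.mk_eq_zero_iff] at this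
  lift y to D using hyD
  have hscalar := exists_map_eq_smul hψ (mt P.mk_eq_zero_iff.1 hyP : ψ y ≠ 0)
  set h := star y * y
  have hne : ψ h ≠ 0 := mt P.mk_eq_zero_iff.1 (mt P.star_mul_self_mem_iff.1 hyP)
  obtain ⟨c, hc, hmin⟩ := exists_isMinimalProjection_smul
    ((IsSelfAdjoint.star_mul_self y).map ψ) hne (by rw [← map_mul]; exact hscalar (h * h))
    (P.mk_surjective.forall.2 fun z => hscalar ⟨h * z * h, D.mul_mul_mem h.2 z h.2⟩)
  refine ⟨P, c • ψ h, hmin, P.mk_surjective.forall.2 fun z => ?_⟩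
  suffices (D : Set A) ⊆ (span {c • ψ h}).comap P.mk from span_le this (hD z)
  intro d hd
  obtain ⟨b, hb⟩ := hscalar ⟨d, hd⟩
  have hmem := SMulMemClass.smul_mem (b * c⁻¹) (mem_span_singleton_self (c • ψ h))
  rw [smul_smul, inv_mul_cancel_right₀ hc, ← hb] at hmem
  exact hmem

end HereditarySubalgebra

/-! ### Elementary quotients -/

theorem norm_sub_starProjection_comp_le {H : Type*} [NormedAddCommGroup H] [InnerProductSpace ℂ H]
    {T : H →L[ℂ] H} {F : Submodule ℂ H} [F.HasOrthogonalProjection] {ε : ℝ} (hε : 0 ≤ ε)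
    (hF : ∀ x, ‖x‖ ≤ 1 → ∃ y ∈ F, ‖T x - y‖ ≤ ε) : ‖T - F.starProjection ∘L T‖ ≤ ε := by
  refine ContinuousLinearMap.opNorm_le_of_unit_norm hε fun x hx => ?_
  obtain ⟨y, hy, hle⟩ := hF x hx.le
  calc ‖T x - F.starProjection (T x)‖ ≤ ‖T x - y‖ := by
        rw [Submodule.starProjection_minimal]
        exact ciInf_le ⟨0, by rintro _ ⟨z, rfl⟩; exact norm_nonneg _⟩ (⟨y, hy⟩ : F)
    _ ≤ ε := hle

theorem mem_of_isCompactOperator_of_forall_rankOne_mem {H : Type*} [NormedAddCommGroup H]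
    [InnerProductSpace ℂ H] [CompleteSpace H] {R : AddSubmonoid (H →L[ℂ] H)}
    (hclosed : IsClosed (R : Set (H →L[ℂ] H)))
    (hR : ∀ x y : H, InnerProductSpace.rankOne ℂ x y ∈ R) {T : H →L[ℂ] H}
    (hT : IsCompactOperator T) : T ∈ R := by
  rw [← SetLike.mem_coe, ← hclosed.closure_eq, Metric.mem_closure_iff]
  intro ε hε
  have hcompact := hT.isCompact_closure_image_closedBall (f := (T : H →ₗ[ℂ] H)) (r := 1)
  obtain ⟨t, htfin, ht⟩ := Metric.totallyBounded_iff.1 hcompact.totallyBounded (ε / 2) (half_pos hε)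
  let F : Submodule ℂ H := Submodule.span ℂ t
  have : FiniteDimensional ℂ F := FiniteDimensional.span_of_finite ℂ htfin
  let b := stdOrthonormalBasis ℂ F
  have hfinrank : F.starProjection ∘L T =
      ∑ i, InnerProductSpace.rankOne ℂ (b i : H) (ContinuousLinearMap.adjoint T (b i : H)) := by
    rw [b.starProjection_eq_sum_rankOne]
    ext x
    simp [ContinuousLinearMap.adjoint_inner_left]
  refine ⟨F.starProjection ∘L T, ?_, ?_⟩
  · rw [hfinrank]
    exact sum_mem fun i _ => hR _ _
  · rw [dist_eq_norm]
    refine (norm_sub_starProjection_comp_le (half_pos hε).le fun x hx => ?_).trans_lt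
      (half_lt_self hε)
    have hTx : T x ∈ closure ((T : H →ₗ[ℂ] H) '' Metric.closedBall 0 1) :=
      subset_closure ⟨x, by simpa using hx, rfl⟩
    obtain ⟨y, hy, hxy⟩ := Set.mem_iUnion₂.1 (ht hTx)
    exact ⟨y, Submodule.subset_span hy, (dist_eq_norm (T x) y ▸ Metric.mem_ball.1 hxy).le⟩

theorem isCompactOperator_rankOne {H : Type*} [NormedAddCommGroup H] [InnerProductSpace ℂ H]
    (x y : H) : IsCompactOperator (InnerProductSpace.rankOne ℂ x y) := by
  rw [InnerProductSpace.rankOne_def']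
  exact (isCompactOperator_of_locallyCompactSpace_rng
    (ContinuousLinearMap.toSpanSingleton ℂ x)).comp_clm _

section

variable {Q : Type u} [NonUnitalCStarAlgebra Q]

instance : Bot (ClosedIdeal Q) where
  bot :=
    { (⊥ : Submodule ℂ Q) with
      isClosed' := isClosed_singleton
      mul_mem_left' := by rintro a _ rfl; exact mul_zero a
      mul_mem_right' := by rintro a _ rfl; exact zero_mul a }

/-- The left ideal `Q p` of a projection `p`. When `p` is minimal it is a Hilbert space, with
`star x * y = ⟪x, y⟫ • p`, on which `Q` acts by left multiplication. -/
def leftIdeal (p : Q) : Submodule ℂ Q where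
  carrier := {x | x * p = x}
  zero_mem' := zero_mul p
  add_mem' {a b} (ha : a * p = a) (hb : b * p = b) :=
    show (a + b) * p = a + b by rw [add_mul, ha, hb]
  smul_mem' c a (ha : a * p = a) := show (c • a) * p = c • a by rw [smul_mul_assoc, ha]

section MinimalProjection

variable {p : Q}

instance : IsClosed (leftIdeal p : Set Q) :=
  isClosed_eq (f := fun x => x * p) (by fun_prop) continuous_id

theorem coe_mul_self (x : leftIdeal p) : (x : Q) * p = x := x.2

variable [hp : Fact (IsMinimalProjection p)]

theorem self_mem_leftIdeal : p ∈ leftIdeal p := hp.out.isIdempotentElem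

theorem smul_self_injective : Function.Injective fun c : ℂ => c • p :=
  smul_left_injective ℂ hp.out.ne_zero

theorem exists_star_mul_eq_smul (x y : leftIdeal p) : ∃ c : ℂ, star (x : Q) * y = c • p := by
  obtain ⟨c, hc⟩ := hp.out.exists_mul_mul_eq_smul (star (x : Q) * y)
  refine ⟨c, ?_⟩
  rw [← hc, ← coe_mul_self x, ← coe_mul_self y, star_mul, hp.out.isSelfAdjoint.star_eq]
  simp only [mul_assoc, hp.out.isIdempotentElem.eq]
  simp only [← mul_assoc, hp.out.isIdempotentElem.eq]

theorem norm_minimalProjection : ‖p‖ = 1 := by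
  have : ‖p‖ * ‖p‖ = ‖p‖ * 1 := by
    rw [← CStarRing.norm_star_mul_self, hp.out.isSelfAdjoint.star_eq,
      hp.out.isIdempotentElem.eq, mul_one]
  exact mul_left_cancel₀ (norm_ne_zero_iff.2 hp.out.ne_zero) this

theorem nonneg_of_smul_nonneg {r : ℝ} (h : 0 ≤ r • p) : 0 ≤ r := by
  by_contra! hr
  have hpos : 0 ≤ p := hp.out.toIsStarProjection.nonneg
  have : r • p = 0 := le_antisymm (smul_nonpos_of_nonpos_of_nonneg hr.le hpos) h
  exact (smul_ne_zero hr.ne hp.out.ne_zero) this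

theorem norm_sq_eq_re_of_star_mul_self_eq_smul {x : leftIdeal p} {c : ℂ}
    (h : star (x : Q) * x = c • p) : ‖x‖ ^ 2 = c.re := by
  have hconj : star c = c := by
    have := congrArg star h
    rw [star_mul, star_star, star_smul, hp.out.isSelfAdjoint.star_eq, h] at this
    exact (smul_self_injective this).symm
  obtain ⟨r, rfl⟩ : ∃ r : ℝ, c = r := Complex.conj_eq_iff_real.1 hconj
  have hr : 0 ≤ r := by
    refine nonneg_of_smul_nonneg (p := p) ?_
    rw [← Complex.coe_smul, ← h]
    exact star_mul_self_nonneg _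
  calc ‖x‖ ^ 2 = ‖star (x : Q) * x‖ := by rw [CStarRing.norm_star_mul_self, sq, Submodule.coe_norm]
    _ = r := by 
        rw [h, norm_smul, norm_minimalProjection (p := p), mul_one, Complex.norm_of_nonneg hr]

noncomputable instance : InnerProductSpace ℂ (leftIdeal p) where
  inner x y := (exists_star_mul_eq_smul x y).choose
  norm_sq_eq_re_inner x :=
    norm_sq_eq_re_of_star_mul_self_eq_smul (exists_star_mul_eq_smul x x).choose_spec
  conj_inner_symm x y := smul_self_injective (p := p) <| by
    have := congrArg star (exists_star_mul_eq_smul y x).choose_spec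
    rw [star_mul, star_star, star_smul, hp.out.isSelfAdjoint.star_eq] at this
    exact this.symm.trans (exists_star_mul_eq_smul x y).choose_spec
  add_left x y z := smul_self_injective (p := p) <| by
    dsimp only
    rw [add_smul, ← (exists_star_mul_eq_smul x z).choose_spec,
      ← (exists_star_mul_eq_smul y z).choose_spec,
      ← (exists_star_mul_eq_smul (x + y) z).choose_spec, Submodule.coe_add, star_add, add_mul]
  smul_left x y c := smul_self_injective (p := p) <| by
    dsimp only
    rw [mul_smul, ← (exists_star_mul_eq_smul x y).choose_spec,
      ← (exists_star_mul_eq_smul (c • x) y).choose_spec, Submodule.coe_smul, star_smul,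
      smul_mul_assoc, starRingEnd_apply]

theorem star_mul_eq_inner_smul (x y : leftIdeal p) : star (x : Q) * y = inner ℂ x y • p :=
  (exists_star_mul_eq_smul x y).choose_spec

variable (p) in
/-- The representation of `Q` on the Hilbert space `Q p` by left multiplication. -/
noncomputable def leftRegular : Q →⋆ₙₐ[ℂ] (leftIdeal p →L[ℂ] leftIdeal p) where
  toFun a := (ContinuousLinearMap.mul ℂ Q a ∘L (leftIdeal p).subtypeL).codRestrict (leftIdeal p)
    fun x => show a * x * p = a * x by rw [mul_assoc, coe_mul_self]
  map_smul' c a := by ext x; exact smul_mul_assoc c a (x : Q)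
  map_zero' := by ext x; exact zero_mul (x : Q)
  map_add' a b := by ext x; exact add_mul a b (x : Q)
  map_mul' a b := by ext x; exact mul_assoc a b (x : Q)
  map_star' a := by
    rw [ContinuousLinearMap.star_eq_adjoint, ContinuousLinearMap.eq_adjoint_iff]
    refine fun x y => smul_self_injective (p := p) ?_
    dsimp only
    rw [← star_mul_eq_inner_smul, ← star_mul_eq_inner_smul]
    change star (star a * (x : Q)) * y = star (x : Q) * (a * y)
    rw [star_mul, star_star, mul_assoc]

theorem coe_leftRegular_apply (a : Q) (x : leftIdeal p) : (leftRegular p a x : Q) = a * x := rfl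

theorem leftRegular_mul_star (x y : leftIdeal p) :
    leftRegular p (x * star (y : Q)) = InnerProductSpace.rankOne ℂ x y := by
  ext z
  rw [coe_leftRegular_apply, mul_assoc, star_mul_eq_inner_smul, mul_smul_comm, coe_mul_self,
    InnerProductSpace.rankOne_apply, Submodule.coe_smul]

/-- The ideal of elements acting on the Hilbert space by compact operators. -/
def compactPreimage {H : Type*} [NormedAddCommGroup H] [InnerProductSpace ℂ H] [CompleteSpace H]
    (φ : Q →⋆ₙₐ[ℂ] (H →L[ℂ] H)) : ClosedIdeal Q where
  carrier := {a | IsCompactOperator (φ a)}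
  zero_mem' := by
    rw [Set.mem_ofPred_eq, map_zero]
    exact isCompactOperator_zero
  add_mem' ha hb := by
    rw [Set.mem_ofPred_eq, map_add]
    exact IsCompactOperator.add ha hb
  smul_mem' c a ha := by
    rw [Set.mem_ofPred_eq, map_smul]
    exact IsCompactOperator.smul ha c
  isClosed' := isClosed_setOfPred_isCompactOperator.preimage (map_continuous φ)
  mul_mem_left' a x hx := by
    rw [Set.mem_ofPred_eq, map_mul]
    exact IsCompactOperator.clm_comp hx (φ a)
  mul_mem_right' a x hx := by
    rw [Set.mem_ofPred_eq, map_mul]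
    exact IsCompactOperator.comp_clm hx (φ a)

theorem isCompactOperator_leftRegular (hfull : IsFull {p}) (a : Q) :
    IsCompactOperator (leftRegular p a) := by
  have hmem : p ∈ compactPreimage (leftRegular p) := by
    have := leftRegular_mul_star (⟨p, self_mem_leftIdeal⟩ : leftIdeal p) ⟨p, self_mem_leftIdeal⟩
    rw [hp.out.isSelfAdjoint.star_eq, hp.out.isIdempotentElem.eq] at this
    change IsCompactOperator (leftRegular p p)
    rw [this]
    exact isCompactOperator_rankOne _ _
  exact ClosedIdeal.span_singleton_le hmem (hfull a)

theorem leftRegular_injective (hfull : IsFull {p}) : Function.Injective (leftRegular p) := by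
  rw [injective_iff_map_eq_zero]
  intro x hx
  have hmem : p ∈ (⊥ : ClosedIdeal Q).rightColon {x} := by
    rintro a _ rfl
    have := congrArg Subtype.val (DFunLike.congr_fun hx (leftRegular p a ⟨p, self_mem_leftIdeal⟩))
    rw [mul_assoc]
    exact this
  have hcube : x * star x * x ∈ (⊥ : ClosedIdeal Q) :=
    ClosedIdeal.span_singleton_le hmem (hfull x) (star x) x rfl
  exact (⊥ : ClosedIdeal Q).mem_of_mul_star_mul_mem hcube

theorem range_leftRegular (hfull : IsFull {p}) :
    Set.range (leftRegular p) =
      {T : leftIdeal p →L[ℂ] leftIdeal p | IsCompactOperator T} := by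
  refine Set.Subset.antisymm
    (Set.range_subset_iff.2 (isCompactOperator_leftRegular hfull)) fun T hT => ?_
  have hclosed : IsClosed (Set.range (leftRegular p)) :=
    (NonUnitalStarAlgHom.isometry _ (leftRegular_injective hfull)).isClosedEmbedding.isClosed_range
  exact mem_of_isCompactOperator_of_forall_rankOne_mem
    (R := AddMonoidHom.mrange (leftRegular p : Q →+ (leftIdeal p →L[ℂ] leftIdeal p))) hclosed
    (fun x y => ⟨_, leftRegular_mul_star x y⟩) hT

end MinimalProjection

/-- `A` has no quotient isomorphic to the algebra of compact operators on a nonzero Hilbert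
space. -/
def HasNoElementaryQuotient (A : Type u) [NonUnitalCStarAlgebra A] : Prop :=
  ∀ (H : Type u) [NormedAddCommGroup H] [InnerProductSpace ℂ H] [CompleteSpace H],
    Nontrivial H → ∀ φ : A →⋆ₙₐ[ℂ] (H →L[ℂ] H),
      Set.range φ ≠ {T : H →L[ℂ] H | IsCompactOperator T}

theorem HereditarySubalgebra.isFull_setOf_mul_self_eq_zero {A : Type u} [NonUnitalCStarAlgebra A]
    (hA : HasNoElementaryQuotient A) {D : HereditarySubalgebra A} (hD : IsFull (D : Set A)) :
    IsFull {w | w ∈ D ∧ w * w = 0} := by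
  by_contra! hnot
  obtain ⟨a, ha⟩ := not_forall.1 hnot
  obtain ⟨P, p, hmin, hfull⟩ := D.exists_isMinimalProjection_isFull hD
    (I := .span {w | w ∈ D ∧ w * w = 0}) (fun w hw hw0 => ClosedIdeal.subset_span _ ⟨hw, hw0⟩) ha
  have : Fact (IsMinimalProjection p) := ⟨hmin⟩
  have : Nontrivial (leftIdeal p) :=
    ⟨⟨p, self_mem_leftIdeal⟩, 0, fun h => hmin.ne_zero (congrArg Subtype.val h)⟩
  refine hA (leftIdeal p) this ((leftRegular p).comp P.mk) ?_
  rw [← range_leftRegular hfull, NonUnitalStarAlgHom.coe_comp, P.mk_surjective.range_comp]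

end

/-! ### Orthogonal full elements -/

namespace HereditarySubalgebra

open ClosedIdeal

variable {A : Type u} [NonUnitalCStarAlgebra A]

instance : Top (HereditarySubalgebra A) where
  top :=
    { (⊤ : NonUnitalStarSubalgebra ℂ A) with
      isClosed' := isClosed_univ
      mul_mul_mem' := fun _ _ _ _ _ => trivial }

theorem isFull_top : IsFull ((⊤ : HereditarySubalgebra A) : Set A) :=
  fun _ => subset_span _ trivial

variable (D : HereditarySubalgebra A)

/-- The elements of `D` orthogonal to the self-adjoint element `s`. -/
def orthogonal (s : A) (hs : IsSelfAdjoint s) : HereditarySubalgebra A where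
  carrier := {d | d ∈ D ∧ d * s = 0 ∧ s * d = 0}
  add_mem' := fun ⟨ha, has, hsa⟩ ⟨hb, hbs, hsb⟩ =>
    ⟨add_mem ha hb, by rw [add_mul, has, hbs, add_zero], by rw [mul_add, hsa, hsb, add_zero]⟩
  zero_mem' := ⟨zero_mem _, zero_mul _, mul_zero _⟩
  mul_mem' := fun ⟨ha, _, hsa⟩ ⟨hb, hbs, _⟩ =>
    ⟨mul_mem ha hb, by rw [mul_assoc, hbs, mul_zero], by rw [← mul_assoc, hsa, zero_mul]⟩
  smul_mem' := fun c _ ⟨ha, has, hsa⟩ => ⟨SMulMemClass.smul_mem c ha,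
    by rw [smul_mul_assoc, has, smul_zero], by rw [mul_smul_comm, hsa, smul_zero]⟩
  star_mem' := fun {a} ⟨ha, has, hsa⟩ => ⟨star_mem ha,
    by simpa [hs.star_eq] using congrArg star hsa, by simpa [hs.star_eq] using congrArg star has⟩
  isClosed' := D.isClosed.inter <|
    (isClosed_eq (continuous_id.mul continuous_const) continuous_const).inter
      (isClosed_eq (continuous_const.mul continuous_id) continuous_const)
  mul_mul_mem' := fun _ ⟨hx, _, hsx⟩ a _ ⟨hy, hys, _⟩ => ⟨D.mul_mul_mem hx a hy,
    by rw [mul_assoc, hys, mul_zero], by rw [← mul_assoc, ← mul_assoc, hsx, zero_mul, zero_mul]⟩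

section

variable {p : A} (hp : p ∈ D) (hsa : IsSelfAdjoint p) {τ : ℝ} (hτ : 0 < τ)
include hp hsa hτ

theorem cfcₙ_approxOne_mul_mem {d : A} (hd : d ∈ D) : cfcₙ (approxOne τ) p * d ∈ D := by
  rw [cfcₙ_approxOne_eq_mul hsa hτ]
  exact D.mul_mul_mem hp _ hd

theorem mul_cfcₙ_approxOne_mem {d : A} (hd : d ∈ D) : d * cfcₙ (approxOne τ) p ∈ D := by
  rw [cfcₙ_approxOne_eq_mul' hsa hτ, ← mul_assoc]
  exact D.mul_mul_mem hd _ hp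

theorem cfcₙ_cutDown_mem : cfcₙ (cutDown τ) p ∈ D := by
  rw [← cfcₙ_cutDown_mul_approxOne p hτ, ← cfcₙ_approxOne_mul_cutDown p hτ,
    cfcₙ_approxOne_eq_mul hsa hτ, mul_assoc p, ← cfcₙ_approxOne_eq_mul hsa hτ,
    cfcₙ_approxOne_eq_mul' hsa hτ, ← mul_assoc, mul_assoc p]
  exact D.mul_mul_mem hp _ hp

end

variable {D}

theorem isFull_orthogonal_cutDown (hD : IsFull (D : Set A)) {w : A} (hw : w ∈ D)
    (hww : w * w = 0) {τ : ℝ} (hτ : 0 < τ) :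
    IsFull (D.orthogonal (cfcₙ (cutDown τ) (star w * w)) (cfcₙ_predicate _ _) : Set A) := by
  set p := star w * w with hp
  have hsa : IsSelfAdjoint p := .star_mul_self w
  have hpD : p ∈ D := mul_mem (star_mem hw) hw
  set s := cfcₙ (cutDown τ) p
  set m := cfcₙ (approxOne τ) p
  have hsm : s * m = s := cfcₙ_cutDown_mul_approxOne p hτ
  have hms : m * s = s := cfcₙ_approxOne_mul_cutDown p hτ
  have hsw : s * w = 0 :=
    cfcₙ_cutDown_mul_eq_zero hsa hτ (by rw [hp, mul_assoc, hww, mul_zero])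
  have hws : star w * s = 0 := mul_cfcₙ_cutDown_eq_zero hsa hτ
    (by rw [hp, ← mul_assoc, ← star_mul, hww, star_zero, zero_mul])
  set J := span (D.orthogonal s (cfcₙ_predicate _ _) : Set A)
  have hwJ : w ∈ J := J.mul_star_self_mem_iff.1 <| subset_span _
    ⟨mul_mem hw (star_mem hw), by rw [mul_assoc, hws, mul_zero], by rw [← mul_assoc, hsw, zero_mul]⟩
  have hmJ : m ∈ J := J.cfcₙ_approxOne_mem hτ hsa (J.mul_mem_left _ hwJ)
  refine fun a => span_le (fun d hd => ?_) (hD a)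
  have hmd : m * d ∈ D := D.cfcₙ_approxOne_mul_mem hpD hsa hτ hd
  have hdm {x : A} (hx : x ∈ D) : x * m ∈ D := D.mul_cfcₙ_approxOne_mem hpD hsa hτ hx
  -- `(1 - m) d (1 - m)` is orthogonal to `s` and agrees with `d` modulo the ideal of `m`.
  have hcorner : d - m * d - d * m + m * d * m ∈ J := by
    refine subset_span _ ⟨add_mem (sub_mem (sub_mem hd hmd) (hdm hd)) (hdm hmd), ?_, ?_⟩
    · simp only [add_mul, sub_mul, mul_assoc, hms]
      abel
    · simp only [mul_add, mul_sub, ← mul_assoc, hsm]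
      abel
  have hd_eq : d = d - m * d - d * m + m * d * m + m * d + d * m - m * d * m := by abel
  rw [hd_eq]
  exact sub_mem (add_mem (add_mem hcorner (J.mul_mem_right _ hmJ)) (J.mul_mem_left _ hmJ))
    (J.mul_mem_left _ hmJ)

theorem exists_isFull_orthogonal [TopologicalSpace.SeparableSpace A] (hA : HasStableRankOne A)
    (hA' : HasNoElementaryQuotient A) (hD : IsFull (D : Set A)) (c : A) {ε : ℝ} (hε : 0 < ε) :
    ∃ (s : A) (hs : IsSelfAdjoint s), s ∈ D ∧ ‖(span {s}).mk c‖ < ε ∧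
      IsFull (D.orthogonal s hs : Set A) := by
  obtain ⟨w, hw, hww, hwc⟩ := D.exists_mul_self_eq_zero_norm_mk_lt_of_mem_span hA
    (isFull_setOf_mul_self_eq_zero hA' hD c) hε
  obtain ⟨δ, hδ, hnear⟩ := exists_forall_norm_mk_lt hwc
  have hτ : 0 < δ ^ 2 / 2 := by positivity
  refine ⟨cfcₙ (cutDown (δ ^ 2 / 2)) (star w * w), cfcₙ_predicate _ _,
    D.cfcₙ_cutDown_mem (mul_mem (star_mem hw) hw) (.star_mul_self w) hτ, hnear _ ?_,
    isFull_orthogonal_cutDown hD hw hww hτ⟩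
  have hsq := (span {cfcₙ (cutDown (δ ^ 2 / 2)) (star w * w)}).norm_mk_sq_le w hτ
  rw [(mk_eq_zero_iff _).2 (mem_span_singleton_self _), norm_zero, add_zero] at hsq
  exact lt_of_pow_lt_pow_left₀ 2 hδ.le (hsq.trans_lt (half_lt_self (by positivity)))

end HereditarySubalgebra

section

open ClosedIdeal TopologicalSpace

variable {A : Type u} [NonUnitalCStarAlgebra A]

theorem mem_span_singleton_tsum {ι : Type*} {f : ι → A} (hsa : ∀ n, IsSelfAdjoint (f n))
    (horth : Pairwise fun m n => f m * f n = 0) (hf : Summable f) (n : ι) :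
    f n ∈ span {∑' m, f m} := by
  have hmul : f n * ∑' m, f m = f n * f n := by
    rw [← hf.tsum_mul_left]
    exact tsum_eq_single n fun m hm => horth hm.symm
  refine ClosedIdeal.mem_of_mul_star_mul_mem _ ?_
  rw [(hsa n).star_eq, ← hmul]
  exact (span _).mul_mem_right _ ((span _).mul_mem_left _ (mem_span_singleton_self _))

theorem tsum_mul_tsum_eq_zero {ι κ : Type*} {f : ι → A} {g : κ → A} (hf : Summable f)
    (hg : Summable g) (h : ∀ i j, f i * g j = 0) : (∑' i, f i) * ∑' j, g j = 0 := by
  simp only [← hf.tsum_mul_right, ← hg.tsum_mul_left, h, tsum_zero]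

theorem norm_mk_span_singleton_smul_le {c : ℂ} (hc : c ≠ 0) (x a : A) :
    ‖(span {c • x}).mk a‖ ≤ ‖(span {x}).mk a‖ := by
  refine norm_mk_anti (span_singleton_le ?_) a
  have := SMulMemClass.smul_mem c⁻¹ (mem_span_singleton_self (c • x))
  rwa [inv_smul_smul₀ hc] at this

variable [SeparableSpace A]

theorem isFull_of_forall_denseSeq {S : Set A}
    (hS : ∀ i l : ℕ, ∃ x ∈ S, ‖(span {x}).mk (denseSeq A i)‖ < 1 / ((l : ℝ) + 1)) : IsFull S := by
  have hdense : Set.range (denseSeq A) ⊆ (span S : Set A) := by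
    rintro _ ⟨i, rfl⟩
    refine (mk_eq_zero_iff _).1 (norm_le_zero_iff.1 (le_of_forall_pos_lt_add fun ε hε => ?_))
    obtain ⟨l, hl⟩ := exists_nat_one_div_lt hε
    obtain ⟨x, hx, hxi⟩ := hS i l
    rw [zero_add]
    exact (norm_mk_anti (span_singleton_le (subset_span S hx)) _).trans_lt (hxi.trans hl)
  exact fun a => closure_minimal hdense (span S).isClosed (denseRange_denseSeq A a)

theorem exists_pairwise_orthogonal_norm_mk_lt (hA : HasStableRankOne A)
    (hA' : HasNoElementaryQuotient A) (c : ℕ → A) {ε : ℕ → ℝ} (hε : ∀ n, 0 < ε n) :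
    ∃ s : ℕ → A, (∀ n, IsSelfAdjoint (s n)) ∧ Pairwise (fun i j => s i * s j = 0) ∧
      ∀ n, ‖(span {s n}).mk (c n)‖ < ε n := by
  choose s hs hsD hnear hfull using
    fun (n : ℕ) (D : {D : HereditarySubalgebra A // IsFull (D : Set A)}) =>
      HereditarySubalgebra.exists_isFull_orthogonal hA hA' D.2 (c n) (hε n)
  let D : ℕ → {D : HereditarySubalgebra A // IsFull (D : Set A)} := fun n =>
    n.rec ⟨⊤, HereditarySubalgebra.isFull_top⟩ fun n D => ⟨_, hfull n D⟩
  have hanti : Antitone fun n => ((D n).1 : Set A) := antitone_nat_of_succ_le fun n d hd => hd.1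
  have horth {i j : ℕ} (hij : i < j) :
      s j (D j) * s i (D i) = 0 ∧ s i (D i) * s j (D j) = 0 :=
    (hanti hij (hsD j (D j)) : s j (D j) ∈ (D (i + 1)).1).2
  refine ⟨fun n => s n (D n), fun n => hs n _, fun i j hij => ?_, fun n => hnear n _⟩
  exact hij.lt_or_gt.elim (fun h => (horth h).2) fun h => (horth h).1

theorem exists_pairwise_orthogonal_summable (hA : HasStableRankOne A)
    (hA' : HasNoElementaryQuotient A) :
    ∃ f : ℕ × ℕ → A, (∀ n, IsSelfAdjoint (f n)) ∧ Pairwise (fun m n => f m * f n = 0) ∧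
      (∀ j, Summable fun N => f (j, N)) ∧ ∀ j, IsFull (Set.range fun N => f (j, N)) := by
  obtain ⟨s, hsa, horth, hnear⟩ := exists_pairwise_orthogonal_norm_mk_lt hA hA'
    (fun n => denseSeq A n.unpair.2.unpair.1)
    (ε := fun n => 1 / ((n.unpair.2.unpair.2 : ℝ) + 1)) fun n => by positivity
  let r (n : ℕ × ℕ) : ℝ := (1 / 2) ^ n.2 / (‖s (Nat.pair n.1 n.2)‖ + 1)
  have hr n : 0 < r n := by positivity
  refine ⟨fun n => (r n : ℂ) • s (Nat.pair n.1 n.2), fun n => ?_, fun m n hmn => ?_, fun j => ?_,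
    fun j => isFull_of_forall_denseSeq fun i l => ?_⟩
  · exact IsSelfAdjoint.smul (r := (r n : ℂ)) (Complex.conj_ofReal (r n)) (hsa _)
  · have hne : Nat.pair m.1 m.2 ≠ Nat.pair n.1 n.2 := fun h =>
      hmn (Prod.ext_iff.2 (Nat.pair_eq_pair.1 h))
    simp only [smul_mul_smul_comm, horth hne, smul_zero]
  · refine .of_norm_bounded summable_geometric_two fun N => ?_
    rw [norm_smul, Complex.norm_real, Real.norm_of_nonneg (hr _).le, div_mul_eq_mul_div]
    exact div_le_of_le_mul₀ (by positivity) (by positivity) (by gcongr; simp)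
  · refine ⟨_, ⟨Nat.pair i l, rfl⟩, ?_⟩
    refine (norm_mk_span_singleton_smul_le (by exact_mod_cast (hr _).ne') _ _).trans_lt ?_
    simpa only [Nat.unpair_pair] using hnear (Nat.pair j (Nat.pair i l))

theorem exists_pairwise_orthogonal_isFull (hA : HasStableRankOne A)
    (hA' : HasNoElementaryQuotient A) :
    ∃ g : ℕ → A, (∀ n, IsSelfAdjoint (g n)) ∧ Pairwise (fun i j => g i * g j = 0) ∧
      ∀ n, IsFull {g n} := by
  obtain ⟨f, hsa, horth, hsum, hfull⟩ := exists_pairwise_orthogonal_summable hA hA'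
  refine ⟨fun j => ∑' N, f (j, N), fun j => ?_, fun i j hij => ?_, fun j a => ?_⟩
  · rw [IsSelfAdjoint, tsum_star]
    exact tsum_congr fun N => hsa _
  · refine tsum_mul_tsum_eq_zero (hsum i) (hsum j) fun N M => horth ?_
    exact fun h => hij (congrArg Prod.fst h)
  · refine span_le ?_ (hfull j a)
    rintro _ ⟨N, rfl⟩
    refine mem_span_singleton_tsum (fun N => hsa _) (fun M N hMN => horth ?_) (hsum j) N
    exact fun h => hMN (congrArg Prod.snd h)

end

/-! ### Orthogonal copies of a full positive element -/

section

open ClosedIdeal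

variable {A : Type u} [NonUnitalCStarAlgebra A]

/-- The norm closure of `b A e`. -/
def closedCorner (b e : A) : Submodule ℂ A :=
  (LinearMap.mulLeftRight ℂ (b, e)).range.topologicalClosure

theorem isClosed_closedCorner (b e : A) : IsClosed (closedCorner b e : Set A) :=
  Submodule.isClosed_topologicalClosure _

theorem mul_mul_mem_closedCorner (b e z : A) : b * z * e ∈ closedCorner b e :=
  Submodule.le_topologicalClosure _ ⟨z, rfl⟩

theorem closedCorner_induction {b e : A} {P : A → Prop} (hP : IsClosed {w | P w})
    (h : ∀ z, P (b * z * e)) {w : A} (hw : w ∈ closedCorner b e) : P w :=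
  closure_minimal (by rintro _ ⟨z, rfl⟩; exact h z) hP hw

theorem isInnerIdeal_closedCorner (b e : A) : IsInnerIdeal (closedCorner b e) := by
  intro x hx a y hy
  have hcl := isClosed_closedCorner b e
  refine closedCorner_induction (P := fun x => x * a * y ∈ closedCorner b e)
    (hcl.preimage (by fun_prop)) (fun z => ?_) hx
  refine closedCorner_induction (P := fun y => b * z * e * a * y ∈ closedCorner b e)
    (hcl.preimage (by fun_prop)) (fun z' => ?_) hy
  simpa only [mul_assoc] using mul_mul_mem_closedCorner b e (z * e * a * b * z')

theorem mul_eq_zero_of_mem_closedCorner {b e w c : A} (hw : w ∈ closedCorner b e)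
    (hcb : c * b = 0) : c * w = 0 :=
  closedCorner_induction (P := fun w => c * w = 0) (isClosed_eq (by fun_prop) (by fun_prop))
    (fun z => by rw [← mul_assoc, ← mul_assoc, hcb, zero_mul, zero_mul]) hw

theorem IsFull.singleton_of_mem {w x : A} (hw : IsFull {w}) (h : w ∈ span {x}) : IsFull {x} :=
  fun a => span_singleton_le h (hw a)

theorem exists_mem_closedCorner_isFull [TopologicalSpace.SeparableSpace A]
    (hA : HasStableRankOne A) {b e : A} (hb : IsFull {b}) (he : IsFull {e}) :
    ∃ w ∈ closedCorner b e, IsFull {w} := by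
  obtain ⟨w, hw, hsub⟩ :=
    (isInnerIdeal_closedCorner b e).exists_subset_span_singleton hA (isClosed_closedCorner b e)
  refine ⟨w, hw, fun a => ClosedIdeal.mem_of_mul_star_mul_mem _ ?_⟩
  refine mul_mul_mem_of_mem_span (S := {b}) (T := {e}) ?_ (hb a) (he a) (star a)
  rintro _ rfl _ rfl z
  exact hsub (mul_mul_mem_closedCorner _ _ z)

theorem IsFull.mul_of_mem_closedCorner {b t w : A} (ht : IsSelfAdjoint t)
    (hw : w ∈ closedCorner b (t * t)) (hfull : IsFull {w}) : IsFull {w * t} := by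
  refine hfull.singleton_of_mem ((span {w * t}).mul_star_self_mem_iff.1 ?_)
  refine closedCorner_induction (P := fun v => w * star v ∈ span {w * t})
    ((span {w * t}).isClosed.preimage (by fun_prop)) (fun z => ?_) hw
  have hwt := (span {w * t}).mul_mem_right (t * star (b * z)) (mem_span_singleton_self (w * t))
  simpa only [star_mul, ht.star_eq, mul_assoc] using hwt

theorem IsFull.star_mul_self {w : A} (hw : IsFull {w}) : IsFull {star w * w} :=
  hw.singleton_of_mem ((star_mul_self_mem_iff _).1 (mem_span_singleton_self _))

/-- The elements `x i` have pairwise orthogonal ranges and the common square `e`. -/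
def IsOrthogonalFrame {ι : Type*} [DecidableEq ι] (x : ι → A) (e : A) : Prop :=
  ∀ i j, star (x i) * x j = if i = j then e else 0

theorem exists_isSelfAdjoint_mul_self_eq (h : A) : ∃ t, IsSelfAdjoint t ∧ t * t = star h * h :=
  ⟨CFC.sqrt (star h * h), .of_nonneg (CFC.sqrt_nonneg _),
    CFC.sqrt_mul_sqrt_self _ (star_mul_self_nonneg h)⟩

namespace IsOrthogonalFrame

theorem mul_right {ι : Type*} [DecidableEq ι] {x : ι → A} {e : A} (hx : IsOrthogonalFrame x e)
    (u : A) : IsOrthogonalFrame (fun i => x i * u) (star u * e * u) := by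
  intro i j
  have hassoc : star (x i * u) * (x j * u) = star u * (star (x i) * x j) * u := by
    simp only [star_mul, mul_assoc]
  rw [hassoc, hx, mul_ite, ite_mul, mul_zero, zero_mul]

theorem snoc {n : ℕ} {x : Fin n → A} {e y : A} (hx : IsOrthogonalFrame x e)
    (hy : star y * y = e) (hxy : ∀ i, star (x i) * y = 0) :
    IsOrthogonalFrame (Fin.snoc (α := fun _ => A) x y) e := by
  have hyx (i) : star y * x i = 0 := by simpa using congrArg star (hxy i)
  intro i j
  cases i using Fin.lastCases <;> cases j using Fin.lastCases
  · simpa using hy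
  · simpa [(Fin.castSucc_ne_last _).symm] using hyx _
  · simpa [Fin.castSucc_ne_last] using hxy _
  · simpa using hx _ _

theorem exists_snoc [TopologicalSpace.SeparableSpace A]
    (hA : HasStableRankOne A) {n : ℕ} {x : Fin n → A} {h b : A}
    (hx : IsOrthogonalFrame x (star h * h)) (hh : IsFull {star h * h}) (hb : IsFull {b})
    (hxb : ∀ i, star (x i) * b = 0) :
    ∃ (y : Fin (n + 1) → A) (h' : A), IsOrthogonalFrame y (star h' * h') ∧
      IsFull {star h' * h'} ∧ (∀ c i, c * x i = 0 → c * y i.castSucc = 0) ∧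
      ∀ c, c * b = 0 → c * y (Fin.last n) = 0 := by
  obtain ⟨t, ht, htt⟩ := exists_isSelfAdjoint_mul_self_eq h
  obtain ⟨w, hw, hwfull⟩ := exists_mem_closedCorner_isFull hA hb hh
  rw [← htt] at hw
  obtain ⟨d, hd, hdd⟩ := exists_isSelfAdjoint_mul_self_eq (w * t)
  set c := star (w * t) * (w * t) with hc
  have hold : IsOrthogonalFrame (fun i => x i * (star w * w * t)) (star c * c) := by
    convert hx.mul_right (star w * w * t) using 1
    simp only [hc, ← htt, star_mul, star_star, ht.star_eq, mul_assoc]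
  have hnew : star (w * t * d) * (w * t * d) = star c * c :=
    calc star (w * t * d) * (w * t * d) = d * c * d := by
          simp only [hc, star_mul, hd.star_eq, mul_assoc]
      _ = c * c := by rw [← hdd]; simp only [mul_assoc]
      _ = star c * c := by rw [(IsSelfAdjoint.star_mul_self (w * t)).star_eq]
  refine ⟨_, c, hold.snoc hnew fun i => ?_,
    (hwfull.mul_of_mem_closedCorner ht hw).star_mul_self.star_mul_self, fun a i ha => ?_,
    fun a ha => ?_⟩
  · rw [star_mul, mul_assoc, mul_assoc w, ← mul_assoc (star (x i)),
      mul_eq_zero_of_mem_closedCorner hw (hxb i), zero_mul, mul_zero]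
  · rw [Fin.snoc_castSucc, ← mul_assoc, ha, zero_mul]
  · rw [Fin.snoc_last, mul_assoc w, ← mul_assoc, mul_eq_zero_of_mem_closedCorner hw ha, zero_mul]

end IsOrthogonalFrame

theorem exists_isOrthogonalFrame_of_pairwise_orthogonal [TopologicalSpace.SeparableSpace A]
    (hA : HasStableRankOne A) {g : ℕ → A} (hsa : ∀ n, IsSelfAdjoint (g n))
    (horth : Pairwise fun i j => g i * g j = 0) (hfull : ∀ n, IsFull {g n}) (n : ℕ) :
    ∃ (x : Fin n → A) (h : A), IsOrthogonalFrame x (star h * h) ∧ IsFull {star h * h} ∧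
      ∀ (l : ℕ) (i : Fin n), l ≠ i → g l * x i = 0 := by
  induction n with
  | zero => exact ⟨Fin.elim0, g 0, fun i => i.elim0, (hfull 0).star_mul_self, fun _ i => i.elim0⟩
  | succ n ih =>
    obtain ⟨x, h, hx, hh, hgx⟩ := ih
    have hxg (i) : star (x i) * g n = 0 := by
      simpa [(hsa n).star_eq] using congrArg star (hgx n i i.2.ne')
    obtain ⟨y, h', hy, hh', hold, hnew⟩ := hx.exists_snoc hA hh (hfull n) hxg
    refine ⟨y, h', hy, hh', fun l i hl => ?_⟩
    cases i using Fin.lastCases with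
    | last => exact hnew _ (horth (by simpa using hl))
    | cast i => exact hold _ _ (hgx l i (by simpa using hl))

end

/-! ### Functional calculus on the cone -/

section

variable {B : Type u} [NonUnitalCStarAlgebra B]

/-- The extension of a function in `C₀((0, 1])` to the real line, zero on the negative half-line
and constant on `[1, ∞)`. -/
noncomputable def coneExtend (f : C₀(Set.Ioc (0 : ℝ) 1, ℂ)) (t : ℝ) : ℂ :=
  if ht : 0 < t then f ⟨min t 1, lt_min ht one_pos, min_le_right _ _⟩ else 0

theorem coneExtend_of_nonpos (f : C₀(Set.Ioc (0 : ℝ) 1, ℂ)) {t : ℝ} (ht : t ≤ 0) :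
    coneExtend f t = 0 :=
  dif_neg ht.not_gt

theorem tendsto_coneExtend_of_nonpos (f : C₀(Set.Ioc (0 : ℝ) 1, ℂ)) {t : ℝ} (ht : t ≤ 0) :
    Tendsto (coneExtend f) (𝓝 t) (𝓝 0) := by
  refine Metric.tendsto_nhds.2 fun ε hε => ?_
  obtain ⟨K, hK, hKε⟩ := mem_cocompact.1 (Metric.tendsto_nhds.1 f.zero_at_infty' ε hε)
  have hclosed : IsClosed (Subtype.val '' K) := (hK.image continuous_subtype_val).isClosed
  have hmin : min t 1 ∉ Subtype.val '' K := by
    rintro ⟨x, -, hx⟩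
    exact (x.2.1.trans_eq hx).not_ge ((min_le_left _ _).trans ht)
  have hnear : ∀ᶠ s in 𝓝 t, min s 1 ∉ Subtype.val '' K :=
    (by fun_prop : Continuous fun s : ℝ => min s 1).continuousAt.eventually
      (hclosed.isOpen_compl.mem_nhds hmin)
  filter_upwards [hnear] with s hs
  by_cases hs0 : 0 < s
  · rw [coneExtend, dif_pos hs0]
    exact hKε fun h => hs ⟨_, h, rfl⟩
  · rwa [coneExtend_of_nonpos f (not_lt.1 hs0), dist_self]

theorem continuous_coneExtend (f : C₀(Set.Ioc (0 : ℝ) 1, ℂ)) : Continuous (coneExtend f) := by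
  refine continuous_iff_continuousAt.2 fun t => ?_
  rcases le_or_gt t 0 with ht | ht
  · rw [ContinuousAt, coneExtend_of_nonpos f ht]
    exact tendsto_coneExtend_of_nonpos f ht
  · have hon : ContinuousOn (coneExtend f) (Set.Ioi 0) := by
      rw [continuousOn_iff_continuous_domRestrict]
      have hrestrict : (Set.Ioi 0).domRestrict (coneExtend f) = fun s : Set.Ioi (0 : ℝ) =>
          f ⟨min s 1, lt_min s.2 one_pos, min_le_right _ _⟩ := funext fun s => dif_pos s.2
      rw [hrestrict]
      exact f.continuous.comp (by fun_prop)
    exact hon.continuousAt (Ioi_mem_nhds ht)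

theorem continuous_coneExtend_re (f : C₀(Set.Ioc (0 : ℝ) 1, ℂ)) :
    Continuous fun z : ℂ => coneExtend f z.re :=
  (continuous_coneExtend f).comp Complex.continuous_re

/-- The functional calculus of a positive element `d`, viewed as a homomorphism from the cone
`C₀((0, 1])`. -/
noncomputable def coneHom (d : B) : C₀(Set.Ioc (0 : ℝ) 1, ℂ) →⋆ₙₐ[ℂ] B where
  toFun f := cfcₙ (fun z : ℂ => coneExtend f z.re) d
  map_smul' c f := by
    rw [MonoidHom.id_apply, ← cfcₙ_smul c (fun z : ℂ => coneExtend f z.re) d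
      (continuous_coneExtend_re f).continuousOn (coneExtend_of_nonpos f le_rfl)]
    congr 1
    ext z
    simp only [coneExtend, smul_dite, smul_zero, ZeroAtInftyContinuousMap.smul_apply]
  map_zero' := by
    have hzero : (fun z : ℂ => coneExtend 0 z.re) = fun _ => 0 := by ext; simp [coneExtend]
    rw [hzero, cfcₙ_const_zero]
  map_add' f g := by
    rw [← cfcₙ_add (fun z : ℂ => coneExtend f z.re) (fun z : ℂ => coneExtend g z.re) d
      (continuous_coneExtend_re f).continuousOn (coneExtend_of_nonpos f le_rfl)
      (continuous_coneExtend_re g).continuousOn (coneExtend_of_nonpos g le_rfl)]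
    congr 1
    ext z
    simp only [coneExtend]
    split_ifs <;> simp
  map_mul' f g := by
    rw [← cfcₙ_mul (fun z : ℂ => coneExtend f z.re) (fun z : ℂ => coneExtend g z.re) d
      (continuous_coneExtend_re f).continuousOn (coneExtend_of_nonpos f le_rfl)
      (continuous_coneExtend_re g).continuousOn (coneExtend_of_nonpos g le_rfl)]
    congr 1
    ext z
    simp only [coneExtend]
    split_ifs <;> simp
  map_star' f := by
    rw [← cfcₙ_star]
    congr 1
    ext z
    simp only [coneExtend]
    split_ifs <;> simp

/-- The inclusion of `(0, 1]` into `ℂ`. -/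
noncomputable def coneId : C₀(Set.Ioc (0 : ℝ) 1, ℂ) where
  toFun x := ((x : ℝ) : ℂ)
  zero_at_infty' := by
    refine Metric.tendsto_nhds.2 fun ε hε => mem_cocompact.2 ⟨Subtype.val ⁻¹' Set.Ici ε, ?_, ?_⟩
    · rw [Subtype.isCompact_iff, Subtype.image_preimage_coe]
      have hinter : Set.Ioc (0 : ℝ) 1 ∩ Set.Ici ε = Set.Icc ε 1 := by
        ext t
        exact ⟨fun h => ⟨h.2, h.1.2⟩, fun h => ⟨⟨hε.trans_le h.1, h.2⟩, h.1⟩⟩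
      exact hinter ▸ isCompact_Icc
    · intro x hx
      simpa [abs_of_pos x.2.1] using hx

theorem coneExtend_coneId {t : ℝ} (ht : 0 ≤ t) : coneExtend coneId t = (min t 1 : ℝ) := by
  rcases ht.eq_or_lt with rfl | ht
  · simp [coneExtend_of_nonpos]
  · exact dif_pos ht

open scoped ComplexOrder in
theorem coneHom_coneId_mul (b : B) :
    coneHom (star b * b) coneId *
      cfcₙ (fun z : ℂ => ((z.re * max z.re 1 : ℝ) : ℂ)) (star b * b) =
        star b * b * (star b * b) := by
  have hmin : ∀ z ∈ quasispectrum ℂ (star b * b),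
      coneExtend coneId z.re * ((z.re * max z.re 1 : ℝ) : ℂ) = z * z := fun z hz => by
    obtain ⟨hre, him⟩ := Complex.nonneg_iff.1
      (quasispectrum_nonneg_of_nonneg _ (star_mul_self_nonneg b) z hz)
    rw [coneExtend_coneId hre, ← Complex.ofReal_mul, mul_left_comm, min_mul_max, mul_one]
    exact Complex.ext (by simp [← him]) (by simp [← him])
  calc _ = cfcₙ (fun z : ℂ => coneExtend coneId z.re * ((z.re * max z.re 1 : ℝ) : ℂ))
        (star b * b) := (cfcₙ_mul _ _ _ (continuous_coneExtend_re _).continuousOn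
          (coneExtend_of_nonpos _ le_rfl) (by fun_prop) (by simp)).symm
    _ = cfcₙ (fun z : ℂ => z * z) (star b * b) := cfcₙ_congr hmin
    _ = _ := by
      rw [cfcₙ_mul (fun z : ℂ => z) (fun z : ℂ => z), cfcₙ_id' ℂ (star b * b)]

theorem mem_of_coneHom_coneId_mem {J : ClosedIdeal B} {b : B}
    (h : coneHom (star b * b) coneId ∈ J) : b ∈ J := by
  have hsq := coneHom_coneId_mul b ▸ J.mul_mem_right _ h
  rw [← J.star_mul_self_mem_iff, ← J.star_mul_self_mem_iff]
  rwa [(IsSelfAdjoint.star_mul_self b).star_eq]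

end

/-! ### Amplification by orthogonal copies -/

section

variable {ι : Type*} [Fintype ι] [DecidableEq ι]
  {A B : Type*} [NonUnitalRing A] [Module ℂ A] [StarRing A]
  [NonUnitalRing B] [Module ℂ B] [StarRing B]

/-- The homomorphism out of matrices over `B` determined by linear maps that satisfy the
relations of the maps `b ↦ b ⊗ e i j`. -/
def matrixHom (W : ι → ι → B →ₗ[ℂ] A)
    (hmul : ∀ i j k l b c, W i j b * W k l c = if j = k then W i l (b * c) else 0)
    (hstar : ∀ i j b, star (W i j b) = W j i (star b)) : Matrix ι ι B →⋆ₙₐ[ℂ] A where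
  toFun F := ∑ i, ∑ j, W i j (F i j)
  map_smul' c F := by simp [Finset.smul_sum]
  map_zero' := by simp
  map_add' F G := by simp [Finset.sum_add_distrib]
  map_mul' F G := by
    have hrow (i j k : ι) : W i j (F i j) * ∑ l, W k l (G k l) =
        if j = k then ∑ l, W i l (F i j * G k l) else 0 := by
      simp only [Finset.mul_sum, hmul, Finset.sum_ite_irrel, Finset.sum_const_zero]
    rw [Finset.sum_mul]
    refine Finset.sum_congr rfl fun i _ => ?_
    simp only [Finset.sum_mul_sum, hrow, Finset.sum_ite_eq, Finset.mem_univ, if_true,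
      Matrix.mul_apply, map_sum]
    exact Finset.sum_comm
  map_star' F := by
    simp only [star_sum, hstar, Matrix.star_apply]
    exact Finset.sum_comm

theorem matrixHom_single (W : ι → ι → B →ₗ[ℂ] A) (hmul) (hstar) (i j : ι) (b : B) :
    matrixHom W hmul hstar (Matrix.single i j b) = W i j b := by
  change ∑ i', ∑ j', W i' j' (Matrix.single i j b i' j') = W i j b
  simp [Matrix.single_apply, ite_and, apply_ite, Finset.sum_ite_irrel]

end

section

open ClosedIdeal

variable {A : Type u} [NonUnitalCStarAlgebra A]

/-- The hereditary subalgebra generated by `h * star h`, as the closure of `h A (star h)`. -/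
def hereditaryClosure (h : A) : HereditarySubalgebra A where
  __ := closedCorner h (star h)
  mul_mem' {x y} hx hy := by
    have hcl := isClosed_closedCorner h (star h)
    refine closedCorner_induction (P := fun x => x * y ∈ closedCorner h (star h))
      (hcl.preimage (by fun_prop)) (fun z => ?_) hx
    refine closedCorner_induction (P := fun y => h * z * star h * y ∈ closedCorner h (star h))
      (hcl.preimage (by fun_prop)) (fun z' => ?_) hy
    simpa only [mul_assoc] using mul_mul_mem_closedCorner h (star h) (z * star h * h * z')
  star_mem' {x} hx := by
    refine closedCorner_induction (P := fun x => star x ∈ closedCorner h (star h))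
      ((isClosed_closedCorner h (star h)).preimage (by fun_prop)) (fun z => ?_) hx
    simpa only [star_mul, star_star, mul_assoc] using mul_mul_mem_closedCorner h (star h) (star z)
  isClosed' := isClosed_closedCorner h (star h)
  mul_mul_mem' x hx a y hy := isInnerIdeal_closedCorner h (star h) x hx a y hy

namespace hereditaryClosure

variable {h x y z w : A}

/-- The map `b ↦ h * b * star h` with values in the hereditary subalgebra generated by `h`. -/
def conj (h : A) : A →ₗ[ℂ] hereditaryClosure h :=
  (LinearMap.mulLeftRight ℂ (h, star h)).codRestrict
    (closedCorner h (star h)) (mul_mul_mem_closedCorner h (star h))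

theorem coe_conj (h b : A) : (conj h b : A) = h * b * star h := rfl

theorem denseRange_conj (h : A) : DenseRange (conj h) := by
  refine Subtype.dense_iff.2 fun x hx => ?_
  rw [← Set.range_comp]
  exact hx

theorem norm_mul_eq_norm_mul (hx : star x * x = star h * h) (b : A) : ‖x * b‖ = ‖h * b‖ := by
  have hsq (y : A) : ‖y * b‖ * ‖y * b‖ = ‖star b * (star y * y) * b‖ := by
    rw [← CStarRing.norm_star_mul_self, star_mul]
    simp only [mul_assoc]
  exact (mul_self_inj (norm_nonneg _) (norm_nonneg _)).1 (by rw [hsq, hsq, hx])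

theorem norm_mul_mul_star_eq (hx : star x * x = star h * h) (hy : star y * y = star h * h) (b : A) :
    ‖x * b * star y‖ = ‖h * b * star h‖ := by
  calc ‖x * b * star y‖ = ‖y * star (x * b)‖ := by rw [← norm_star, star_mul, star_star]
    _ = ‖h * star (x * b)‖ := norm_mul_eq_norm_mul hy _
    _ = ‖x * (b * star h)‖ := by rw [← norm_star, star_mul, star_star, mul_assoc]
    _ = ‖h * b * star h‖ := by rw [norm_mul_eq_norm_mul hx, mul_assoc]

/-- The isometric map `h * b * star h ↦ x * b * star y`, which makes sense whenever `x` and `y`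
have the same square as `h`; if `x = u h` and `y = v h` are polar decompositions, it is
`a ↦ u a (star v)`. -/
noncomputable def transport (h x y : A) : hereditaryClosure h →L[ℂ] A :=
  (LinearMap.mulLeftRight ℂ (x, star y)).extendOfNorm (conj h)

theorem transport_conj (hx : star x * x = star h * h) (hy : star y * y = star h * h) (b : A) :
    transport h x y (conj h b) = x * b * star y :=
  LinearMap.extendOfNorm_eq (denseRange_conj h)
    ⟨1, fun b => (norm_mul_mul_star_eq hx hy b).le.trans (one_mul _).ge⟩ b

theorem star_transport (hx : star x * x = star h * h) (hy : star y * y = star h * h)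
    (m : hereditaryClosure h) : star (transport h x y m) = transport h y x (star m) := by
  refine (denseRange_conj h).induction_on m (isClosed_eq (by fun_prop) (by fun_prop)) fun b => ?_
  have hstar : star (conj h b) = conj h (star b) :=
    Subtype.ext (by simp [coe_conj, mul_assoc])
  rw [hstar, transport_conj hx hy, transport_conj hy hx, star_mul, star_mul, star_star, mul_assoc]

theorem transport_mul_transport (hx : star x * x = star h * h) (hy : star y * y = star h * h)
    (hz : star z * z = star h * h) (hw : star w * w = star h * h) (hyz : star y * z = star h * h)
    (m n : hereditaryClosure h) :
    transport h x y m * transport h z w n = transport h x w (m * n) := by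
  refine (denseRange_conj h).induction_on₂ (isClosed_eq (by fun_prop) (by fun_prop))
    (fun b c => ?_) m n
  have hmul : conj h b * conj h c = conj h (b * (star h * h) * c) :=
    Subtype.ext (by simp [coe_conj, mul_assoc])
  rw [hmul, transport_conj hx hy, transport_conj hz hw, transport_conj hx hw, ← hyz]
  simp only [mul_assoc]

theorem transport_mul_transport_eq_zero (hx : star x * x = star h * h)
    (hy : star y * y = star h * h) (hz : star z * z = star h * h) (hw : star w * w = star h * h)
    (hyz : star y * z = 0) (m n : hereditaryClosure h) :
    transport h x y m * transport h z w n = 0 := by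
  refine (denseRange_conj h).induction_on₂ (isClosed_eq (by fun_prop) (by fun_prop))
    (fun b c => ?_) m n
  rw [transport_conj hx hy, transport_conj hz hw, mul_assoc, mul_assoc z, ← mul_assoc (star y), hyz,
    zero_mul, mul_zero]

/-- The map `transport h x x` as a homomorphism. -/
noncomputable def transportHom (hx : star x * x = star h * h) : hereditaryClosure h →⋆ₙₐ[ℂ] A where
  __ := (transport h x x).toLinearMap
  map_zero' := map_zero (transport h x x)
  map_mul' m n := (transport_mul_transport hx hx hx hx hx m n).symm
  map_star' m := (star_transport hx hx m).symm

theorem mem_of_transport_conj_mem {K : ClosedIdeal A} (hx : star x * x = star h * h)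
    (hK : transport h x x (conj h (star h * h)) ∈ K) : x ∈ K := by
  have hfactor : transport h x x (conj h (star h * h)) = x * star x * star (x * star x) := by
    rw [transport_conj hx hx, ← hx, star_mul, star_star]
    simp only [mul_assoc]
  rwa [hfactor, mul_star_self_mem_iff, mul_star_self_mem_iff] at hK

end hereditaryClosure

namespace IsOrthogonalFrame

open hereditaryClosure

variable {ι : Type*} [DecidableEq ι] {x : ι → A} {h : A}

theorem star_mul_self_eq {e : A} (hx : IsOrthogonalFrame x e) (i : ι) : star (x i) * x i = e := by
  rw [hx, if_pos rfl]

variable [Fintype ι] {B : Type*} [NonUnitalRing B] [Module ℂ B] [StarRing B]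

/-- The amplification of a homomorphism into the hereditary subalgebra generated by `h` along
orthogonal copies `x i` of `h`. -/
noncomputable def amplify (hx : IsOrthogonalFrame x (star h * h))
    (ψ : B →⋆ₙₐ[ℂ] hereditaryClosure h) : Matrix ι ι B →⋆ₙₐ[ℂ] A :=
  have hsq := hx.star_mul_self_eq
  matrixHom (fun i j => (transport h (x i) (x j)).toLinearMap ∘ₗ (ψ : B →ₗ[ℂ] hereditaryClosure h))
    (fun i j k l b c => by
      rcases eq_or_ne j k with rfl | hjk
      · simp [transport_mul_transport (hsq i) (hsq j) (hsq j) (hsq l) (hsq j)]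
      · have horth : star (x j) * x k = 0 := by rw [hx, if_neg hjk]
        simp [hjk, transport_mul_transport_eq_zero (hsq i) (hsq j) (hsq k) (hsq l) horth])
    (fun i j b => by simp [star_transport (hsq i) (hsq j), map_star])

theorem amplify_single (hx : IsOrthogonalFrame x (star h * h))
    (ψ : B →⋆ₙₐ[ℂ] hereditaryClosure h) (i : ι) (b : B) :
    hx.amplify ψ (Matrix.single i i b) = transportHom (hx.star_mul_self_eq i) (ψ b) := by
  rw [amplify, matrixHom_single]
  rfl

/-- The homomorphism out of the matrix cone associated with orthogonal copies `x i` of `h`. The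
cone is sent to the algebra generated by the square of `h * (star h * h) * star h` instead of
`h * star h`, to have a generator inside the dense range of `conj h`. -/
noncomputable def matrixConeHom (hx : IsOrthogonalFrame x (star h * h)) :
    Matrix ι ι C₀(Set.Ioc (0 : ℝ) 1, ℂ) →⋆ₙₐ[ℂ] A :=
  hx.amplify (coneHom (star (conj h (star h * h)) * conj h (star h * h)))

theorem isFull_range_matrixConeHom [Nonempty ι] (hx : IsOrthogonalFrame x (star h * h))
    (hfull : IsFull {star h * h}) : IsFull (Set.range hx.matrixConeHom) := by
  obtain ⟨i⟩ := ‹Nonempty ι›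
  set K := span (Set.range hx.matrixConeHom)
  have hsq := hx.star_mul_self_eq i
  have hcone : coneHom (star (conj h (star h * h)) * conj h (star h * h)) coneId ∈
      ClosedIdeal.comap (transportHom hsq) K :=
    subset_span _ ⟨Matrix.single i i coneId, hx.amplify_single _ i coneId⟩
  have hxK : x i ∈ K := mem_of_transport_conj_mem hsq <|
    mem_of_coneHom_coneId_mem (J := ClosedIdeal.comap (transportHom hsq) K) hcone
  have hhK : star h * h ∈ K := hsq ▸ K.mul_mem_left _ hxK
  exact fun a => span_singleton_le hhK (hfull a)

end IsOrthogonalFrame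

/-- A closed two-sided ideal in the ring-theoretic sense. It is automatically closed under scalar
multiplication, because `A` has an approximate unit. -/
def ClosedIdeal.ofTwoSidedIdeal (I : TwoSidedIdeal A) (hI : IsClosed (I : Set A)) :
    ClosedIdeal A where
  carrier := I
  zero_mem' := I.zero_mem
  add_mem' := I.add_mem
  smul_mem' c a ha := by
    rw [← hI.closure_eq, Metric.mem_closure_iff]
    intro ε hε
    obtain ⟨e, -, -, he, -⟩ := exists_approx_unit a (ε := ε / (‖c‖ + 1)) (by positivity)
    refine ⟨c • e * a, I.mul_mem_left _ _ ha, ?_⟩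
    rw [dist_comm, dist_eq_norm, smul_mul_assoc, ← smul_sub, norm_smul]
    calc ‖c‖ * ‖e * a - a‖ ≤ (‖c‖ + 1) * ‖e * a - a‖ := by gcongr; linarith
      _ < ε := by rwa [lt_div_iff₀' (by positivity)] at he
  isClosed' := hI
  mul_mem_left' := I.mul_mem_left
  mul_mem_right' a x hx := I.mul_mem_right x a hx

theorem IsFull.mem_twoSidedIdeal {S : Set A} (hS : IsFull S) {I : TwoSidedIdeal A}
    (hI : IsClosed (I : Set A)) (hSI : S ⊆ I) (a : A) : a ∈ I :=
  span_le (K := .ofTwoSidedIdeal I hI) hSI (hS a)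

end

end GlimmHalving

/-- **Global Glimm halving for separable C*-algebras of stable rank one without
elementary quotients.** If a separable C*-algebra `A` has stable rank one (i.e. the
invertible elements are dense in its minimal unitization) and admits no surjective
*-homomorphism onto the compact operators of a nonzero complex Hilbert space, then for
every `k ≥ 1` there is a *-homomorphism from `M_k(C₀((0,1]))` into `A` with full range. -/
theorem glimm_halving_separable_stableRankOne_of_no_elementary_quotient
    {A : Type u} [NonUnitalCStarAlgebra A] [TopologicalSpace.SeparableSpace A]
    (hsr1 : Dense {a : Unitization ℂ A | IsUnit a})
    (hel : ∀ (H : Type u) [NormedAddCommGroup H] [InnerProductSpace ℂ H] [CompleteSpace H],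
        Nontrivial H → ∀ φ : A →⋆ₙₐ[ℂ] (H →L[ℂ] H),
          Set.range φ ≠ {T : H →L[ℂ] H | IsCompactOperator T})
    (k : ℕ) (hk : 1 ≤ k) :
    ∃ φ : Matrix (Fin k) (Fin k) C₀(↥(Set.Ioc (0:ℝ) 1), ℂ) →⋆ₙₐ[ℂ] A,
      ∀ I : TwoSidedIdeal A, IsClosed (I : Set A) →
        (∀ x, φ x ∈ I) → ∀ a : A, a ∈ I := by
  have : Nonempty (Fin k) := ⟨⟨0, hk⟩⟩
  obtain ⟨g, hg, horth, hfull⟩ := GlimmHalving.exists_pairwise_orthogonal_isFull hsr1 hel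
  obtain ⟨x, h, hx, hh, -⟩ :=
    GlimmHalving.exists_isOrthogonalFrame_of_pairwise_orthogonal hsr1 hg horth hfull k
  exact ⟨hx.matrixConeHom, fun I hI hφI =>
    (hx.isFull_range_matrixConeHom hh).mem_twoSidedIdeal hI (Set.range_subset_iff.2 hφI)⟩
end

section
/- Let S be a Cu-semigroup. Then the following conditions are equivalent: (i) S has weak cancellation, i.e., x + z ≪ y + z implies x ≪ y for all x, y, z ∈ S; (ii) for all x, y, z ∈ S, x + z ≪ y + z implies x ≤ y; (iii) for all x, y, z, z' ∈ S, if x + z ≤ y + z' and z' ≪ z, then x ≤ y. -/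
/-- The way-below (compact containment) relation on a partially ordered set:
`WayBelow x y` holds if whenever `(y n)` is an increasing sequence admitting a
supremum `s` with `y ≤ s`, then `x ≤ y n` for some `n`. -/
def WayBelow {S : Type*} [PartialOrder S] (x y : S) : Prop :=
  ∀ f : ℕ → S, Monotone f → ∀ s : S, IsLUB (Set.range f) s → y ≤ s → ∃ n, x ≤ f n

/-- An abstract Cuntz semigroup (Cu-semigroup): a positively ordered commutative
monoid satisfying the axioms (O1)-(O4). -/
class CuSemigroup (S : Type*) [AddCommMonoid S] [PartialOrder S] : Prop where
  /-- The order is positive. -/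
  zero_le : ∀ x : S, 0 ≤ x
  /-- Addition is order-preserving. -/
  add_le_add : ∀ {x y z w : S}, x ≤ y → z ≤ w → x + z ≤ y + w
  /-- (O1): every increasing sequence has a supremum. -/
  O1 : ∀ f : ℕ → S, Monotone f → ∃ s : S, IsLUB (Set.range f) s
  /-- (O2): every element is the supremum of a `≪`-increasing sequence. -/
  O2 : ∀ x : S, ∃ f : ℕ → S, (∀ n, WayBelow (f n) (f (n + 1))) ∧ IsLUB (Set.range f) x
  /-- (O3): the way-below relation is additive. -/
  O3 : ∀ {x' x y' y : S}, WayBelow x' x → WayBelow y' y → WayBelow (x' + y') (x + y)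
  /-- (O4): addition is compatible with suprema of increasing sequences. -/
  O4 : ∀ (f g : ℕ → S), Monotone f → Monotone g → ∀ a b : S,
        IsLUB (Set.range f) a → IsLUB (Set.range g) b →
        IsLUB (Set.range fun n => f n + g n) (a + b)

/-- Axiom (O5) (almost algebraic order). -/
def O5 (S : Type*) [AddCommMonoid S] [PartialOrder S] : Prop :=
  ∀ x' x z : S, WayBelow x' x → x ≤ z → ∃ w : S, x' + w ≤ z ∧ z ≤ x + w

/-- Axiom (O6+). -/
def O6plus (S : Type*) [AddCommMonoid S] [PartialOrder S] : Prop :=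
  ∀ a b c x' x y' y : S, a ≤ b + c →
    WayBelow x' x → x ≤ a → x ≤ b → WayBelow y' y → y ≤ a → y ≤ c →
    ∃ e f : S, a ≤ e + f ∧ WayBelow x' e ∧ e ≤ a ∧ e ≤ b ∧
      WayBelow y' f ∧ f ≤ a ∧ f ≤ c

/-- Weak cancellation: `x + z ≪ y + z` implies `x ≪ y`. -/
def WeakCancel (S : Type*) [AddCommMonoid S] [PartialOrder S] : Prop :=
  ∀ x y z : S, WayBelow (x + z) (y + z) → WayBelow x y

/-- A Cu-semigroup is countably based if there is a countable subset `B` such that every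
element is the supremum of a `≪`-increasing sequence with elements in `B`. -/
def CountablyBased (S : Type*) [AddCommMonoid S] [PartialOrder S] : Prop :=
  ∃ B : Set S, B.Countable ∧ ∀ x : S, ∃ f : ℕ → S, (∀ n, f n ∈ B) ∧
    (∀ n, WayBelow (f n) (f (n + 1))) ∧ IsLUB (Set.range f) x

/-- Addition distributes over the infimum operation. -/
def InfDistrib (S : Type*) [AddCommMonoid S] [SemilatticeInf S] : Prop :=
  ∀ x y z : S, (x + z) ⊓ (y + z) = (x ⊓ y) + z

/-- A functional on an ordered monoid: a `[0,∞]`-valued map preserving `0`, addition,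
order, and suprema of increasing sequences. -/
def IsFunctional {S : Type*} [AddCommMonoid S] [PartialOrder S] (l : S → ENNReal) : Prop :=
  l 0 = 0 ∧ (∀ x y : S, l (x + y) = l x + l y) ∧ (∀ x y : S, x ≤ y → l x ≤ l y) ∧
    ∀ (f : ℕ → S) (s : S), Monotone f → IsLUB (Set.range f) s → l s = ⨆ n, l (f n)

/-- An element is soft if each of its way-below approximants `x'` satisfies
`(k+1)·x' ≤ k·x` for some `k`. -/
def Soft {S : Type*} [AddCommMonoid S] [PartialOrder S] (x : S) : Prop :=
  ∀ x' : S, WayBelow x' x → ∃ k : ℕ, (k + 1) • x' ≤ k • x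

/-- An element `x` is full if `∞·x = sup_n n·x` exists and dominates every element. -/
def IsFull {S : Type*} [AddCommMonoid S] [PartialOrder S] (x : S) : Prop :=
  ∃ s : S, IsLUB (Set.range fun n : ℕ => n • x) s ∧ ∀ t : S, t ≤ s

/-!
In (iii), the inequality `x + z ≤ y + z'` with `z' ≪ z` becomes a way-below relation once `x` is
replaced by some `x' ≪ x`, and `z`, `z'` by some common `z''` with `z' ≤ z'' ≪ z`: by (O3),
`x' + z'' ≪ x + z ≤ y + z''`. Thus (ii) gives `x' ≤ y` for every `x' ≪ x`, hence `x ≤ y`.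
Conversely, if `x + z ≪ y + z`, then by (O4) there are `y' ≪ y` and `z' ≪ z` with
`x + z ≤ y' + z'`, so (iii) gives `x ≤ y' ≪ y`.
-/

/-- The order-theoretic content of (O2): every element is the supremum of an increasing sequence
of elements way below it. Unlike in (O2), consecutive terms are not required to be way below each
other. -/
def WayBelowApproximable (S : Type*) [PartialOrder S] : Prop :=
  ∀ x : S, ∃ f : ℕ → S, Monotone f ∧ (∀ n, WayBelow (f n) x) ∧ IsLUB (Set.range f) x

/-- Axiom (O3) as a property of an ordered monoid. -/
def WayBelowAdditive (S : Type*) [AddCommMonoid S] [PartialOrder S] : Prop :=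
  ∀ ⦃x' x y' y : S⦄, WayBelow x' x → WayBelow y' y → WayBelow (x' + y') (x + y)

/-- Axiom (O4) as a property of an ordered monoid. Suprema are expressed by `IsLUB`, so that they
need not exist for every increasing sequence. -/
def AddSupContinuous (S : Type*) [AddCommMonoid S] [PartialOrder S] : Prop :=
  ∀ ⦃f g : ℕ → S⦄, Monotone f → Monotone g → ∀ ⦃a b : S⦄,
    IsLUB (Set.range f) a → IsLUB (Set.range g) b → IsLUB (Set.range fun n => f n + g n) (a + b)

namespace WayBelow

variable {S : Type*} [PartialOrder S] {x y z : S}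

theorem le (h : WayBelow x y) : x ≤ y := by
  have hy : IsLUB (Set.range fun _ : ℕ => y) y := by simp only [Set.range_const, isLUB_singleton]
  obtain ⟨_, hxy⟩ := h _ monotone_const y hy le_rfl
  exact hxy

theorem trans_le (hxy : WayBelow x y) (hyz : y ≤ z) : WayBelow x z :=
  fun f hf s hs hzs => hxy f hf s hs (hyz.trans hzs)

theorem of_le_of_wayBelow (hxy : x ≤ y) (hyz : WayBelow y z) : WayBelow x z := by
  intro f hf s hs hzs
  obtain ⟨n, hn⟩ := hyz f hf s hs hzs
  exact ⟨n, hxy.trans hn⟩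

end WayBelow

namespace WayBelowApproximable

section Order

variable {S : Type*} [PartialOrder S] {x y : S}

theorem le_of_forall_wayBelow_le (hS : WayBelowApproximable S)
    (h : ∀ x', WayBelow x' x → x' ≤ y) : x ≤ y := by
  obtain ⟨f, -, hfx, hx⟩ := hS x
  exact hx.2 (Set.forall_mem_range.2 fun n => h (f n) (hfx n))

theorem exists_le_wayBelow (hS : WayBelowApproximable S) (h : WayBelow x y) :
    ∃ x', x ≤ x' ∧ WayBelow x' y := by
  obtain ⟨f, hf, hfy, hy⟩ := hS y
  obtain ⟨n, hn⟩ := h f hf y hy le_rfl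
  exact ⟨f n, hn, hfy n⟩

end Order

theorem exists_le_add_of_wayBelow_add {S : Type*} [AddCommMonoid S] [PartialOrder S]
    [IsOrderedAddMonoid S] (hS : WayBelowApproximable S) (hsup : AddSupContinuous S)
    {w y z : S} (h : WayBelow w (y + z)) :
    ∃ y' z', WayBelow y' y ∧ WayBelow z' z ∧ w ≤ y' + z' := by
  obtain ⟨f, hf, hfy, hy⟩ := hS y
  obtain ⟨g, hg, hgz, hz⟩ := hS z
  obtain ⟨n, hn⟩ := h _ (hf.add hg) (y + z) (hsup hf hg hy hz) le_rfl
  exact ⟨f n, g n, hfy n, hgz n, hn⟩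

end WayBelowApproximable

theorem weakCancel_tfae_general {S : Type*} [AddCommMonoid S] [PartialOrder S]
    [IsOrderedAddMonoid S] (happrox : WayBelowApproximable S) (hadd : WayBelowAdditive S)
    (hsup : AddSupContinuous S) :
    List.TFAE
      [ ∀ x y z : S, WayBelow (x + z) (y + z) → WayBelow x y,
        ∀ x y z : S, WayBelow (x + z) (y + z) → x ≤ y,
        ∀ x y z z' : S, x + z ≤ y + z' → WayBelow z' z → x ≤ y ] := by
  tfae_have 1 → 2 := fun cancel x y z h => (cancel x y z h).le
  tfae_have 2 → 3 := by
    intro cancel x y z z' hle hz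
    obtain ⟨z'', hz'z'', hz''z⟩ := happrox.exists_le_wayBelow hz
    refine happrox.le_of_forall_wayBelow_le fun x' hx' => cancel x' y z'' ?_
    exact (hadd hx' hz''z).trans_le (hle.trans (add_le_add_right hz'z'' y))
  tfae_have 3 → 1 := by
    intro cancel x y z h
    obtain ⟨y', z', hy', hz', hle⟩ := happrox.exists_le_add_of_wayBelow_add hsup h
    exact .of_le_of_wayBelow (cancel x y' z z' hle hz') hy'
  tfae_finish

namespace CuSemigroup

variable (S : Type*) [AddCommMonoid S] [PartialOrder S] [CuSemigroup S]

instance isOrderedAddMonoid : IsOrderedAddMonoid S where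
  add_le_add_left _ _ h _ := CuSemigroup.add_le_add h le_rfl

theorem wayBelowApproximable : WayBelowApproximable S := by
  intro x
  obtain ⟨f, hf, hx⟩ := O2 x
  exact ⟨f, monotone_nat_of_le_succ fun n => (hf n).le,
    fun n => (hf n).trans_le (hx.1 (Set.mem_range_self (n + 1))), hx⟩

theorem wayBelowAdditive : WayBelowAdditive S :=
  fun _ _ _ _ => O3

theorem addSupContinuous : AddSupContinuous S :=
  fun f g hf hg a b => O4 f g hf hg a b

end CuSemigroup

/-- Equivalent formulations of weak cancellation in a Cu-semigroup. -/
theorem weakCancel_tfae {S : Type*} [AddCommMonoid S] [PartialOrder S] [CuSemigroup S] :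
    List.TFAE
      [ ∀ x y z : S, WayBelow (x + z) (y + z) → WayBelow x y,
        ∀ x y z : S, WayBelow (x + z) (y + z) → x ≤ y,
        ∀ x y z z' : S, x + z ≤ y + z' → WayBelow z' z → x ≤ y ] :=
  weakCancel_tfae_general (CuSemigroup.wayBelowApproximable S) (CuSemigroup.wayBelowAdditive S)
    (CuSemigroup.addSupContinuous S)
end

section
/- Let S be a countably based Cu-semigroup. Then every nonempty upward directed subset of S has a supremum (a least upper bound) in S. -/
/-!
Only countably many basic elements lie below some member of a directed set `D`, so by directedness
an increasing sequence in `D` eventually dominates each of them. Every member of `D` is the supremum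
of the basic elements below it; hence that sequence has the same upper bounds as `D`, and its
supremum, which exists by (O1), is the supremum of `D`.
-/

section DirectedSuprema

open Set

variable {α : Type*} [Preorder α] {B C D : Set α}

theorem isCofinal_setOf_le_of_directedOn (hdir : DirectedOn (· ≤ ·) D) {c d : α} (hd : d ∈ D)
    (hcd : c ≤ d) : IsCofinal {x : D | c ≤ x} := by
  rintro ⟨x, hx⟩
  obtain ⟨y, hy, hxy, hdy⟩ := hdir x hx d hd
  exact ⟨⟨y, hy⟩, hcd.trans hdy, hxy⟩

theorem exists_monotone_range_subset_isCofinalFor (hC : C.Countable) (hne : D.Nonempty)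
    (hdir : DirectedOn (· ≤ ·) D) (hCD : IsCofinalFor C D) :
    ∃ g : ℕ → α, Monotone g ∧ range g ⊆ D ∧ IsCofinalFor C (range g) := by
  have := hC.toEncodable
  have hcofinal (c : C) : IsCofinal {x : D | (c : α) ≤ x} := by
    obtain ⟨d, hd, hcd⟩ := hCD c.2
    exact isCofinal_setOf_le_of_directedOn hdir hd hcd
  obtain ⟨d₀, hd₀⟩ := hne
  let above (c : C) : Order.Cofinal D := ⟨_, hcofinal c⟩
  let g : ℕ → D := Order.sequenceOfCofinals ⟨d₀, hd₀⟩ above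
  have hg : Monotone g := Order.sequenceOfCofinals.monotone _ above
  refine ⟨fun n ↦ g n, fun m n hmn ↦ hg hmn, range_subset_iff.2 fun n ↦ (g n).2, fun c hc ↦ ?_⟩
  exact ⟨_, mem_range_self _, Order.sequenceOfCofinals.encode_mem _ above ⟨c, hc⟩⟩

theorem upperBounds_inter_lowerClosure_subset (hB : ∀ d ∈ D, IsLUB (B ∩ Iic d) d) :
    upperBounds (B ∩ lowerClosure D) ⊆ upperBounds D :=
  fun _ hu d hd ↦ (hB d hd).2 fun _ hb ↦ hu ⟨hb.1, d, hd, hb.2⟩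

theorem isLUB_inter_Iic_of_subset {x : α} (hCB : C ⊆ B) (hx : IsLUB C x) : IsLUB (B ∩ Iic x) x :=
  hx.of_subset_of_superset isLUB_Iic (subset_inter hCB hx.1) inter_subset_right

theorem exists_isLUB_of_directedOn_general
    (hseq : ∀ f : ℕ → α, Monotone f → ∃ s, IsLUB (range f) s) (hcount : B.Countable)
    (hB : ∀ d ∈ D, IsLUB (B ∩ Iic d) d) (hne : D.Nonempty) (hdir : DirectedOn (· ≤ ·) D) :
    ∃ s, IsLUB D s := by
  have hBD : IsCofinalFor (B ∩ lowerClosure D) D := fun _ hb ↦ hb.2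
  obtain ⟨g, hg, hgD, hBg⟩ := exists_monotone_range_subset_isCofinalFor
    (hcount.mono inter_subset_left) hne hdir hBD
  have hbounds : upperBounds (range g) = upperBounds D := by
    apply Subset.antisymm
    · exact (upperBounds_mono_of_isCofinalFor hBg).trans (upperBounds_inter_lowerClosure_subset hB)
    · exact upperBounds_mono_set hgD
  obtain ⟨s, hs⟩ := hseq g hg
  exact ⟨s, (isLUB_congr hbounds).1 hs⟩

end DirectedSuprema

theorem CountablyBased.exists_countable_isLUB_inter_Iic {S : Type*} [AddCommMonoid S]
    [PartialOrder S] (hcb : CountablyBased S) :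
    ∃ B : Set S, B.Countable ∧ ∀ x, IsLUB (B ∩ Set.Iic x) x := by
  obtain ⟨B, hcount, hbase⟩ := hcb
  refine ⟨B, hcount, fun x ↦ ?_⟩
  obtain ⟨f, hfB, -, hf⟩ := hbase x
  exact isLUB_inter_Iic_of_subset (Set.range_subset_iff.2 hfB) hf

/-- In a countably based Cu-semigroup, every nonempty upward directed set has a
supremum. -/
theorem exists_isLUB_of_directedOn {S : Type*} [AddCommMonoid S] [PartialOrder S]
    [CuSemigroup S] (hcb : CountablyBased S)
    (D : Set S) (hne : D.Nonempty) (hdir : DirectedOn (· ≤ ·) D) :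
    ∃ s : S, IsLUB D s := by
  obtain ⟨B, hcount, hB⟩ := hcb.exists_countable_isLUB_inter_Iic
  exact exists_isLUB_of_directedOn_general CuSemigroup.O1 hcount (fun d _ ↦ hB d) hne hdir
end

section
/- Let S be a Cu-semigroup with weak cancellation satisfying (O5) and (O6+), let e, x ∈ S, and assume e is compact. Then the set { z ∈ S : z ≤ e and z ≤ x } is upward directed. -/
/-!
Let `y, z ≤ e, x` and `y' ≪ y`, `z' ≪ z`. By (O5) there is `w` with `z' + w ≤ e ≤ z + w ≤ x + w`,
and (O6+) splits `e ≤ x + w` as `e ≤ s + w` with `y' ≪ s ≤ e, x`. Since `e` is compact,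
`z' + w ≤ e ≪ e ≤ s + w`, and weak cancellation of `w` gives `z' ≪ s`. Hence the elements way below
some common lower bound of `e` and `x` are upward directed. An increasing sequence of such elements
absorbing approximating sequences of `y` and of `z` has a supremum by (O1), and this supremum is a
common lower bound of `e` and `x` above both `y` and `z`.
-/

theorem exists_monotone_nat_forall_exists_le {P ι : Type*} [Preorder P] [IsDirectedOrder P]
    [Nonempty P] [Countable ι] (f : ι → P) :
    ∃ g : ℕ → P, Monotone g ∧ ∀ i, ∃ n, f i ≤ g n := by
  have := Encodable.ofCountable ι
  let aboveTerm (i : ι) : Order.Cofinal P := ⟨Set.Ici (f i), fun p =>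
    let ⟨q, hpq, hiq⟩ := exists_ge_ge p (f i)
    ⟨q, hiq, hpq⟩⟩
  let p : P := Classical.arbitrary P
  exact ⟨Order.sequenceOfCofinals p aboveTerm, Order.sequenceOfCofinals.monotone p aboveTerm,
    fun i => ⟨_, Order.sequenceOfCofinals.encode_mem p aboveTerm i⟩⟩

section PartialOrder

variable {S : Type*} [PartialOrder S] {x y z : S}

theorem monotone_of_wayBelow_succ {f : ℕ → S} (hf : ∀ n, WayBelow (f n) (f (n + 1))) :
    Monotone f :=
  monotone_nat_of_le_succ fun n => (hf n).le

theorem wayBelow_of_isLUB_of_wayBelow_succ {f : ℕ → S} (hf : ∀ n, WayBelow (f n) (f (n + 1)))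
    (hx : IsLUB (Set.range f) x) (n : ℕ) : WayBelow (f n) x :=
  (hf n).trans_le (hx.1 ⟨n + 1, rfl⟩)

theorem directedOn_setOf_wayBelow {f : ℕ → S} (hf : ∀ n, WayBelow (f n) (f (n + 1)))
    (hx : IsLUB (Set.range f) x) : DirectedOn (· ≤ ·) {u | WayBelow u x} := by
  intro u hu v hv
  have f_mono : Monotone f := monotone_of_wayBelow_succ hf
  obtain ⟨m, hum⟩ := hu f f_mono x hx le_rfl
  obtain ⟨n, hvn⟩ := hv f f_mono x hx le_rfl
  exact ⟨f (max m n), wayBelow_of_isLUB_of_wayBelow_succ hf hx _,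
    hum.trans (f_mono (le_max_left m n)), hvn.trans (f_mono (le_max_right m n))⟩

/-- The elements way below some member of `D`. In a Cu-semigroup these approximate the members of
`D` from below, and directedness of `D` can be tested on them. -/
def approximants (D : Set S) : Set S :=
  {u | ∃ v ∈ D, WayBelow u v}

theorem approximants_subset {D : Set S} (hD : IsLowerSet D) : approximants D ⊆ D :=
  fun _ ⟨_, hv, huv⟩ => hD huv.le hv

end PartialOrder

theorem WeakCancel.wayBelow_of_add_le {S : Type*} [AddCommMonoid S] [PartialOrder S]
    (hwc : WeakCancel S) {a b c d w : S} (hcd : WayBelow c d) (hac : a + w ≤ c)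
    (hdb : d ≤ b + w) : WayBelow a b :=
  hwc a b w (.of_le_of_wayBelow hac (hcd.trans_le hdb))

section CuSemigroup

variable {S : Type*} [AddCommMonoid S] [PartialOrder S] [CuSemigroup S]

theorem directedOn_approximants {D : Set S}
    (hD : ∀ y ∈ D, ∀ z ∈ D, ∀ y' z', WayBelow y' y → WayBelow z' z →
      ∃ s ∈ D, WayBelow y' s ∧ WayBelow z' s) :
    DirectedOn (· ≤ ·) (approximants D) := by
  rintro y' ⟨y, hy, hy'⟩ z' ⟨z, hz, hz'⟩
  obtain ⟨s, hs, hy's, hz's⟩ := hD y hy z hz y' z' hy' hz'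
  obtain ⟨f, hf, hfs⟩ := CuSemigroup.O2 s
  obtain ⟨u, hus, hy'u, hz'u⟩ := directedOn_setOf_wayBelow hf hfs y' hy's z' hz's
  exact ⟨u, ⟨s, hs, hus⟩, hy'u, hz'u⟩

theorem directedOn_of_directedOn_approximants {D : Set S} (hlower : IsLowerSet D)
    (hclosed : DirSupClosedOn {d | d.Countable} D)
    (hdir : DirectedOn (· ≤ ·) (approximants D)) : DirectedOn (· ≤ ·) D := by
  intro y hy z hz
  obtain ⟨f, hf, hfy⟩ := CuSemigroup.O2 y
  obtain ⟨g, hg, hgz⟩ := CuSemigroup.O2 z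
  let fApprox (n : ℕ) : approximants D := ⟨f n, y, hy, wayBelow_of_isLUB_of_wayBelow_succ hf hfy n⟩
  let gApprox (n : ℕ) : approximants D := ⟨g n, z, hz, wayBelow_of_isLUB_of_wayBelow_succ hg hgz n⟩
  have : Nonempty (approximants D) := ⟨fApprox 0⟩
  have : IsDirectedOrder (approximants D) := ⟨hdir.directed_val⟩
  obtain ⟨h, h_mono, h_above⟩ :=
    exists_monotone_nat_forall_exists_le (Sum.elim fApprox gApprox)
  have h_val_mono : Monotone fun n => (h n : S) := fun _ _ hmn => h_mono hmn
  obtain ⟨s, hs⟩ := CuSemigroup.O1 _ h_val_mono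
  have hsD : s ∈ D := hclosed (Set.countable_range _)
    (Set.range_subset_iff.2 fun n => approximants_subset hlower (h n).2) (Set.range_nonempty _)
    h_val_mono.directed_le.directedOn_range hs
  refine ⟨s, hsD, hfy.2 (Set.forall_mem_range.2 fun n => ?_),
    hgz.2 (Set.forall_mem_range.2 fun n => ?_)⟩
  · obtain ⟨m, hm⟩ := h_above (Sum.inl n)
    exact le_trans hm (hs.1 ⟨m, rfl⟩)
  · obtain ⟨m, hm⟩ := h_above (Sum.inr n)
    exact le_trans hm (hs.1 ⟨m, rfl⟩)

theorem zero_wayBelow (x : S) : WayBelow 0 x :=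
  fun _ _ _ _ _ => ⟨0, CuSemigroup.zero_le _⟩

theorem O6plus.exists_le_add (h6 : O6plus S) {a b c x' x : S} (habc : a ≤ b + c)
    (hx : WayBelow x' x) (hxa : x ≤ a) (hxb : x ≤ b) :
    ∃ s, WayBelow x' s ∧ s ≤ a ∧ s ≤ b ∧ a ≤ s + c := by
  obtain ⟨s, t, hast, hx's, hsa, hsb, -, -, htc⟩ := h6 a b c x' x 0 0 habc hx hxa hxb
    (zero_wayBelow 0) (CuSemigroup.zero_le a) (CuSemigroup.zero_le c)
  exact ⟨s, hx's, hsa, hsb, hast.trans (CuSemigroup.add_le_add le_rfl htc)⟩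

theorem exists_wayBelow_of_compact (h5 : O5 S) (h6 : O6plus S) (hwc : WeakCancel S)
    {e x y' y z' z : S} (he : WayBelow e e) (hy : WayBelow y' y) (hye : y ≤ e) (hyx : y ≤ x)
    (hz : WayBelow z' z) (hze : z ≤ e) (hzx : z ≤ x) :
    ∃ s, s ≤ e ∧ s ≤ x ∧ WayBelow y' s ∧ WayBelow z' s := by
  obtain ⟨w, hz'w, hezw⟩ := h5 z' z e hz hze
  have hexw : e ≤ x + w := hezw.trans (CuSemigroup.add_le_add hzx le_rfl)
  obtain ⟨s, hy's, hse, hsx, hesw⟩ := h6.exists_le_add hexw hy hye hyx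
  exact ⟨s, hse, hsx, hy's, hwc.wayBelow_of_add_le he hz'w hesw⟩

end CuSemigroup

/-- In a weakly cancellative Cu-semigroup satisfying (O5) and (O6+), for a compact
element `e` and any `x`, the set of common lower bounds of `e` and `x` is upward
directed. -/
theorem directedOn_lowerBounds_of_compact {S : Type*} [AddCommMonoid S] [PartialOrder S]
    [CuSemigroup S] (h5 : O5 S) (h6 : O6plus S) (hwc : WeakCancel S)
    (e x : S) (he : WayBelow e e) :
    DirectedOn (· ≤ ·) {z : S | z ≤ e ∧ z ≤ x} := by
  have hlower : IsLowerSet (Set.Iic e ∩ Set.Iic x) := (isLowerSet_Iic e).inter (isLowerSet_Iic x)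
  have hclosed : DirSupClosed (Set.Iic e ∩ Set.Iic x) :=
    (dirSupClosed_Iic e).inter (dirSupClosed_Iic x)
  refine directedOn_of_directedOn_approximants hlower hclosed.dirSupClosedOn
    (directedOn_approximants ?_)
  rintro y ⟨hye, hyx⟩ z ⟨hze, hzx⟩ y' z' hy hz
  obtain ⟨s, hse, hsx, hy's, hz's⟩ :=
    exists_wayBelow_of_compact h5 h6 hwc he hy hye hyx hz hze hzx
  exact ⟨s, ⟨hse, hsx⟩, hy's, hz's⟩
end

section
/- Let S be an inf-semilattice ordered Cu-semigroup. Then S satisfies (O6+): whenever a, b, c, x', x, y', y ∈ S satisfy a ≤ b + c, x' ≪ x, x ≤ a, x ≤ b, y' ≪ y, y ≤ a, y ≤ c, there exist e, f ∈ S with a ≤ e + f, x' ≪ e, e ≤ a, e ≤ b, y' ≪ f, f ≤ a, f ≤ c. -/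
theorem WayBelow.trans_le_s8 {S : Type*} [PartialOrder S] {x y z : S} (hxy : WayBelow x y)
    (hyz : y ≤ z) : WayBelow x z :=
  fun f hf s hs hzs => hxy f hf s hs (hyz.trans hzs)

namespace InfDistrib

variable {S : Type*} [AddCommMonoid S] [SemilatticeInf S]

theorem add_inf (hdist : InfDistrib S) (x y z : S) : x + y ⊓ z = (x + y) ⊓ (x + z) := by
  rw [add_comm x, add_comm x, add_comm x, hdist]

theorem isOrderedAddMonoid (hdist : InfDistrib S) : IsOrderedAddMonoid S where
  add_le_add_left x y hxy z := by
    rw [← inf_eq_left, hdist, inf_eq_left.mpr hxy]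

theorem inf_add_le_inf_add_inf [IsBotZeroClass S] (hdist : InfDistrib S) (a b c : S) :
    a ⊓ (b + c) ≤ a ⊓ b + a ⊓ c := by
  have := hdist.isOrderedAddMonoid
  calc a ⊓ (b + c)
      ≤ (a + a ⊓ c) ⊓ ((b + a) ⊓ (b + c)) :=
        le_inf (inf_le_left.trans (le_add_of_nonneg_right zero_le))
          (inf_le_inf_right _ (le_add_of_nonneg_left zero_le))
    _ = (a + a ⊓ c) ⊓ (b + a ⊓ c) := by rw [hdist.add_inf b]
    _ = a ⊓ b + a ⊓ c := hdist a b (a ⊓ c)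

end InfDistrib

instance CuSemigroup.toIsBotZeroClass {S : Type*} [AddCommMonoid S] [PartialOrder S]
    [CuSemigroup S] : IsBotZeroClass S where
  isBot_zero := CuSemigroup.zero_le

theorem o6plus_of_infDistrib_general {S : Type*} [AddCommMonoid S] [SemilatticeInf S]
    [IsBotZeroClass S] (hdist : InfDistrib S) : O6plus S := by
  intro a b c x' x y' y habc hx hxa hxb hy hya hyc
  have cover : a ≤ a ⊓ b + a ⊓ c :=
    (le_inf le_rfl habc).trans (hdist.inf_add_le_inf_add_inf a b c)
  exact ⟨a ⊓ b, a ⊓ c, cover, hx.trans_le_s8 (le_inf hxa hxb), inf_le_left, inf_le_right,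
    hy.trans_le_s8 (le_inf hya hyc), inf_le_left, inf_le_right⟩

/-- Every inf-semilattice ordered Cu-semigroup satisfies (O6+). -/
theorem o6plus_of_infDistrib {S : Type*} [AddCommMonoid S] [SemilatticeInf S]
    [CuSemigroup S] (hdist : InfDistrib S) :
    O6plus S :=
  o6plus_of_infDistrib_general hdist
end

section
/- Let S be an inf-semilattice ordered Cu-semigroup, let x ∈ S, and let (y_n) be an increasing sequence in S. Then sup_n (x ∧ y_n) = x ∧ (sup_n y_n). -/
/-!
Every element of a Cu-semigroup is the supremum of the elements way below it, so it suffices to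
bound each `a ≪ x ⊓ s`. Such an `a` lies below `x`, and below some `y n` since `a ≪ s = sup y`,
hence below `x ⊓ y n`.
-/

section PartialOrder

variable {S : Type*} [PartialOrder S] {a b c : S}

theorem WayBelow.le_s9 (h : WayBelow a b) : a ≤ b := by
  have hb : IsLUB (Set.range fun _ : ℕ => b) b := by
    simpa only [Set.range_const] using isLUB_singleton
  exact (h _ monotone_const b hb le_rfl).choose_spec

theorem WayBelow.trans_le_s9 (hab : WayBelow a b) (hbc : b ≤ c) : WayBelow a c :=
  fun f hf s hs hcs => hab f hf s hs (hbc.trans hcs)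

theorem isLUB_setOf_wayBelow_of_isLUB_range {f : ℕ → S}
    (hf : ∀ n, WayBelow (f n) (f (n + 1))) (hb : IsLUB (Set.range f) b) :
    IsLUB {a | WayBelow a b} b := by
  have hfb (n : ℕ) : WayBelow (f n) b := (hf n).trans_le_s9 (hb.1 (Set.mem_range_self (n + 1)))
  exact ⟨fun _ ha => ha.le_s9, fun _ hu => hb.2 (Set.forall_mem_range.2 fun n => hu (hfb n))⟩

end PartialOrder

theorem CuSemigroup.isLUB_setOf_wayBelow {S : Type*} [AddCommMonoid S] [PartialOrder S]
    [CuSemigroup S] (b : S) : IsLUB {a | WayBelow a b} b :=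
  let ⟨_, hf, hb⟩ := CuSemigroup.O2 b
  isLUB_setOf_wayBelow_of_isLUB_range hf hb

section SemilatticeInf

variable {S : Type*} [SemilatticeInf S]

theorem WayBelow.exists_le_inf {a x s : S} {y : ℕ → S} (ha : WayBelow a (x ⊓ s))
    (hy : Monotone y) (hs : IsLUB (Set.range y) s) : ∃ n, a ≤ x ⊓ y n := by
  have hax : a ≤ x := ha.le_s9.trans inf_le_left
  obtain ⟨n, hn⟩ := ha y hy s hs inf_le_right
  exact ⟨n, le_inf hax hn⟩

theorem isLUB_inf_of_isLUB_general (x : S) (y : ℕ → S) (hy : Monotone y) (s : S)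
    (hs : IsLUB (Set.range y) s) (happrox : IsLUB {a | WayBelow a (x ⊓ s)} (x ⊓ s)) :
    IsLUB (Set.range fun n => x ⊓ y n) (x ⊓ s) := by
  constructor
  · rintro _ ⟨n, rfl⟩
    exact inf_le_inf_left x (hs.1 (Set.mem_range_self n))
  · intro u hu
    refine happrox.2 fun a ha => ?_
    obtain ⟨n, hn⟩ := WayBelow.exists_le_inf ha hy hs
    exact hn.trans (hu (Set.mem_range_self n))

end SemilatticeInf

/-- In an inf-semilattice ordered Cu-semigroup, binary infima commute with suprema of
increasing sequences: `sup_n (x ⊓ y n) = x ⊓ sup_n y n`. -/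
theorem isLUB_inf_of_isLUB {S : Type*} [AddCommMonoid S] [SemilatticeInf S]
    [CuSemigroup S] (hdist : InfDistrib S)
    (x : S) (y : ℕ → S) (hy : Monotone y) (s : S) (hs : IsLUB (Set.range y) s) :
    IsLUB (Set.range fun n => x ⊓ y n) (x ⊓ s) :=
  isLUB_inf_of_isLUB_general x y hy s hs (CuSemigroup.isLUB_setOf_wayBelow _)
end
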